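/- arXiv:1901.01385 — 2 statements merged into one kernel-verified Lean document; each statement's English description precedes it below -/
import Mathlib

section
/- Let K be an algebraically closed field. Every effective regular action of the one-dimensional torus Kˣ on the free associative algebra F_2 = FreeAlgebra K (Fin 2) is linearizable: there is a K-algebra automorphism β of F_2 such that for every t ∈ Kˣ, the automorphism β⁻¹ ∘ σ(t) ∘ β maps each generator z_i into the K-linear span of z_1, z_2. -/
open FreeAlgebra

/-- A regular action of the one-dimensional torus `Kˣ` on the free algebra:
the image of each generator depends on `t` as a Laurent polynomial. -/
def OneTorusActionIsRegular {K : Type} [Field K] {n : ℕ}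
    (σ : Kˣ →* (FreeAlgebra K (Fin n) ≃ₐ[K] FreeAlgebra K (Fin n))) : Prop :=
  ∀ i : Fin n, ∃ a : (ℤ →₀ FreeAlgebra K (Fin n)),
    ∀ t : Kˣ, σ t (ι K i) = a.sum fun m c => ((t ^ m : Kˣ) : K) • c

/-!
Let `W` be a degree function on the free algebra invariant under the torus, and choose coordinates
`z_1`, `z_2` for which `W z_1 + W z_2` is minimal. If the action preserves the filtration by the
weights `W z_i`, it is triangular and is easily diagonalized. Otherwise, substitute `t = 1 + u` in
the action; the part that raises weights fastest is a nonzero homogeneous locally finite iterative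
higher derivation (LFIHD), an action of the additive group. It moves both generators even after
abelianization: two noncommuting elements generate a free algebra, which forces some component of
a generator to contain a pure power of the other one. The action on the polynomial ring then has
an invariant of the form `z_i - c z_j ^ l`, and applying the same argument in the coordinates
`z_i - c z_j ^ l`, `z_j`, for which the sum of degrees is again minimal, contradicts this
invariance.
-/

namespace FreeTorus

open MonoidAlgebra

section Words

variable {K α : Type*} [CommSemiring K]

/-- The free algebra on `α`, modelled on its basis of words. -/
abbrev NCPoly (K α : Type*) [CommSemiring K] := MonoidAlgebra K (FreeMonoid α)

/-- The monomial of a word. -/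
noncomputable def mon (K : Type*) [CommSemiring K] (w : FreeMonoid α) : NCPoly K α :=
  MonoidAlgebra.of K _ w

/-- The free generators of the free algebra. -/
noncomputable def gen (K : Type*) [CommSemiring K] (i : α) : NCPoly K α := mon K (FreeMonoid.of i)

@[simp] lemma mon_one : mon K (1 : FreeMonoid α) = 1 := map_one _

lemma mon_mul (v w : FreeMonoid α) : mon K (v * w) = mon K v * mon K w := map_mul _ _ _

lemma mon_of_mul (i : α) (w : FreeMonoid α) :
    mon K (FreeMonoid.of i * w) = gen K i * mon K w :=
  mon_mul _ _

lemma coeff_mon [DecidableEq (FreeMonoid α)] (v w : FreeMonoid α) :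
    (mon K v).coeff w = if v = w then 1 else 0 := by
  simp [mon, coeff_single, Finsupp.single_apply]

lemma coeff_gen [DecidableEq α] (i j : α) :
    (gen K i).coeff (FreeMonoid.of j) = if i = j then 1 else 0 := by
  classical simp [gen, coeff_mon, FreeMonoid.of_injective.eq_iff]

lemma gen_ne_zero [Nontrivial K] (i : α) : gen K i ≠ 0 := fun h => by
  classical simpa [h] using (coeff_gen (K := K) i i)

lemma exists_coeff_ne_zero {P : NCPoly K α} (hP : P ≠ 0) : ∃ w, P.coeff w ≠ 0 := by
  by_contra! h
  exact hP (coeff_injective (Finsupp.ext h))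

lemma mem_of_coeff_ne_zero {S : Set (FreeMonoid α)} {P : NCPoly K α} (hP : P ∈ supported K K S)
    {w : FreeMonoid α} (hw : P.coeff w ≠ 0) : w ∈ S :=
  hP (Finsupp.mem_support_iff.2 hw)

lemma coeff_eq_zero_of_notMem {S : Set (FreeMonoid α)} {P : NCPoly K α}
    (hP : P ∈ supported K K S) {w : FreeMonoid α} (hw : w ∉ S) : P.coeff w = 0 :=
  mem_supported'.1 hP w hw

lemma mon_mem_supported {S : Set (FreeMonoid α)} {w : FreeMonoid α} (hw : w ∈ S) :
    mon K w ∈ supported K K S := by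
  classical
  exact mem_supported'.2 fun v hv => by rw [coeff_mon, if_neg (ne_of_mem_of_not_mem hw hv)]

lemma supported_eq_span_mon (S : Set (FreeMonoid α)) :
    supported K K S = Submodule.span K (mon K '' S) :=
  supported_eq_span_single K S

lemma supported_le {S : Set (FreeMonoid α)} {V : Submodule K (NCPoly K α)}
    (h : ∀ w ∈ S, mon K w ∈ V) : supported K K S ≤ V := by
  rw [supported_eq_span_mon, Submodule.span_le]
  rintro _ ⟨w, hw, rfl⟩
  exact h w hw

lemma eqOn_supported {M : Type*} [AddCommMonoid M] [Module K M] {f g : NCPoly K α →ₗ[K] M}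
    {S : Set (FreeMonoid α)} (h : ∀ w ∈ S, f (mon K w) = g (mon K w)) :
    Set.EqOn f g (supported K K S) := by
  rw [supported_eq_span_mon]
  exact LinearMap.eqOn_span (Set.forall_mem_image.2 h)

lemma linearMap_ext_mon {M : Type*} [AddCommMonoid M] [Module K M] {f g : NCPoly K α →ₗ[K] M}
    (h : ∀ w, f (mon K w) = g (mon K w)) : f = g :=
  LinearMap.ext fun _ => eqOn_supported (fun w _ => h w) (S := Set.univ) (Set.subset_univ _)

lemma mul_mem_supported {S T U : Set (FreeMonoid α)} (h : ∀ s ∈ S, ∀ t ∈ T, s * t ∈ U)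
    {P Q : NCPoly K α} (hP : P ∈ supported K K S) (hQ : Q ∈ supported K K T) :
    P * Q ∈ supported K K U := by
  classical
  intro w hw
  obtain ⟨s, hs, t, ht, rfl⟩ := Finset.mem_mul.1 (support_coeff_mul_subset _ _ hw)
  exact h s (hP hs) t (hQ ht)

/-- The homomorphism from the free algebra with prescribed values on the generators. -/
noncomputable def subst {B : Type*} [Semiring B] [Algebra K B] (u : α → B) : NCPoly K α →ₐ[K] B :=
  MonoidAlgebra.lift K B _ (FreeMonoid.lift u)

variable {B : Type*} [Semiring B] [Algebra K B]

lemma subst_mon (u : α → B) (w : FreeMonoid α) : subst u (mon K w) = FreeMonoid.lift u w := by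
  simp [subst, mon]

@[simp] lemma subst_gen (u : α → B) (i : α) : subst u (gen K i) = u i := by
  simp [gen, subst_mon]

lemma algHom_ext_gen {f g : NCPoly K α →ₐ[K] B} (h : ∀ i, f (gen K i) = g (gen K i)) : f = g :=
  (MonoidAlgebra.lift K B _).symm.injective (FreeMonoid.hom_eq h)

end Words

section Weight

variable {α Γ : Type*} [AddMonoid Γ]

/-- The weight of a word when the letter `i` has weight `ω i`. -/
def weight (ω : α → Γ) (w : FreeMonoid α) : Γ := (w.toList.map ω).sum

@[simp] lemma weight_one (ω : α → Γ) : weight ω 1 = 0 := rfl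

@[simp] lemma weight_of (ω : α → Γ) (i : α) : weight ω (FreeMonoid.of i) = ω i := by simp [weight]

@[simp] lemma weight_mul (ω : α → Γ) (v w : FreeMonoid α) :
    weight ω (v * w) = weight ω v + weight ω w := by
  simp [weight]

lemma weight_pow (ω : α → Γ) (w : FreeMonoid α) (n : ℕ) : weight ω (w ^ n) = n • weight ω w := by
  induction n with
  | zero => simp
  | succ n ih => rw [pow_succ, weight_mul, ih, succ_nsmul]

lemma weight_nonneg [Preorder Γ] [AddLeftMono Γ] {ω : α → Γ} (hω : ∀ i, 0 ≤ ω i)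
    (w : FreeMonoid α) : 0 ≤ weight ω w :=
  List.sum_nonneg (by simpa using fun i _ => hω i)

lemma weight_const_one {R : Type*} [NonAssocSemiring R] (w : FreeMonoid α) :
    weight (fun _ => (1 : R)) w = w.length := by
  simp [weight, FreeMonoid.length]

end Weight

section Homogeneous

variable {K α Γ : Type*} [CommSemiring K] [AddMonoid Γ] {ω : α → Γ} {d e : Γ}
  {P Q : NCPoly K α}

/-- The homogeneous elements of weight `d`. -/
noncomputable abbrev homog (K : Type*) [CommSemiring K] (ω : α → Γ) (d : Γ) :
    Submodule K (NCPoly K α) :=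
  supported K K {w | weight ω w = d}

lemma mon_mem_homog (w : FreeMonoid α) : mon K w ∈ homog K ω (weight ω w) := mon_mem_supported rfl

lemma gen_mem_homog (i : α) : gen K i ∈ homog K ω (ω i) := mon_mem_supported (weight_of ω i)

lemma one_mem_homog : (1 : NCPoly K α) ∈ homog K ω 0 := mon_one (K := K) ▸ mon_mem_homog 1

lemma mul_mem_homog (hP : P ∈ homog K ω d) (hQ : Q ∈ homog K ω e) : P * Q ∈ homog K ω (d + e) :=
  mul_mem_supported (fun s (hs : _ = _) t (ht : _ = _) => by simp [hs, ht]) hP hQ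

lemma pow_mem_homog (hP : P ∈ homog K ω d) (n : ℕ) : P ^ n ∈ homog K ω (n • d) := by
  induction n with
  | zero => simpa using one_mem_homog
  | succ n ih => rw [pow_succ, succ_nsmul]; exact mul_mem_homog ih hP

lemma eq_of_mem_homog (hP : P ≠ 0) (hd : P ∈ homog K ω d) (he : P ∈ homog K ω e) : d = e := by
  obtain ⟨w, hw⟩ := exists_coeff_ne_zero hP
  exact (mem_of_coeff_ne_zero hd hw).symm.trans (mem_of_coeff_ne_zero he hw)

open Classical in
/-- The projection to the homogeneous component of weight `d`. -/
noncomputable def component (K : Type*) [CommSemiring K] (ω : α → Γ) (d : Γ) :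
    NCPoly K α →ₗ[K] NCPoly K α where
  toFun P := .ofCoeff (P.coeff.filter fun w => weight ω w = d)
  map_add' P Q := by simp
  map_smul' c P := by simp

lemma coeff_component_of_eq {w : FreeMonoid α} (h : weight ω w = d) :
    (component K ω d P).coeff w = P.coeff w := by
  simp [component, h]

lemma coeff_component_of_ne {w : FreeMonoid α} (h : weight ω w ≠ d) :
    (component K ω d P).coeff w = 0 := by
  simp [component, h]

lemma component_mem (ω : α → Γ) (d : Γ) (P : NCPoly K α) : component K ω d P ∈ homog K ω d :=
  mem_supported'.2 fun _ => coeff_component_of_ne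

lemma component_mem_supported {S : Set (FreeMonoid α)} (hP : P ∈ supported K K S) :
    component K ω d P ∈ supported K K S := by
  refine mem_supported'.2 fun w hw => ?_
  by_cases h : weight ω w = d
  · rw [coeff_component_of_eq h, coeff_eq_zero_of_notMem hP hw]
  · exact coeff_component_of_ne h

lemma component_of_mem_homog (hP : P ∈ homog K ω d) : component K ω d P = P := by
  ext w
  by_cases h : weight ω w = d
  · exact coeff_component_of_eq h
  · rw [coeff_component_of_ne h, coeff_eq_zero_of_notMem hP h]

lemma component_eq_zero {S : Set (FreeMonoid α)} (hS : ∀ w ∈ S, weight ω w ≠ d)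
    (hP : P ∈ supported K K S) : component K ω d P = 0 := by
  ext w
  by_cases h : weight ω w = d
  · rw [coeff_component_of_eq h, coeff_eq_zero_of_notMem hP fun hw => hS w hw h]; simp
  · simp [coeff_component_of_ne h]

end Homogeneous

section Filtration

variable {K α Γ : Type*} [CommRing K] [AddCommMonoid Γ] [PartialOrder Γ]
  {ω : α → Γ} {d e : Γ} {P Q : NCPoly K α}

/-- The elements of weight at most `d`. -/
noncomputable abbrev degLE (K : Type*) [CommSemiring K] (ω : α → Γ) (d : Γ) :
    Submodule K (NCPoly K α) :=
  supported K K {w | weight ω w ≤ d}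

/-- The elements of weight less than `d`. -/
noncomputable abbrev degLT (K : Type*) [CommSemiring K] (ω : α → Γ) (d : Γ) :
    Submodule K (NCPoly K α) :=
  supported K K {w | weight ω w < d}

lemma homog_le_degLE : homog K ω d ≤ degLE K ω d := supported_mono fun _ => le_of_eq

lemma degLT_le_degLE : degLT K ω d ≤ degLE K ω d := supported_mono fun _ => le_of_lt

lemma degLE_mono (h : d ≤ e) : degLE K ω d ≤ degLE K ω e := supported_mono fun _ h' => h'.trans h

lemma degLE_le_degLT (h : d < e) : degLE K ω d ≤ degLT K ω e :=
  supported_mono fun _ h' => h'.trans_lt h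

lemma component_of_mem_degLT (hP : P ∈ degLT K ω d) : component K ω d P = 0 :=
  component_eq_zero (fun _ => ne_of_lt) hP

lemma sub_component_mem_degLT (hP : P ∈ degLE K ω d) : P - component K ω d P ∈ degLT K ω d := by
  refine mem_supported'.2 fun w hw => ?_
  by_cases h : weight ω w = d
  · simp [coeff_component_of_eq h]
  · have hw' : ¬ weight ω w ≤ d := fun hle => hw (lt_of_le_of_ne hle h)
    simp [coeff_component_of_ne h, coeff_eq_zero_of_notMem hP hw']

variable [IsOrderedCancelAddMonoid Γ]

lemma mul_mem_degLE (hP : P ∈ degLE K ω d) (hQ : Q ∈ degLE K ω e) : P * Q ∈ degLE K ω (d + e) :=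
  mul_mem_supported (fun s hs t ht => (weight_mul ω s t).trans_le (add_le_add hs ht)) hP hQ

lemma mul_mem_degLT_of_left (hP : P ∈ degLT K ω d) (hQ : Q ∈ degLE K ω e) :
    P * Q ∈ degLT K ω (d + e) :=
  mul_mem_supported (fun s hs t ht => (weight_mul ω s t).trans_lt (add_lt_add_of_lt_of_le hs ht))
    hP hQ

lemma mul_mem_degLT_of_right (hP : P ∈ degLE K ω d) (hQ : Q ∈ degLT K ω e) :
    P * Q ∈ degLT K ω (d + e) :=
  mul_mem_supported (fun s hs t ht => (weight_mul ω s t).trans_lt (add_lt_add_of_le_of_lt hs ht))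
    hP hQ

lemma component_mul (hP : P ∈ degLE K ω d) (hQ : Q ∈ degLE K ω e) :
    component K ω (d + e) (P * Q) = component K ω d P * component K ω e Q := by
  have hsplit : P * Q = component K ω d P * component K ω e Q +
      (component K ω d P * (Q - component K ω e Q) + (P - component K ω d P) * Q) := by
    noncomm_ring
  have hlow : component K ω d P * (Q - component K ω e Q) + (P - component K ω d P) * Q ∈
      degLT K ω (d + e) :=
    add_mem
      (mul_mem_degLT_of_right (homog_le_degLE (component_mem _ _ _)) (sub_component_mem_degLT hQ))
      (mul_mem_degLT_of_left (sub_component_mem_degLT hP) hQ)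
  rw [hsplit, map_add, component_of_mem_degLT hlow, add_zero,
    component_of_mem_homog (mul_mem_homog (component_mem _ _ _) (component_mem _ _ _))]

end Filtration

section HasseSchmidt

open Polynomial

/-- A higher derivation in the sense of Hasse and Schmidt, given by its sequence of components. -/
structure IsHasseSchmidt {K B : Type*} [CommSemiring K] [Semiring B] [Module K B]
    (E : ℕ → B →ₗ[K] B) : Prop where
  zero : ∀ P, E 0 P = P
  one : ∀ k, k ≠ 0 → E k 1 = 0
  mul : ∀ k P Q, E k (P * Q) = ∑ x ∈ Finset.HasAntidiagonal.antidiagonal k, E x.1 P * E x.2 Q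

/-- A locally finite iterative higher derivation, encoded by its generating polynomial: the value
of the `k`-th component at `P` is the `k`-th coefficient of `Φ P`. -/
structure IsLFIHD {K B : Type*} [CommSemiring K] [Semiring B] [Algebra K B]
    (Φ : B →ₐ[K] B[X]) : Prop where
  zero : ∀ P, (Φ P).coeff 0 = P
  iter : ∀ P j k, (Φ ((Φ P).coeff k)).coeff j = (j + k).choose j • (Φ P).coeff (j + k)

/-- The `k`-th component of the higher derivation with generating polynomial `Φ`. -/
noncomputable def coeffMap {K B C : Type*} [CommSemiring K] [Semiring B] [Semiring C] [Algebra K B]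
    [Algebra K C] (Φ : B →ₐ[K] C[X]) (k : ℕ) : B →ₗ[K] C :=
  (lcoeff C k).restrictScalars K ∘ₗ Φ.toLinearMap

@[simp] lemma coeffMap_apply {K B C : Type*} [CommSemiring K] [Semiring B] [Semiring C]
    [Algebra K B] [Algebra K C] (Φ : B →ₐ[K] C[X]) (k : ℕ) (P : B) :
    coeffMap Φ k P = (Φ P).coeff k :=
  rfl

lemma IsLFIHD.isHasseSchmidt {K B : Type*} [CommSemiring K] [Semiring B] [Algebra K B]
    {Φ : B →ₐ[K] B[X]} (hΦ : IsLFIHD Φ) : IsHasseSchmidt (coeffMap Φ) where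
  zero := hΦ.zero
  one k hk := by simp [coeff_one, hk]
  mul k P Q := by simp [Polynomial.coeff_mul]

variable {K α Γ : Type*} [CommRing K] [AddCommMonoid Γ] {ω : α → Γ} {δ : Γ}
  {E : ℕ → NCPoly K α →ₗ[K] NCPoly K α}

variable (E ω δ) in
/-- The leading parts of the values of `E` on the generators when the `k`-th component raises the
weight by at most `k • δ`. Components of index at least `N` are ignored. -/
noncomputable def leadingHom (N : ℕ) : NCPoly K α →ₐ[K] (NCPoly K α)[X] :=
  subst fun i => ∑ k ∈ Finset.range N,
    Polynomial.monomial k (component K ω (ω i + k • δ) (E k (gen K i)))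

lemma coeff_leadingHom_gen {N : ℕ}
    (hfin : ∀ k, N ≤ k → ∀ i, component K ω (ω i + k • δ) (E k (gen K i)) = 0) (i : α) (k : ℕ) :
    (leadingHom ω δ E N (gen K i)).coeff k = component K ω (ω i + k • δ) (E k (gen K i)) := by
  simp only [leadingHom, subst_gen, finsetSum_coeff, coeff_monomial, Finset.sum_ite_eq',
    Finset.mem_range]
  split_ifs with hk
  · rfl
  · rw [hfin k (not_lt.1 hk)]

variable [PartialOrder Γ] [IsOrderedCancelAddMonoid Γ]

lemma IsHasseSchmidt.mon_mem_degLE (hE : IsHasseSchmidt E)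
    (hle : ∀ k i, E k (gen K i) ∈ degLE K ω (ω i + k • δ)) (w : FreeMonoid α) (k : ℕ) :
    E k (mon K w) ∈ degLE K ω (weight ω w + k • δ) := by
  induction w using FreeMonoid.inductionOn' generalizing k with
  | one =>
    rcases eq_or_ne k 0 with rfl | hk
    · rw [hE.zero, mon_one]; simpa using homog_le_degLE one_mem_homog
    · rw [mon_one, hE.one k hk]; exact zero_mem _
  | of_mul i w ih =>
    rw [mon_of_mul, hE.mul]
    refine sum_mem fun x hx => ?_
    rw [Finset.HasAntidiagonal.mem_antidiagonal] at hx
    convert mul_mem_degLE (hle x.1 i) (ih x.2) using 2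
    rw [weight_mul, weight_of, ← hx, add_smul, add_add_add_comm]

lemma IsHasseSchmidt.mem_degLE (hE : IsHasseSchmidt E)
    (hle : ∀ k i, E k (gen K i) ∈ degLE K ω (ω i + k • δ)) {d : Γ} {P : NCPoly K α}
    (hP : P ∈ degLE K ω d) (k : ℕ) : E k P ∈ degLE K ω (d + k • δ) := by
  have hcomap : degLE K ω d ≤ (degLE K ω (d + k • δ)).comap (E k) := supported_le fun w hw =>
    degLE_mono (add_le_add_left (show weight ω w ≤ d from hw) _) (hE.mon_mem_degLE hle w k)
  exact hcomap hP

lemma IsHasseSchmidt.mem_degLT (hE : IsHasseSchmidt E)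
    (hle : ∀ k i, E k (gen K i) ∈ degLE K ω (ω i + k • δ)) {d : Γ} {P : NCPoly K α}
    (hP : P ∈ degLT K ω d) (k : ℕ) : E k P ∈ degLT K ω (d + k • δ) := by
  have hcomap : degLT K ω d ≤ (degLT K ω (d + k • δ)).comap (E k) := supported_le fun w hw =>
    degLE_le_degLT (add_lt_add_left (show weight ω w < d from hw) _) (hE.mon_mem_degLE hle w k)
  exact hcomap hP

lemma IsHasseSchmidt.coeff_leadingHom_mon (hE : IsHasseSchmidt E)
    (hle : ∀ k i, E k (gen K i) ∈ degLE K ω (ω i + k • δ)) {N : ℕ}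
    (hfin : ∀ k, N ≤ k → ∀ i, component K ω (ω i + k • δ) (E k (gen K i)) = 0)
    (w : FreeMonoid α) (k : ℕ) :
    (leadingHom ω δ E N (mon K w)).coeff k =
      component K ω (weight ω w + k • δ) (E k (mon K w)) := by
  induction w using FreeMonoid.inductionOn' generalizing k with
  | one =>
    rcases eq_or_ne k 0 with rfl | hk
    · rw [hE.zero, mon_one, map_one, component_of_mem_homog (by simpa using one_mem_homog)]
      simp
    · rw [mon_one, hE.one k hk, map_one, map_zero, coeff_one, if_neg hk]
  | of_mul i w ih =>
    rw [mon_of_mul, map_mul, Polynomial.coeff_mul, hE.mul, map_sum]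
    refine Finset.sum_congr rfl fun x hx => ?_
    rw [Finset.HasAntidiagonal.mem_antidiagonal] at hx
    rw [coeff_leadingHom_gen hfin, ih, ← component_mul (hle x.1 i) (hE.mon_mem_degLE hle w x.2),
      weight_mul, weight_of, ← hx, add_smul, add_add_add_comm]

lemma IsHasseSchmidt.coeff_leadingHom (hE : IsHasseSchmidt E)
    (hle : ∀ k i, E k (gen K i) ∈ degLE K ω (ω i + k • δ)) {N : ℕ}
    (hfin : ∀ k, N ≤ k → ∀ i, component K ω (ω i + k • δ) (E k (gen K i)) = 0) {d : Γ}
    {P : NCPoly K α} (hP : P ∈ homog K ω d) (k : ℕ) :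
    (leadingHom ω δ E N P).coeff k = component K ω (d + k • δ) (E k P) :=
  eqOn_supported (f := coeffMap (leadingHom ω δ E N) k) (g := component K ω (d + k • δ) ∘ₗ E k)
    (fun w (hw : weight ω w = d) => by
      simpa [hw] using hE.coeff_leadingHom_mon hle hfin w k) hP

lemma IsHasseSchmidt.isLFIHD_leadingHom (hE : IsHasseSchmidt E)
    (hle : ∀ k i, E k (gen K i) ∈ degLE K ω (ω i + k • δ)) {N : ℕ}
    (hfin : ∀ k, N ≤ k → ∀ i, component K ω (ω i + k • δ) (E k (gen K i)) = 0)
    (hiter : ∀ w j k, component K ω (weight ω w + (j + k) • δ) (E j (E k (mon K w))) =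
      (j + k).choose j • component K ω (weight ω w + (j + k) • δ) (E (j + k) (mon K w))) :
    IsLFIHD (leadingHom ω δ E N) where
  zero := by
    refine LinearMap.congr_fun (f := coeffMap (leadingHom ω δ E N) 0) (g := LinearMap.id)
      (linearMap_ext_mon fun w => ?_)
    rw [coeffMap_apply, hE.coeff_leadingHom_mon hle hfin, hE.zero, zero_smul, add_zero,
      component_of_mem_homog (mon_mem_homog w), LinearMap.id_apply]
  iter P j k := by
    refine LinearMap.congr_fun
      (f := coeffMap (leadingHom ω δ E N) j ∘ₗ coeffMap (leadingHom ω δ E N) k)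
      (g := (j + k).choose j • coeffMap (leadingHom ω δ E N) (j + k))
      (linearMap_ext_mon fun w => ?_) P
    have hlow := component_of_mem_degLT
      (hE.mem_degLT hle (sub_component_mem_degLT (hE.mon_mem_degLE hle w k)) j)
    have hadd : weight ω w + k • δ + j • δ = weight ω w + (j + k) • δ := by
      rw [add_smul, add_assoc, add_comm (k • δ)]
    simp only [LinearMap.comp_apply, LinearMap.smul_apply, coeffMap_apply,
      hE.coeff_leadingHom_mon hle hfin, hE.coeff_leadingHom hle hfin (component_mem _ _ _)]
    rw [map_sub, map_sub, sub_eq_zero, hadd, hiter] at hlow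
    rw [hadd, hlow]

end HasseSchmidt

section FreeGenerators

variable {K α : Type*}

/-- The elements all of whose words have length `n`. -/
noncomputable abbrev lengthHomog (K : Type*) {α : Type*} [CommSemiring K] (n : ℕ) :
    Submodule K (NCPoly K α) :=
  homog K (fun _ => 1) n

lemma mem_lengthHomog_iff [CommSemiring K] {n : ℕ} {P : NCPoly K α} :
    P ∈ lengthHomog K n ↔ ∀ w, P.coeff w ≠ 0 → w.length = n := by
  refine ⟨fun hP w hw => ?_, fun h w hw => ?_⟩
  · simpa [weight_const_one] using mem_of_coeff_ne_zero hP hw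
  · simpa [weight_const_one] using h w (Finsupp.mem_support_iff.1 hw)

lemma coeff_eq_zero_of_length_ne [CommSemiring K] {n : ℕ} {P : NCPoly K α}
    (hP : P ∈ lengthHomog K n) {w : FreeMonoid α} (hw : w.length ≠ n) : P.coeff w = 0 := by
  by_contra h
  exact hw (mem_lengthHomog_iff.1 hP w h)

lemma word_mul_inj {v w v' w' : FreeMonoid α} (hv : v.length = v'.length)
    (h : v * w = v' * w') : v = v' ∧ w = w' := by
  have := List.append_inj (s₁ := v.toList) (s₂ := v'.toList) (t₁ := w.toList) (t₂ := w'.toList)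
    (by simpa using congrArg FreeMonoid.toList h) hv
  exact ⟨FreeMonoid.toList.injective this.1, FreeMonoid.toList.injective this.2⟩

lemma exists_mul_eq_of_length_eq {m n : ℕ} {w : FreeMonoid α} (hw : w.length = m + n) :
    ∃ u v : FreeMonoid α, u * v = w ∧ u.length = m ∧ v.length = n := by
  have hlen : w.toList.length = m + n := hw
  refine ⟨FreeMonoid.ofList (w.toList.take m), FreeMonoid.ofList (w.toList.drop m), ?_, ?_, ?_⟩
  · rw [← FreeMonoid.ofList_append, List.take_append_drop, FreeMonoid.ofList_toList]
  · simp [FreeMonoid.length, hlen]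
  · simp [FreeMonoid.length, hlen]

lemma coeff_mul_of_length_eq [CommSemiring K] {n : ℕ} {P : NCPoly K α} (hP : P ∈ lengthHomog K n)
    (Q : NCPoly K α) {v : FreeMonoid α} (hv : v.length = n) (w : FreeMonoid α) :
    (P * Q).coeff (v * w) = P.coeff v * Q.coeff w := by
  classical
  have hsum : ∀ a ∈ P.coeff.support, (Q.coeff.sum fun b y =>
      if a * b = v * w then P.coeff a * y else 0) = if a = v then P.coeff a * Q.coeff w else 0 := by
    intro a ha
    have hlen : a.length = v.length :=
      (mem_lengthHomog_iff.1 hP a (Finsupp.mem_support_iff.1 ha)).trans hv.symm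
    rcases eq_or_ne a v with rfl | hav
    · simp only [mul_right_inj, if_true]
      rw [Finsupp.sum_ite_eq']
      simp +contextual
    · rw [if_neg hav]
      exact Finset.sum_eq_zero fun b _ => if_neg fun h => hav (word_mul_inj hlen h).1
  rw [coeff_mul, Finsupp.sum, Finset.sum_congr rfl hsum, Finset.sum_ite_eq']
  simp +contextual

lemma exists_smul_of_commute [Field K] {n : ℕ} {P Q : NCPoly K α} (hP : P ∈ lengthHomog K n)
    (hQ : Q ∈ lengthHomog K n) (hQ0 : Q ≠ 0) (h : Commute P Q) : ∃ c : K, P = c • Q := by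
  obtain ⟨w, hw⟩ := exists_coeff_ne_zero hQ0
  refine ⟨P.coeff w / Q.coeff w, ?_⟩
  ext v
  rw [coeff_smul, Finsupp.smul_apply, smul_eq_mul]
  by_cases hv : v.length = n
  · have hPQ : P.coeff v * Q.coeff w = Q.coeff v * P.coeff w := by
      rw [← coeff_mul_of_length_eq hP Q hv, h.eq, coeff_mul_of_length_eq hQ P hv]
    field_simp
    rw [hPQ, mul_comm]
  · rw [coeff_eq_zero_of_length_ne hP hv, coeff_eq_zero_of_length_ne hQ hv, mul_zero]

lemma exists_eq_mul_of_mul_add_mul_eq_zero [Field K] {p q : ℕ} {u v A B : NCPoly K α}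
    (hu : u ∈ lengthHomog K p) (hv : v ∈ lengthHomog K q) (hpq : p ≤ q) (hB : B ≠ 0)
    (h : u * A + v * B = 0) : ∃ v' ∈ lengthHomog K (q - p), v = u * v' := by
  obtain ⟨w, hw⟩ := exists_coeff_ne_zero hB
  let A' : NCPoly K α := comapDomain (· * w) (mul_left_injective w) A
  let v' : NCPoly K α := component K (fun _ => 1) (q - p) (-(B.coeff w)⁻¹ • A')
  have hv' : v' ∈ lengthHomog K (q - p) := component_mem _ _ _
  refine ⟨v', hv', ?_⟩
  ext s
  by_cases hs : s.length = q
  · obtain ⟨a, b, rfl, ha, hb⟩ : ∃ a b, a * b = s ∧ a.length = p ∧ b.length = q - p :=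
      exists_mul_eq_of_length_eq (by omega)
    have hcoeff : u.coeff a * A.coeff (b * w) + v.coeff (a * b) * B.coeff w = 0 := by
      rw [← coeff_mul_of_length_eq hu A ha, ← coeff_mul_of_length_eq hv B hs, mul_assoc,
        ← Finsupp.add_apply, ← coeff_add, h]
      rfl
    have hv'b : v'.coeff b = -(B.coeff w)⁻¹ * A.coeff (b * w) :=
      coeff_component_of_eq (by simpa [weight_const_one] using hb)
    rw [coeff_mul_of_length_eq hu _ ha, hv'b]
    field_simp
    linear_combination hcoeff
  · have huv : u * v' ∈ lengthHomog K q := by simpa [hpq] using mul_mem_homog hu hv'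
    rw [coeff_eq_zero_of_length_ne hv hs, coeff_eq_zero_of_length_ne huv hs]

/-- The substitution `z_j ↦ z_i z_j` on words. -/
def shear [DecidableEq α] (i j : α) : FreeMonoid α →* FreeMonoid α :=
  FreeMonoid.lift fun k => if k = j then FreeMonoid.of i * FreeMonoid.of j else FreeMonoid.of k

-- A sheared word is decoded by a stack: each letter is pushed, and `j` first pops the `i` below it.
lemma foldl_shear [DecidableEq α] {i j : α} (hij : i ≠ j) (w : FreeMonoid α) (l : List α) :
    (shear i j w).toList.foldl (fun l k => if k = j then j :: l.tail else k :: l) l =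
      w.toList.reverse ++ l := by
  induction w using FreeMonoid.inductionOn' generalizing l with
  | one => rfl
  | of_mul k w ih =>
    rw [map_mul, FreeMonoid.toList_mul, List.foldl_append, ih]
    by_cases hk : k = j <;> simp [shear, hk, hij]

lemma shear_injective [DecidableEq α] {i j : α} (hij : i ≠ j) :
    Function.Injective (shear i j) := fun v w h => by
  have hrev := foldl_shear hij v []
  rw [h, foldl_shear hij] at hrev
  simpa using hrev.symm

lemma exists_eq_smul_one_add_sum_gen_mul [CommSemiring K] [Fintype α] {n : ℕ} {P : NCPoly K α}
    (hP : P ∈ supported K K {w | w.length < n + 1}) :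
    ∃ (c : K) (A : α → NCPoly K α), (∀ k, A k ∈ supported K K {w | w.length < n}) ∧
      P = c • 1 + ∑ k, gen K k * A k := by
  classical
  rw [supported_eq_span_mon] at hP
  induction hP using Submodule.span_induction with
  | mem P hP =>
    obtain ⟨w, hw, rfl⟩ := hP
    cases w using FreeMonoid.casesOn with
    | one => exact ⟨1, 0, by simp, by simp⟩
    | of_mul k w =>
      have hw' : w.length < n := by
        simpa [add_comm 1] using (show (FreeMonoid.of k * w).length < n + 1 from hw)
      refine ⟨0, Pi.single k (mon K w), fun l => ?_, ?_⟩
      · rcases eq_or_ne l k with rfl | hl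
        · simpa using mon_mem_supported hw'
        · simp [hl]
      · rw [Fintype.sum_eq_single k fun l hl => by simp [hl]]
        simp [mon_of_mul]
  | zero => exact ⟨0, 0, by simp, by simp⟩
  | add P Q _ _ ihP ihQ =>
    obtain ⟨c, A, hA, rfl⟩ := ihP
    obtain ⟨d, B, hB, rfl⟩ := ihQ
    refine ⟨c + d, A + B, fun k => add_mem (hA k) (hB k), ?_⟩
    simp only [Pi.add_apply, mul_add, Finset.sum_add_distrib, add_smul]
    abel
  | smul a P _ ih =>
    obtain ⟨c, A, hA, rfl⟩ := ih
    exact ⟨a * c, a • A, fun k => Submodule.smul_mem _ _ (hA k), by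
      simp [mul_smul, Finset.smul_sum]⟩

lemma eq_smul_one_of_mem_lengthHomog_zero [CommSemiring K] {P : NCPoly K α}
    (hP : P ∈ lengthHomog K 0) : P = P.coeff 1 • 1 := by
  classical
  ext w
  rcases eq_or_ne w 1 with rfl | hw
  · simp
  · rw [coeff_eq_zero_of_length_ne hP (by simpa using hw), ← mon_one, coeff_smul,
      Finsupp.smul_apply, coeff_mon, if_neg hw.symm, smul_zero]

lemma pos_of_not_commute [CommSemiring K] {p : ℕ} {P Q : NCPoly K α} (hP : P ∈ lengthHomog K p)
    (hPQ : ¬ Commute P Q) : 0 < p := by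
  refine Nat.pos_of_ne_zero fun hp => hPQ ?_
  subst hp
  rw [eq_smul_one_of_mem_lengthHomog_zero hP]
  exact (Commute.one_left Q).smul_left _

lemma coeff_one_mul_eq_zero [CommSemiring K] {p : ℕ} {P : NCPoly K α} (hP : P ∈ lengthHomog K p)
    (hp : 0 < p) (Q : NCPoly K α) : (P * Q).coeff 1 = 0 := by
  have hPQ : P * Q ∈ supported K K {1}ᶜ := by
    refine mul_mem_supported (T := Set.univ) (fun s (hs : _ = p) t _ => ?_) hP
      fun w _ => Set.mem_univ w
    rintro (hst : s * t = 1)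
    have hlen := congrArg FreeMonoid.length hst
    simp only [weight_const_one, Nat.cast_id] at hs
    simp only [FreeMonoid.length_mul, FreeMonoid.length_one] at hlen
    omega
  exact coeff_eq_zero_of_notMem hPQ (by simp)

variable [Field K] {u : Fin 2 → NCPoly K (Fin 2)} {p : Fin 2 → ℕ} {i j : Fin 2}

lemma subst_injective_of_forall_ne_mul (hu : ∀ k, u k ∈ lengthHomog K (p k)) (hp : ∀ k, 0 < p k)
    (hij : i ≠ j) (hle : p i ≤ p j) (hi : u i ≠ 0)
    (hdiv : ∀ v ∈ lengthHomog K (p j - p i), u j ≠ u i * v) :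
    Function.Injective (subst (K := K) u) := by
  suffices key : ∀ n, ∀ P ∈ supported K K {w | w.length < n}, subst (K := K) u P = 0 → P = 0 by
    refine (injective_iff_map_eq_zero _).2 fun P =>
      key (P.coeff.support.sup FreeMonoid.length + 1) P fun w hw => ?_
    exact Nat.lt_succ_of_le (Finset.le_sup (f := FreeMonoid.length) hw)
  intro n
  induction n with
  | zero => exact fun P hP _ => by simpa [supported_eq_span_mon] using hP
  | succ n ih =>
    intro P hP h
    obtain ⟨c, A, hA, rfl⟩ := exists_eq_smul_one_add_sum_gen_mul hP
    have hsum : ∀ f : Fin 2 → NCPoly K (Fin 2), ∑ k, f k = f i + f j := fun f =>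
      Fintype.sum_eq_add i j hij fun k hk => by omega
    simp only [map_add, map_smul, map_one, map_mul, subst_gen, hsum] at h ⊢
    have hc : c = 0 := by
      simpa [coeff_one_mul_eq_zero (hu _) (hp _), coeff_one_one] using
        congrArg (fun P => coeff P 1) h
    rw [hc, zero_smul, zero_add] at h
    have hAj : subst u (A j) = 0 := by
      by_contra hAj
      obtain ⟨v, hv, huv⟩ := exists_eq_mul_of_mul_add_mul_eq_zero (hu i) (hu j) hle hAj h
      exact hdiv v hv huv
    have hAi : subst u (A i) = 0 := by
      rw [hAj, mul_zero, add_zero] at h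
      exact (mul_eq_zero.1 h).resolve_left hi
    rw [ih _ (hA i) hAi, ih _ (hA j) hAj, hc]
    simp

lemma subst_eq_subst_update_comp_shear {v : NCPoly K (Fin 2)} (hij : i ≠ j)
    (huv : u j = u i * v) :
    subst (K := K) u =
      (subst (Function.update u j v)).comp (mapDomainAlgHom K K (shear i j)) := by
  refine algHom_ext_gen fun k => ?_
  have hk : mapDomainAlgHom K K (shear i j) (gen K k) = mon K (shear i j (FreeMonoid.of k)) := by
    simp [gen, mon]
  rw [AlgHom.comp_apply, hk, subst_mon, subst_gen]
  rcases eq_or_ne k j with rfl | hkj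
  · simp [shear, hij, huv]
  · simp [shear, hkj]

-- Euclid's algorithm: as long as one element divides the other on the left, divide.
theorem subst_injective (hu : ∀ k, u k ∈ lengthHomog K (p k)) (hij : i ≠ j)
    (hne : ¬ Commute (u i) (u j)) : Function.Injective (subst (K := K) u) := by
  induction hN : p i + p j using Nat.strong_induction_on generalizing u p i j with
  | _ N ih =>
  wlog hle : p i ≤ p j generalizing i j
  · exact this hij.symm (fun h => hne h.symm) (by omega) (by omega)
  have hpi : 0 < p i := pos_of_not_commute (hu i) hne
  have hpj : 0 < p j := pos_of_not_commute (hu j) fun h => hne h.symm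
  by_cases hdiv : ∃ v ∈ lengthHomog K (p j - p i), u j = u i * v
  · obtain ⟨v, hv, huv⟩ := hdiv
    rw [subst_eq_subst_update_comp_shear hij huv, AlgHom.coe_comp]
    refine Function.Injective.comp ?_ (mapDomain_injective (shear_injective hij))
    refine ih (p j) (by omega) (p := Function.update p j (p j - p i)) (fun k => ?_) hij ?_ ?_
    · rcases eq_or_ne k j with rfl | hkj
      · simpa using hv
      · simpa [hkj] using hu k
    · simp only [Function.update_of_ne hij, Function.update_self]
      exact fun h => hne (huv ▸ (Commute.refl _).mul_right h)
    · simp [hij, hle]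
  · push Not at hdiv
    refine subst_injective_of_forall_ne_mul hu (fun k => ?_) hij hle (fun h => ?_) hdiv
    · obtain rfl | rfl : k = i ∨ k = j := by omega
      exacts [hpi, hpj]
    · exact hne (h ▸ Commute.zero_left _)

end FreeGenerators

section LetterCounts

variable {K α R : Type*}

lemma weight_single [DecidableEq α] [NonAssocSemiring R] (i : α) (w : FreeMonoid α) :
    weight (Pi.single i (1 : R)) w = w.toList.count i := by
  induction w using FreeMonoid.inductionOn' with
  | one => simp
  | of_mul k w ih =>
    rcases eq_or_ne k i with rfl | hk
    · simp [ih, add_comm]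
    · simp [ih, hk]

lemma weight_eq_sum_weight_single_mul [DecidableEq α] [Fintype α] [Semiring R] (ω : α → R)
    (w : FreeMonoid α) : weight ω w = ∑ y, weight (Pi.single y 1) w * ω y := by
  induction w using FreeMonoid.inductionOn' with
  | one => simp
  | of_mul k w ih => simp [add_mul, Finset.sum_add_distrib, ← ih, Pi.single_apply]

lemma mem_homog_of_forall_single [DecidableEq α] [Fintype α] [CommSemiring K] [Semiring R]
    {P : NCPoly K α} {d : α → R} (hP : ∀ y, P ∈ homog K (Pi.single y 1) (d y)) (ω : α → R) :
    P ∈ homog K ω (∑ y, d y * ω y) := fun w hw =>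
  (weight_eq_sum_weight_single_mul ω w).trans
    (Finset.sum_congr rfl fun y _ => congrArg (· * ω y) (hP y hw))

lemma weight_natCast [NonAssocSemiring R] (ω : α → ℕ) (w : FreeMonoid α) :
    weight (fun i => (ω i : R)) w = (weight ω w : ℕ) := by
  induction w using FreeMonoid.inductionOn' with
  | one => simp
  | of_mul k w ih => simp [ih]

lemma exists_mem_homog_natCast_eq [CommSemiring K] [NonAssocSemiring R] [CharZero R] {ω : α → ℕ}
    {d : R} {P : NCPoly K α} (hP0 : P ≠ 0) (hP : P ∈ homog K (fun i => (ω i : R)) d) :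
    ∃ n : ℕ, P ∈ homog K ω n ∧ (n : R) = d := by
  obtain ⟨w, hw⟩ := exists_coeff_ne_zero hP0
  have hwd : ((weight ω w : ℕ) : R) = d := by
    rw [← weight_natCast]; exact mem_of_coeff_ne_zero hP hw
  refine ⟨weight ω w, fun v hv => ?_, hwd⟩
  have hvd : weight (fun i => (ω i : R)) v = d := hP hv
  rw [weight_natCast, ← hwd] at hvd
  exact_mod_cast hvd

lemma eq_of_pow_length_of_weight_single_eq_zero {i j : Fin 2} (hij : i ≠ j)
    {w : FreeMonoid (Fin 2)} (hw : weight (Pi.single j (1 : ℚ)) w = 0) :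
    w = FreeMonoid.of i ^ w.length := by
  induction w using FreeMonoid.inductionOn' with
  | one => simp
  | of_mul k w ih =>
    have hnonneg : 0 ≤ weight (Pi.single j (1 : ℚ)) w :=
      weight_nonneg (Pi.single_nonneg.2 zero_le_one) w
    obtain rfl | rfl : k = i ∨ k = j := by omega
    · rw [FreeMonoid.length_mul, FreeMonoid.length_of, add_comm, pow_succ', ← ih]
      simpa [hij] using hw
    · rw [weight_mul, weight_of, Pi.single_eq_same] at hw
      linarith

lemma mon_of_pow [CommSemiring K] (i : α) (n : ℕ) : mon K (FreeMonoid.of i ^ n) = gen K i ^ n :=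
  map_pow (MonoidAlgebra.of K (FreeMonoid α)) _ n

end LetterCounts

section Abelianization

variable {K α : Type*} [CommSemiring K]

/-- The canonical homomorphism from the free algebra to the polynomial ring. -/
noncomputable def abelianization (K : Type*) {α : Type*} [CommSemiring K] :
    NCPoly K α →ₐ[K] MvPolynomial α K :=
  subst MvPolynomial.X

@[simp] lemma abelianization_gen (i : α) : abelianization K (gen K i) = MvPolynomial.X i :=
  subst_gen _ _

lemma abelianization_mon (w : FreeMonoid α) :
    abelianization K (mon K w) =
      MvPolynomial.monomial (weight (fun i => Finsupp.single i 1) w) 1 := by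
  induction w using FreeMonoid.inductionOn' with
  | one => simp
  | of_mul i w ih =>
    rw [mon_of_mul, map_mul, ih, abelianization_gen, MvPolynomial.X, MvPolynomial.monomial_mul,
      weight_mul, weight_of, one_mul]

lemma eq_of_pow_of_weight_finsupp_single_eq {i : α} {n : ℕ} {w : FreeMonoid α}
    (hw : weight (fun i => Finsupp.single i 1) w = Finsupp.single i n) :
    w = FreeMonoid.of i ^ n := by
  classical
  induction w using FreeMonoid.inductionOn' generalizing n with
  | one =>
    obtain rfl : n = 0 := Finsupp.single_eq_zero.1 hw.symm
    rw [pow_zero]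
  | of_mul k w ih =>
    rw [weight_mul, weight_of] at hw
    obtain rfl : k = i := by
      by_contra hk
      simpa [hk] using DFunLike.congr_fun hw k
    obtain ⟨m, rfl⟩ : ∃ m, n = 1 + m :=
      ⟨weight (fun i => Finsupp.single i 1) w k, by simpa using (DFunLike.congr_fun hw k).symm⟩
    rw [Finsupp.single_add, add_right_inj] at hw
    rw [ih hw, pow_add, pow_one]

lemma weight_finsupp_single_eq_single_iff {i : α} {n : ℕ} {w : FreeMonoid α} :
    weight (fun i => Finsupp.single i 1) w = Finsupp.single i n ↔ w = FreeMonoid.of i ^ n := by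
  refine ⟨eq_of_pow_of_weight_finsupp_single_eq, ?_⟩
  rintro rfl
  rw [weight_pow, weight_of, Finsupp.smul_single_one]

lemma coeff_single_abelianization (P : NCPoly K α) (i : α) (n : ℕ) :
    (abelianization K P).coeff (Finsupp.single i n) = P.coeff (FreeMonoid.of i ^ n) := by
  classical
  refine LinearMap.congr_fun
    (f := MvPolynomial.lcoeff K (Finsupp.single i n) ∘ₗ (abelianization K).toLinearMap)
    (g := Finsupp.lapply (FreeMonoid.of i ^ n) ∘ₗ (coeffLinearEquiv K).toLinearMap)
    (linearMap_ext_mon fun w => ?_) P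
  simp [abelianization_mon, MvPolynomial.coeff_monomial, coeff_mon,
    weight_finsupp_single_eq_single_iff]

end Abelianization

section LeadingShift

open Polynomial

variable {K α : Type*}

lemma exists_slope [CommSemiring K] [Finite α] {E : ℕ → α → NCPoly K α} {s : Finset ℕ}
    (hs : 0 ∉ s) (hE : ∃ k ∈ s, ∃ i, E k i ≠ 0) (ω : α → ℚ) :
    ∃ δ : ℚ, (∀ k ∈ s, ∀ i, E k i ∈ degLE K ω (ω i + k • δ)) ∧
      ∃ k ∈ s, ∃ i, component K ω (ω i + k • δ) (E k i) ≠ 0 := by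
  classical
  cases nonempty_fintype α
  let T : Finset (Σ _ : ℕ, Σ _ : α, FreeMonoid α) :=
    s.sigma fun k => Finset.univ.sigma fun i => (E k i).coeff.support
  have hT : ∀ k i w, ⟨k, i, w⟩ ∈ T ↔ k ∈ s ∧ (E k i).coeff w ≠ 0 := by simp [T]
  have hne : T.Nonempty := by
    obtain ⟨k, hk, i, hi⟩ := hE
    obtain ⟨w, hw⟩ := exists_coeff_ne_zero hi
    exact ⟨⟨k, i, w⟩, (hT k i w).2 ⟨hk, hw⟩⟩
  obtain ⟨⟨k, i, w⟩, hm, hmax⟩ := T.exists_max_image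
    (fun t => (weight ω t.2.2 - ω t.2.1) / t.1) hne
  obtain ⟨hk, hw⟩ := (hT k i w).1 hm
  have hpos : ∀ k ∈ s, (0 : ℚ) < k := fun k hk => by
    exact_mod_cast Nat.pos_of_ne_zero (ne_of_mem_of_not_mem hk hs)
  refine ⟨(weight ω w - ω i) / k, fun k' hk' i' w' hw' => ?_, k, hk, i, fun h => hw ?_⟩
  · have hle := hmax ⟨k', i', w'⟩ ((hT _ _ _).2 ⟨hk', Finsupp.mem_support_iff.1 hw'⟩)
    rw [div_le_iff₀ (hpos k' hk')] at hle
    rw [Set.mem_ofPred_eq, nsmul_eq_mul]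
    linarith
  · have hslope : weight ω w = ω i + k • ((weight ω w - ω i) / k) := by
      have := (hpos k hk).ne'
      rw [nsmul_eq_mul]
      field_simp
      ring
    rw [← coeff_component_of_eq (P := E k i) hslope, h]
    rfl

/-- `Φ` is homogeneous: its `k`-th component raises the weights of the generators by `k • δ`. -/
def HasShift {Γ : Type*} [CommSemiring K] [AddMonoid Γ] (ω : α → Γ) (δ : Γ)
    (Φ : NCPoly K α →ₐ[K] (NCPoly K α)[X]) : Prop :=
  ∀ k i, (Φ (gen K i)).coeff k ∈ homog K ω (ω i + k • δ)

/-- Some component of positive index does not vanish on the generators. -/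
def IsNontrivial [CommSemiring K] (Φ : NCPoly K α →ₐ[K] (NCPoly K α)[X]) : Prop :=
  ∃ k ≠ 0, ∃ i, (Φ (gen K i)).coeff k ≠ 0

variable [Finite α] [CommRing K] {Φ : NCPoly K α →ₐ[K] (NCPoly K α)[X]}

lemma IsLFIHD.exists_leading (hΦ : IsLFIHD Φ) (hnt : IsNontrivial Φ) (ω : α → ℚ) :
    ∃ (δ : ℚ) (Ψ : NCPoly K α →ₐ[K] (NCPoly K α)[X]), IsLFIHD Ψ ∧ IsNontrivial Ψ ∧
      (∀ k i, (Φ (gen K i)).coeff k ∈ degLE K ω (ω i + k • δ)) ∧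
      ∀ k i, (Ψ (gen K i)).coeff k = component K ω (ω i + k • δ) ((Φ (gen K i)).coeff k) := by
  cases nonempty_fintype α
  let N := Finset.univ.sup (fun i => (Φ (gen K i)).natDegree) + 1
  have hN : ∀ k, N ≤ k → ∀ i, (Φ (gen K i)).coeff k = 0 := fun k hk i =>
    coeff_eq_zero_of_natDegree_lt <| Nat.lt_of_succ_le <|
      (Nat.succ_le_succ (Finset.le_sup (f := fun i => (Φ (gen K i)).natDegree)
        (Finset.mem_univ i))).trans hk
  have hmem : ∀ k i, (Φ (gen K i)).coeff k ≠ 0 → k < N := fun k i h =>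
    not_le.1 fun hk => h (hN k hk i)
  obtain ⟨k₁, hk₁, i₁, h₁⟩ := hnt
  obtain ⟨δ, hle₀, k₀, hk₀, i₀, h₀⟩ := exists_slope (E := fun k i => (Φ (gen K i)).coeff k)
    (s := (Finset.range N).erase 0) (by simp)
    ⟨k₁, by simp [hk₁, hmem k₁ i₁ h₁], i₁, h₁⟩ ω
  have hle : ∀ k i, coeffMap Φ k (gen K i) ∈ degLE K ω (ω i + k • δ) := by
    intro k i
    rcases eq_or_ne k 0 with rfl | hk
    · rw [coeffMap_apply, hΦ.zero, zero_smul, add_zero]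
      exact homog_le_degLE (gen_mem_homog i)
    · rcases lt_or_ge k N with hkN | hkN
      · exact hle₀ k (by simp [hk, hkN]) i
      · rw [coeffMap_apply, hN k hkN]
        exact zero_mem _
  have hfin : ∀ k, N ≤ k → ∀ i, component K ω (ω i + k • δ) (coeffMap Φ k (gen K i)) = 0 :=
    fun k hk i => by rw [coeffMap_apply, hN k hk, map_zero]
  have hcoeff := coeff_leadingHom_gen hfin
  refine ⟨δ, leadingHom ω δ (coeffMap Φ) N, hΦ.isHasseSchmidt.isLFIHD_leadingHom hle hfin
    fun w j k => ?_, ⟨k₀, (Finset.mem_erase.1 hk₀).1, i₀, ?_⟩, hle, fun k i => hcoeff i k⟩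
  · rw [← map_nsmul]
    exact congrArg _ (hΦ.iter _ _ _)
  · rw [hcoeff]
    exact h₀

end LeadingShift

section LeadingCoeff

open Polynomial

variable {K α B : Type*} [CommSemiring K] [Semiring B] [Algebra K B] [NoZeroDivisors B]
  {Φ : NCPoly K α →ₐ[K] B[X]}

lemma leadingCoeff_map_mon (w : FreeMonoid α) :
    (Φ (mon K w)).leadingCoeff = subst (fun i => (Φ (gen K i)).leadingCoeff) (mon K w) := by
  induction w using FreeMonoid.inductionOn' with
  | one => simp
  | of_mul i w ih => rw [mon_of_mul, map_mul, map_mul, leadingCoeff_mul, ih, subst_gen]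

variable [Nontrivial B]

lemma map_mon_ne_zero (hΦ : ∀ i, Φ (gen K i) ≠ 0) (w : FreeMonoid α) : Φ (mon K w) ≠ 0 := by
  induction w using FreeMonoid.inductionOn' with
  | one => simp
  | of_mul i w ih =>
    rw [mon_of_mul, map_mul]
    exact mul_ne_zero (hΦ i) ih

lemma natDegree_map_mon (hΦ : ∀ i, Φ (gen K i) ≠ 0) (w : FreeMonoid α) :
    (Φ (mon K w)).natDegree = weight (fun i => (Φ (gen K i)).natDegree) w := by
  induction w using FreeMonoid.inductionOn' with
  | one => simp
  | of_mul i w ih =>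
    rw [mon_of_mul, map_mul, natDegree_mul (hΦ i) (map_mon_ne_zero hΦ w), ih, weight_mul, weight_of]

lemma coeff_eq_subst_leadingCoeff (hΦ : ∀ i, Φ (gen K i) ≠ 0) {N : ℕ} {P : NCPoly K α}
    (hP : P ∈ homog K (fun i => (Φ (gen K i)).natDegree) N) :
    (Φ P).coeff N = subst (fun i => (Φ (gen K i)).leadingCoeff) P := by
  refine eqOn_supported (f := coeffMap Φ N) (g := (subst _).toLinearMap) (fun w hw => ?_) hP
  rw [coeffMap_apply, ← hw, ← natDegree_map_mon hΦ]
  exact leadingCoeff_map_mon w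

end LeadingCoeff

section Bihomogeneous

open Polynomial

variable {K α : Type*} [Field K]

lemma nsmul_weight_eq_of_commute {Γ : Type*} [AddMonoid Γ] {ω : α → Γ} {d e : Γ} {p q : ℕ}
    {P Q : NCPoly K α} (hPp : P ∈ lengthHomog K p) (hQq : Q ∈ lengthHomog K q)
    (hPd : P ∈ homog K ω d) (hQe : Q ∈ homog K ω e) (hP : P ≠ 0) (hQ : Q ≠ 0) (h : Commute P Q) :
    q • d = p • e := by
  have hPq : P ^ q ∈ lengthHomog K (p * q) := by
    simpa only [smul_eq_mul, mul_comm p q] using pow_mem_homog hPp q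
  obtain ⟨c, hc⟩ := exists_smul_of_commute hPq (pow_mem_homog hQq p) (pow_ne_zero p hQ)
    (h.pow_pow q p)
  refine eq_of_mem_homog (pow_ne_zero q hP) (pow_mem_homog hPd q) ?_
  rw [hc]
  exact Submodule.smul_mem _ _ (pow_mem_homog hQe p)

/-- If `u` commuted, the bidegrees of `u 0` and `u 1` would be proportional, but their determinant
is `1 + m 0 * κ 0 + m 1 * κ 1`. -/
lemma not_commute_of_bihomogeneous {u : Fin 2 → NCPoly K (Fin 2)} (hu0 : ∀ z, u z ≠ 0)
    {m : Fin 2 → ℕ} {κ : Fin 2 → ℚ} (hκ : ∀ y, 0 ≤ κ y)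
    (hu : ∀ y z, u z ∈ homog K (Pi.single y 1) ((Pi.single y 1 : Fin 2 → ℚ) z + m z • κ y))
    {p : Fin 2 → ℕ} (hp : ∀ z, u z ∈ lengthHomog K (p z)) (hp0 : ∀ z, p z ≠ 0) :
    ¬ Commute (u 0) (u 1) := by
  intro hc
  have hprop : ∀ y, p 1 • ((Pi.single y 1 : Fin 2 → ℚ) 0 + m 0 • κ y) =
      p 0 • ((Pi.single y 1 : Fin 2 → ℚ) 1 + m 1 • κ y) := fun y =>
    nsmul_weight_eq_of_commute (hp 0) (hp 1) (hu y 0) (hu y 1) (hu0 0) (hu0 1) hc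
  have h0 := hprop 0
  have h1 := hprop 1
  simp only [nsmul_eq_mul, Pi.single_eq_same, Pi.single_eq_of_ne, ne_eq, one_ne_zero, zero_ne_one,
    not_false_eq_true, zero_add] at h0 h1
  have hdet : (p 0 : ℚ) * p 1 * (1 + m 0 * κ 0 + m 1 * κ 1) = 0 := by
    linear_combination (p 0 : ℚ) * (1 + m 1 * κ 1) * h0 - p 0 * (m 1 * κ 0) * h1
  have hκ0 := hκ 0
  have hκ1 := hκ 1
  have hp0' : (0 : ℚ) < p 0 := by exact_mod_cast Nat.pos_of_ne_zero (hp0 0)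
  have hp1' : (0 : ℚ) < p 1 := by exact_mod_cast Nat.pos_of_ne_zero (hp0 1)
  exact (by positivity : (0 : ℚ) < p 0 * p 1 * (1 + m 0 * κ 0 + m 1 * κ 1)).ne' hdet

lemma subst_injective_of_bihomogeneous {u : Fin 2 → NCPoly K (Fin 2)} (hu0 : ∀ z, u z ≠ 0)
    {m : Fin 2 → ℕ} {κ : Fin 2 → ℚ} (hκ : ∀ y, 0 ≤ κ y)
    (hu : ∀ y z, u z ∈ homog K (Pi.single y 1) ((Pi.single y 1 : Fin 2 → ℚ) z + m z • κ y)) :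
    Function.Injective (subst (K := K) u) := by
  have hlen : ∀ z, ∃ p : ℕ, u z ∈ lengthHomog K p ∧ p ≠ 0 := fun z => by
    obtain ⟨p, hp, hpz⟩ := exists_mem_homog_natCast_eq (R := ℚ) (ω := fun _ => 1) (hu0 z)
      (mem_homog_of_forall_single (fun y => hu y z) _)
    refine ⟨p, hp, fun h => ?_⟩
    have hsum : 0 ≤ m z • (κ 0 + κ 1) := nsmul_nonneg (add_nonneg (hκ 0) (hκ 1)) _
    fin_cases z <;> simp [h] at hpz hsum <;> linarith
  choose p hp hp0 using hlen
  exact subst_injective hp zero_ne_one (not_commute_of_bihomogeneous hu0 hκ hu hp hp0)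

lemma IsLFIHD.injective {B : Type*} [Semiring B] [Algebra K B] {Φ : B →ₐ[K] B[X]}
    (hΦ : IsLFIHD Φ) : Function.Injective Φ :=
  Function.LeftInverse.injective (g := fun p : B[X] => p.coeff 0) hΦ.zero

lemma IsLFIHD.eq_zero_of_leadingCoeff_mem_homog {Φ : NCPoly K α →ₐ[K] (NCPoly K α)[X]}
    (hΦ : IsLFIHD Φ) (hgen : ∀ i, Φ (gen K i) ≠ 0)
    (hinj : Function.Injective (subst (K := K) fun i => (Φ (gen K i)).leadingCoeff)) {N : ℕ} {z : α}
    (hz : (Φ (gen K z)).leadingCoeff ∈ homog K (fun i => (Φ (gen K i)).natDegree) N) : N = 0 := by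
  by_contra hN
  have hne := (map_ne_zero_iff _ hinj).2 (leadingCoeff_ne_zero.2 (hgen z))
  rw [← coeff_eq_subst_leadingCoeff hgen hz, leadingCoeff, hΦ.iter,
    coeff_eq_zero_of_natDegree_lt (by lia), smul_zero] at hne
  exact hne rfl

lemma IsLFIHD.natDegree_eq_zero_of_shift_nonneg
    {Φ : NCPoly K (Fin 2) →ₐ[K] (NCPoly K (Fin 2))[X]} (hΦ : IsLFIHD Φ) {κ : Fin 2 → ℚ}
    (hκ : ∀ y, 0 ≤ κ y) (hshift : ∀ y, HasShift (Pi.single y 1) (κ y) Φ) (z : Fin 2) :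
    (Φ (gen K z)).natDegree = 0 := by
  by_contra hz
  have hgen : ∀ i, Φ (gen K i) ≠ 0 := fun i =>
    (map_ne_zero_iff _ hΦ.injective).2 (by simp [gen, mon])
  have hu0 : ∀ i, (Φ (gen K i)).leadingCoeff ≠ 0 := fun i => leadingCoeff_ne_zero.2 (hgen i)
  have hu := fun y i => hshift y (Φ (gen K i)).natDegree i
  obtain ⟨N, hN, hNz⟩ := exists_mem_homog_natCast_eq (R := ℚ)
    (ω := fun i => (Φ (gen K i)).natDegree) (hu0 z) (mem_homog_of_forall_single (fun y => hu y z) _)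
  have hN0 := hΦ.eq_zero_of_leadingCoeff_mem_homog hgen
    (subst_injective_of_bihomogeneous hu0 hκ hu) hN
  have hpos : (0 : ℚ) < (Φ (gen K z)).natDegree := by exact_mod_cast Nat.pos_of_ne_zero hz
  have hκ0 := hκ 0
  have hκ1 := hκ 1
  rw [hN0, Nat.cast_zero] at hNz
  simp only [add_mul, Finset.sum_add_distrib, Pi.single_apply, ite_mul, one_mul, zero_mul,
    Finset.sum_ite_eq, Finset.mem_univ, if_true, Fin.sum_univ_two, nsmul_eq_mul] at hNz
  exact (by positivity : (0 : ℚ) < _).ne hNz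

end Bihomogeneous

section SingleLetterWeights

open Polynomial

lemma eq_and_weight_single_eq_zero {α : Type*} [DecidableEq α] {i z : α} {κ : ℚ} (hκ : κ < 0)
    {k : ℕ} (hk : k ≠ 0) {w : FreeMonoid α}
    (hw : weight (Pi.single i 1) w = (Pi.single i 1 : α → ℚ) z + k • κ) :
    z = i ∧ weight (Pi.single i (1 : ℚ)) w = 0 := by
  have hneg : k • κ < 0 := nsmul_neg hκ hk
  rw [weight_single] at hw ⊢
  rcases eq_or_ne z i with rfl | hz
  · rw [Pi.single_eq_same] at hw
    have hlt : (w.toList.count z : ℚ) < 1 := by linarith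
    exact ⟨rfl, by exact_mod_cast Nat.lt_one_iff.1 (by exact_mod_cast hlt)⟩
  · rw [Pi.single_eq_of_ne hz] at hw
    linarith [(Nat.cast_nonneg (w.toList.count i) : (0 : ℚ) ≤ _)]

variable {K : Type*} {i j : Fin 2} {ω : Fin 2 → ℚ}

lemma weight_eq_add_of_ne (hij : i ≠ j) (ω : Fin 2 → ℚ) (w : FreeMonoid (Fin 2)) :
    weight ω w = weight (Pi.single i 1) w * ω i + weight (Pi.single j 1) w * ω j := by
  have huniv : (Finset.univ : Finset (Fin 2)) = {i, j} := by
    ext y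
    simp only [Finset.mem_univ, Finset.mem_insert, Finset.mem_singleton, true_iff]
    lia
  rw [weight_eq_sum_weight_single_mul, huniv, Finset.sum_pair hij]

lemma HasShift.single_of_single [CommSemiring K]
    {Φ : NCPoly K (Fin 2) →ₐ[K] (NCPoly K (Fin 2))[X]} {δ κ : ℚ} (hij : i ≠ j) (hω : ω j ≠ 0)
    (hΦ : HasShift ω δ Φ) (hΦi : HasShift (Pi.single i 1) κ Φ) :
    HasShift (Pi.single j 1) ((δ - ω i * κ) / ω j) Φ := by
  intro k z w hw
  have hwω : weight ω w = ω z + k • δ := hΦ k z hw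
  have hwi : weight (Pi.single i 1) w = (Pi.single i 1 : Fin 2 → ℚ) z + k • κ := hΦi k z hw
  have hz := weight_eq_add_of_ne hij ω (FreeMonoid.of z)
  rw [weight_eq_add_of_ne hij, hwi] at hwω
  simp only [weight_of, nsmul_eq_mul] at hz hwω
  rw [Set.mem_ofPred_eq, nsmul_eq_mul]
  field_simp
  linear_combination hwω + hz

lemma eq_smul_gen_pow_of_mem_degLE [CommSemiring K] (hij : i ≠ j) (hω : ω j ≠ 0) {d : ℚ}
    {P : NCPoly K (Fin 2)} (hP : P ∈ homog K ω d) (hPi : P ∈ degLE K (Pi.single i (1 : ℚ)) 0)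
    {w : FreeMonoid (Fin 2)} (hw : P.coeff w ≠ 0) : P = P.coeff w • gen K j ^ w.length := by
  have hpow : ∀ v, P.coeff v ≠ 0 → v = FreeMonoid.of j ^ v.length := fun v hv =>
    eq_of_pow_length_of_weight_single_eq_zero hij.symm <|
      (mem_of_coeff_ne_zero hPi hv).antisymm (weight_nonneg (Pi.single_nonneg.2 zero_le_one) v)
  have hlen : ∀ v, P.coeff v ≠ 0 → v.length • ω j = d := fun v hv => by
    rw [← mem_of_coeff_ne_zero hP hv]
    conv_rhs => rw [hpow v hv, weight_pow, weight_of]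
  have hsupp : P ∈ supported K K {w} := fun v hv => by
    replace hv : P.coeff v ≠ 0 := Finsupp.mem_support_iff.1 hv
    have heq : v.length = w.length := by
      simpa [hω] using (hlen v hv).trans (hlen w hw).symm
    rw [Set.mem_singleton_iff, hpow v hv, heq, ← hpow w hw]
  rw [supported_eq_span_mon, Set.image_singleton, Submodule.mem_span_singleton] at hsupp
  obtain ⟨c, hc⟩ := hsupp
  rw [← mon_of_pow, ← hpow w hw, ← hc]
  simp [mon]

/-- Otherwise the leading part with respect to the degree in the other letter would be
bihomogeneous with nonnegative shifts. -/
theorem IsLFIHD.exists_abelianization_coeff_ne_zero [Field K]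
    {Φ : NCPoly K (Fin 2) →ₐ[K] (NCPoly K (Fin 2))[X]} {δ : ℚ} (hΦ : IsLFIHD Φ)
    (hω : ∀ i, ω i ≠ 0) (hshift : HasShift ω δ Φ) (hnt : IsNontrivial Φ) (hij : i ≠ j)
    (hpow : ∀ k ≠ 0, ∀ c : K, c ≠ 0 → ∀ q : ℕ, (Φ (gen K i)).coeff k ≠ c • gen K j ^ q) :
    ∃ k ≠ 0, abelianization K ((Φ (gen K j)).coeff k) ≠ 0 := by
  obtain ⟨κ, Ψ, hΨ, ⟨k, hk, z, hkz⟩, hle, hcoeff⟩ := hΦ.exists_leading hnt (Pi.single i 1)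
  have hΨi : HasShift (Pi.single i 1) κ Ψ := fun k z => hcoeff k z ▸ component_mem _ _ _
  have hΨj := HasShift.single_of_single hij (hω j)
    (fun k z => hcoeff k z ▸ component_mem_supported (hshift k z)) hΨi
  obtain ⟨w, hw⟩ := exists_coeff_ne_zero hkz
  have hwi := mem_of_coeff_ne_zero (hΨi k z) hw
  have hwj := mem_of_coeff_ne_zero (hΨj k z) hw
  rw [hcoeff, coeff_component_of_eq hwi] at hw
  rcases lt_or_ge κ 0 with hκ | hκ
  · obtain ⟨rfl, hw0⟩ := eq_and_weight_single_eq_zero hκ hk hwi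
    have h0 : (Pi.single z 1 : Fin 2 → ℚ) z + k • κ = 0 := hwi.symm.trans hw0
    exact absurd (eq_smul_gen_pow_of_mem_degLE hij (hω j) (hshift k z) (h0 ▸ hle k z) hw)
      (hpow k hk _ hw _)
  rcases lt_or_ge ((δ - ω i * κ) / ω j) 0 with hl | hl
  · obtain ⟨rfl, hw0⟩ := eq_and_weight_single_eq_zero hl hk hwj
    refine ⟨k, hk, fun h => hw ?_⟩
    rw [eq_of_pow_length_of_weight_single_eq_zero hij hw0, ← coeff_single_abelianization, h,
      MvPolynomial.coeff_zero]
  · have hdeg := hΨ.natDegree_eq_zero_of_shift_nonneg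
      (κ := fun y => if y = i then κ else (δ - ω i * κ) / ω j)
      (fun y => by split_ifs <;> assumption) (fun y => by
        obtain rfl | rfl : y = i ∨ y = j := by lia
        · rwa [if_pos rfl]
        · rwa [if_neg hij.symm]) z
    exact absurd (coeff_eq_zero_of_natDegree_lt (by lia)) hkz

end SingleLetterWeights

section Characters

variable {K : Type*} [Field K]

lemma infinite_units [Infinite K] : Infinite Kˣ :=
  have : Infinite {a : K // a ≠ 0} := (Set.finite_singleton (0 : K)).infinite_compl.to_subtype
  .of_injective _ unitsEquivNeZero.symm.injective

lemma zpow_character_injective [Infinite K] :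
    Function.Injective fun n : ℤ => (Units.coeHom K).comp (zpowGroupHom (α := Kˣ) n) := by
  intro n m h
  by_contra hnm
  have hpow : ∀ t : Kˣ, t ^ (n - m).natAbs = 1 := fun t => by
    rw [pow_natAbs_eq_one, zpow_sub, mul_inv_eq_one]
    exact Units.ext (DFunLike.congr_fun h t)
  have : NeZero (n - m).natAbs := ⟨by lia⟩
  have : Finite Kˣ := .of_injective (fun t => (⟨t, hpow t⟩ : rootsOfUnity (n - m).natAbs K))
    fun s t hst => congrArg Subtype.val hst
  exact infinite_units.not_finite this

lemma mem_of_forall_sum_zpow_smul_mem [Infinite K] {M : Type*} [AddCommGroup M] [Module K M]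
    {V : Submodule K M} {f : ℤ →₀ M}
    (h : ∀ t : Kˣ, (f.sum fun n c => ((t ^ n : Kˣ) : K) • c) ∈ V) (n : ℤ) : f n ∈ V := by
  rw [← Submodule.Quotient.mk_eq_zero, ← Module.forall_dual_apply_eq_zero_iff K]
  intro φ
  have hli := (linearIndependent_monoidHom Kˣ K).comp _ (zpow_character_injective (K := K))
  rw [linearIndependent_iff] at hli
  refine DFunLike.congr_fun (hli (Finsupp.mapRange.linearMap (φ ∘ₗ V.mkQ) f) (funext fun t => ?_)) n
  have h0 : φ (V.mkQ (f.sum fun n c => ((t ^ n : Kˣ) : K) • c)) = 0 := by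
    rw [Submodule.mkQ_apply, (Submodule.Quotient.mk_eq_zero V).2 (h t), map_zero]
  rw [Finsupp.linearCombination_apply, Finsupp.mapRange.linearMap_apply,
    Finsupp.sum_mapRange_index (by simp), Finsupp.sum, Finset.sum_apply, Pi.zero_apply,
    ← h0, Finsupp.sum, map_sum, map_sum]
  exact Finset.sum_congr rfl fun m _ => by simp [mul_comm]

lemma mem_of_forall_sum_choose_nsmul_mem {M ι : Type*} [AddCommGroup M] {V : AddSubgroup M}
    {s : Finset ι} {e : ι → ℕ} (he : Set.InjOn e s) {f : ι → M}
    (h : ∀ k, ∑ i ∈ s, (e i).choose k • f i ∈ V) {i : ι} (hi : i ∈ s) : f i ∈ V := by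
  classical
  by_contra hfi
  obtain ⟨m, hm, hmax⟩ := (s.filter fun i => f i ∉ V).exists_max_image e
    ⟨i, Finset.mem_filter.2 ⟨hi, hfi⟩⟩
  obtain ⟨hms, hmV⟩ := Finset.mem_filter.1 hm
  have hsum := h (e m)
  rw [← Finset.add_sum_erase _ _ hms, Nat.choose_self, one_smul] at hsum
  refine hmV ((V.add_mem_cancel_right (sum_mem fun j hj => ?_)).1 hsum)
  obtain ⟨hjm, hjs⟩ := Finset.mem_erase.1 hj
  rcases lt_or_ge (e j) (e m) with hlt | hge
  · rw [Nat.choose_eq_zero_of_lt hlt, zero_smul]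
    exact zero_mem _
  · refine nsmul_mem (by_contra fun hjV => hjm (he hjs hms ?_)) _
    exact (hmax j (Finset.mem_filter.2 ⟨hjs, hjV⟩)).antisymm hge

lemma mem_of_forall_sum_choose_zsmul_mem {M : Type*} [AddCommGroup M] {V : AddSubgroup M}
    {f : ℤ →₀ M} (h : ∀ k : ℕ, (f.sum fun n c => Ring.choose n k • c) ∈ V) (n : ℤ) : f n ∈ V := by
  by_cases hn : f n = 0
  · exact hn ▸ zero_mem V
  let m := f.support.sup Int.natAbs
  have hm : ∀ n ∈ f.support, (((n + m).toNat : ℕ) : ℤ) = n + m := fun n hn => by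
    have := Finset.le_sup (f := Int.natAbs) hn
    lia
  refine mem_of_forall_sum_choose_nsmul_mem (s := f.support) (e := fun n => (n + m).toNat)
    (fun a ha b hb hab => by have := hm a ha; have := hm b hb; lia) (fun k => ?_)
    (Finsupp.mem_support_iff.2 hn)
  have hshift : ∑ n ∈ f.support, (n + m).toNat.choose k • f n =
      ∑ x ∈ Finset.HasAntidiagonal.antidiagonal k, (Ring.choose (m : ℤ) x.2) •
        f.sum fun n c => Ring.choose n x.1 • c := by
    simp only [Finsupp.sum, Finset.smul_sum]
    rw [Finset.sum_comm]
    refine Finset.sum_congr rfl fun n hn => ?_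
    rw [← natCast_zsmul, ← Ring.choose_natCast, hm n hn, Ring.add_choose_eq k (Commute.all _ _),
      Finset.sum_smul]
    exact Finset.sum_congr rfl fun x _ => by rw [smul_smul, mul_comm]
  rw [hshift]
  exact sum_mem fun x _ => zsmul_mem (h _) _

end Characters

section TorusActions

open Finset.HasAntidiagonal

variable {K A : Type*} [Field K] [Ring A] [Algebra K A] {σ : Kˣ →* (A ≃ₐ[K] A)}

/-- The elements on which the torus acts through its `n`-th character `t ↦ t ^ n`. -/
def charSpace (σ : Kˣ →* (A ≃ₐ[K] A)) (n : ℤ) : Submodule K A :=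
  ⨅ t, LinearMap.ker ((σ t).toLinearMap - ((t ^ n : Kˣ) : K) • LinearMap.id)

lemma mem_charSpace {n : ℤ} {P : A} :
    P ∈ charSpace σ n ↔ ∀ t, σ t P = ((t ^ n : Kˣ) : K) • P := by
  simp [charSpace, sub_eq_zero]

lemma one_mem_charSpace : (1 : A) ∈ charSpace σ 0 := mem_charSpace.2 fun t => by simp

lemma mul_mem_charSpace {m n : ℤ} {P Q : A} (hP : P ∈ charSpace σ m) (hQ : Q ∈ charSpace σ n) :
    P * Q ∈ charSpace σ (m + n) := mem_charSpace.2 fun t => by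
  rw [map_mul, mem_charSpace.1 hP, mem_charSpace.1 hQ, smul_mul_smul_comm, zpow_add, Units.val_mul]

/-- `D` splits every element into its components for the characters of the torus. -/
def IsCharDecomp (σ : Kˣ →* (A ≃ₐ[K] A)) (D : A →ₗ[K] (ℤ →₀ A)) : Prop :=
  ∀ t P, σ t P = (D P).sum fun n c => ((t ^ n : Kˣ) : K) • c

/-- Evaluation of Laurent polynomials at a unit of the base field. -/
noncomputable def laurentEval (A : Type*) [Ring A] [Algebra K A] (t : Kˣ) :
    AddMonoidAlgebra A ℤ →ₐ[K] A :=
  AddMonoidAlgebra.liftNCAlgHom (AlgHom.id K A)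
    (((algebraMap K A) : K →* A).comp ((Units.coeHom K).comp (zpowersHom Kˣ t)))
    fun _ _ => Algebra.commute_algebraMap_right _ _

lemma laurentEval_single (t : Kˣ) (n : ℤ) (c : A) :
    laurentEval A t (AddMonoidAlgebra.single n c) = ((t ^ n : Kˣ) : K) • c := by
  rw [Algebra.smul_def, Algebra.commutes]
  exact (AddMonoidAlgebra.liftNC_single _ _ _ _).trans (by simp)

lemma laurentEval_apply (t : Kˣ) (Q : AddMonoidAlgebra A ℤ) :
    laurentEval A t Q = Q.coeff.sum fun n c => ((t ^ n : Kˣ) : K) • c := by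
  induction Q using AddMonoidAlgebra.induction_linear with
  | zero => simp
  | add x y hx hy =>
    rw [map_add, hx, hy, AddMonoidAlgebra.coeff_add,
      Finsupp.sum_add_index' (fun _ => smul_zero _) fun _ => smul_add _]
  | single n c =>
    rw [laurentEval_single, AddMonoidAlgebra.coeff_single,
      Finsupp.sum_single_index (h := fun n c => ((t ^ n : Kˣ) : K) • c) (smul_zero _)]

lemma exists_isCharDecomp {α : Type*} (σ : Kˣ →* (NCPoly K α ≃ₐ[K] NCPoly K α))
    (hσ : ∀ i, ∃ a : ℤ →₀ NCPoly K α, ∀ t,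
      σ t (gen K i) = a.sum fun m c => ((t ^ m : Kˣ) : K) • c) :
    ∃ D, IsCharDecomp σ D := by
  choose a ha using hσ
  let Δ : NCPoly K α →ₐ[K] AddMonoidAlgebra (NCPoly K α) ℤ := subst fun i => .ofCoeff (a i)
  refine ⟨(AddMonoidAlgebra.coeffLinearEquiv K).toLinearMap ∘ₗ Δ.toLinearMap, fun t P => ?_⟩
  have hΔ : (σ t : NCPoly K α →ₐ[K] NCPoly K α) = (laurentEval _ t).comp Δ :=
    algHom_ext_gen fun i => by
      rw [AlgHom.comp_apply, laurentEval_apply, subst_gen]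
      exact ha i t
  exact (DFunLike.congr_fun hΔ P).trans (laurentEval_apply t (Δ P))

/-- The higher derivation obtained from a torus action by the substitution `t = 1 + u`. -/
noncomputable def torusDeriv (D : A →ₗ[K] (ℤ →₀ A)) (k : ℕ) : A →ₗ[K] A :=
  Finsupp.lsum ℕ (fun n : ℤ => (Ring.choose n k : ℤ) • LinearMap.id) ∘ₗ D

lemma torusDeriv_apply (D : A →ₗ[K] (ℤ →₀ A)) (k : ℕ) (P : A) :
    torusDeriv D k P = (D P).sum fun n c => (Ring.choose n k : ℤ) • c := by
  simp [torusDeriv, Finsupp.sum]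

variable {D : A →ₗ[K] (ℤ →₀ A)}

lemma IsCharDecomp.sum_eq (hD : IsCharDecomp σ D) (P : A) : ∑ n ∈ (D P).support, D P n = P := by
  simpa [Finsupp.sum] using (hD 1 P).symm

lemma IsCharDecomp.conj (hD : IsCharDecomp σ D) (β : A ≃ₐ[K] A) :
    IsCharDecomp ((MulAut.conj β⁻¹).toMonoidHom.comp σ)
      (Finsupp.mapRange.linearMap (β⁻¹ : A ≃ₐ[K] A).toLinearMap ∘ₗ D ∘ₗ β.toLinearMap) := by
  intro t P
  change β.symm (σ t (β P)) = _
  rw [hD, LinearMap.comp_apply, LinearMap.comp_apply, Finsupp.mapRange.linearMap_apply,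
    Finsupp.sum_mapRange_index fun _ => smul_zero _, Finsupp.sum, map_sum]
  exact Finset.sum_congr rfl fun n _ => map_smul _ _ _

variable [Infinite K]

lemma IsCharDecomp.apply_mem (hD : IsCharDecomp σ D) {V : Submodule K A} {P : A}
    (h : ∀ t, σ t P ∈ V) (n : ℤ) : D P n ∈ V :=
  mem_of_forall_sum_zpow_smul_mem (fun t => hD t P ▸ h t) n

lemma IsCharDecomp.torusDeriv_mem (hD : IsCharDecomp σ D) {V : Submodule K A} {P : A}
    (h : ∀ t, σ t P ∈ V) (k : ℕ) : torusDeriv D k P ∈ V := by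
  rw [torusDeriv_apply]
  exact sum_mem fun n _ => zsmul_mem (hD.apply_mem h n) _

lemma IsCharDecomp.apply_mem_charSpace (hD : IsCharDecomp σ D) (P : A) (n : ℤ) :
    D P n ∈ charSpace σ n := mem_charSpace.2 fun s => by
  let f : ℤ →₀ A := Finsupp.onFinset (D P).support
    (fun n => σ s (D P n) - ((s ^ n : Kˣ) : K) • D P n)
    (fun n h => Finsupp.mem_support_iff.2 fun h0 => h (by simp [h0]))
  have hf : f n ∈ (⊥ : Submodule K A) := mem_of_forall_sum_zpow_smul_mem (fun t => by
    have hst := hD (s * t) P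
    rw [map_mul, AlgEquiv.mul_apply, hD t P, Finsupp.sum, map_sum, Finsupp.sum,
      ← sub_eq_zero, ← Finset.sum_sub_distrib] at hst
    rw [Submodule.mem_bot, Finsupp.onFinset_sum _ fun _ => smul_zero _, ← hst]
    refine Finset.sum_congr rfl fun m _ => ?_
    rw [map_smul, mul_zpow, Units.val_mul, smul_sub, smul_smul, mul_comm]) n
  exact sub_eq_zero.1 hf

lemma IsCharDecomp.eq_single (hD : IsCharDecomp σ D) {P : A} {n : ℤ} (hP : P ∈ charSpace σ n) :
    D P = Finsupp.single n P := by
  rw [← sub_eq_zero]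
  ext1 m
  refine (Submodule.mem_bot K).1 (mem_of_forall_sum_zpow_smul_mem (fun t => ?_) m)
  rw [Finsupp.sum_sub_index fun _ _ _ => smul_sub _ _ _, ← hD,
    Finsupp.sum_single_index (h := fun x c => ((t ^ x : Kˣ) : K) • c) (smul_zero _),
    mem_charSpace.1 hP, sub_self]
  exact zero_mem _

lemma IsCharDecomp.torusDeriv_of_mem (hD : IsCharDecomp σ D) {P : A} {n : ℤ}
    (hP : P ∈ charSpace σ n) (k : ℕ) : torusDeriv D k P = (Ring.choose n k : ℤ) • P := by
  rw [torusDeriv_apply, hD.eq_single hP,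
    Finsupp.sum_single_index (h := fun x c => (Ring.choose x k : ℤ) • c) (smul_zero _)]

lemma IsCharDecomp.induction (hD : IsCharDecomp σ D) {p : A → Prop} (P : A) (zero : p 0)
    (add : ∀ P Q, p P → p Q → p (P + Q)) (mem : ∀ n, ∀ P ∈ charSpace σ n, p P) : p P := by
  rw [← hD.sum_eq P]
  exact Finset.sum_induction _ p add zero fun n _ => mem n _ (hD.apply_mem_charSpace P n)

lemma IsCharDecomp.isHasseSchmidt (hD : IsCharDecomp σ D) : IsHasseSchmidt (torusDeriv D) where
  zero P := by
    simpa [torusDeriv_apply, Finsupp.sum] using hD.sum_eq P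
  one k hk := by
    rw [hD.torusDeriv_of_mem one_mem_charSpace, Ring.choose_zero_ite, if_neg hk, zero_smul]
  mul k P Q := by
    induction P using hD.induction with
    | zero => simp
    | add P P' h h' => simp [add_mul, h, h', Finset.sum_add_distrib]
    | mem m P hP =>
    induction Q using hD.induction with
    | zero => simp
    | add Q Q' h h' => simp [mul_add, h, h', Finset.sum_add_distrib]
    | mem n Q hQ =>
      rw [hD.torusDeriv_of_mem (mul_mem_charSpace hP hQ), Ring.add_choose_eq k (Commute.all _ _),
        Finset.sum_smul]
      refine Finset.sum_congr rfl fun x _ => ?_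
      rw [hD.torusDeriv_of_mem hP, hD.torusDeriv_of_mem hQ, smul_mul_smul_comm]

lemma choose_mul_choose (n : ℤ) (j k : ℕ) :
    Ring.choose n k * Ring.choose n j =
      ∑ x ∈ antidiagonal j, (k.choose x.2 * (k + x.1).choose k : ℕ) • Ring.choose n (k + x.1) := by
  have hvand := Ring.add_choose_eq j (Commute.all (n - k) (k : ℤ))
  rw [sub_add_cancel] at hvand
  rw [hvand, Finset.mul_sum]
  refine Finset.sum_congr rfl fun x _ => ?_
  have habs := Ring.choose_smul_choose n (Nat.le_add_right k x.1)
  rw [Nat.add_sub_cancel_left, nsmul_eq_mul] at habs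
  rw [Ring.choose_natCast, ← mul_assoc, ← habs, nsmul_eq_mul]
  push_cast
  ring

lemma IsCharDecomp.torusDeriv_torusDeriv (hD : IsCharDecomp σ D) (j k : ℕ) (P : A) :
    torusDeriv D j (torusDeriv D k P) =
      ∑ x ∈ antidiagonal j, (k.choose x.2 * (k + x.1).choose k) • torusDeriv D (k + x.1) P := by
  induction P using hD.induction with
  | zero => simp
  | add P P' h h' => simp [h, h', Finset.sum_add_distrib]
  | mem n P hP =>
    rw [hD.torusDeriv_of_mem hP, map_zsmul, hD.torusDeriv_of_mem hP, smul_smul, choose_mul_choose,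
      Finset.sum_smul]
    exact Finset.sum_congr rfl fun x _ => by rw [hD.torusDeriv_of_mem hP, smul_assoc]

end TorusActions

section TotalDegree

variable {K α : Type*}

/-- The length of the longest word occurring in a noncommutative polynomial. -/
noncomputable def totalDegree [CommSemiring K] (P : NCPoly K α) : ℕ :=
  P.coeff.support.sup FreeMonoid.length

lemma totalDegree_le_iff [CommSemiring K] {P : NCPoly K α} {n : ℕ} :
    totalDegree P ≤ n ↔ P ∈ degLE K (fun _ => 1) n := by
  rw [totalDegree, Finset.sup_le_iff]
  refine forall_congr' fun w => ?_
  rw [Set.mem_ofPred_eq, weight_const_one, Nat.cast_id]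
  rfl

lemma mem_degLE_totalDegree [CommSemiring K] (P : NCPoly K α) :
    P ∈ degLE K (fun _ => 1) (totalDegree P) := totalDegree_le_iff.1 le_rfl

lemma component_totalDegree_ne_zero [CommSemiring K] {P : NCPoly K α} (hP : P ≠ 0) :
    component K (fun _ => 1) (totalDegree P) P ≠ 0 := by
  obtain ⟨v, hv⟩ := exists_coeff_ne_zero hP
  obtain ⟨w, hw, hlen⟩ := Finset.exists_mem_eq_sup P.coeff.support
    ⟨v, Finsupp.mem_support_iff.2 hv⟩ FreeMonoid.length
  have hcoeff := coeff_component_of_eq (P := P) (w := w) (ω := fun _ => 1) (d := totalDegree P)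
    (by rw [weight_const_one, totalDegree, hlen, Nat.cast_id])
  intro h
  rw [h] at hcoeff
  exact Finsupp.mem_support_iff.1 hw hcoeff.symm

lemma totalDegree_add_le [CommSemiring K] (P Q : NCPoly K α) :
    totalDegree (P + Q) ≤ max (totalDegree P) (totalDegree Q) :=
  totalDegree_le_iff.2 <| add_mem (totalDegree_le_iff.1 (le_max_left _ _))
    (totalDegree_le_iff.1 (le_max_right _ _))

lemma totalDegree_smul_le [CommSemiring K] (c : K) (P : NCPoly K α) :
    totalDegree (c • P) ≤ totalDegree P :=
  totalDegree_le_iff.2 (Submodule.smul_mem _ _ (mem_degLE_totalDegree P))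

lemma exists_eq_smul_one_of_totalDegree_eq_zero [CommSemiring K] {P : NCPoly K α}
    (hP : totalDegree P = 0) : ∃ c : K, P = c • 1 := by
  have hmem : P ∈ supported K K {1} := by
    refine supported_mono (fun w hw => ?_) (hP ▸ mem_degLE_totalDegree P)
    rw [Set.mem_ofPred_eq, weight_const_one] at hw
    exact FreeMonoid.length_eq_zero.1 (Nat.le_zero.1 hw)
  rw [supported_eq_span_mon, Set.image_singleton, Submodule.mem_span_singleton, mon_one] at hmem
  obtain ⟨c, hc⟩ := hmem
  exact ⟨c, hc.symm⟩

variable [CommRing K]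

lemma totalDegree_mul_le (P Q : NCPoly K α) :
    totalDegree (P * Q) ≤ totalDegree P + totalDegree Q :=
  totalDegree_le_iff.2 (mul_mem_degLE (mem_degLE_totalDegree P) (mem_degLE_totalDegree Q))

variable [IsDomain K]

lemma totalDegree_mul {P Q : NCPoly K α} (hP : P ≠ 0) (hQ : Q ≠ 0) :
    totalDegree (P * Q) = totalDegree P + totalDegree Q := by
  refine (totalDegree_mul_le P Q).antisymm (not_lt.1 fun hlt => ?_)
  have hmul := component_mul (mem_degLE_totalDegree P) (mem_degLE_totalDegree Q)
  rw [component_of_mem_degLT (degLE_le_degLT hlt (mem_degLE_totalDegree _))] at hmul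
  exact mul_ne_zero (component_totalDegree_ne_zero hP) (component_totalDegree_ne_zero hQ)
    hmul.symm

lemma totalDegree_pow (P : NCPoly K α) (q : ℕ) : totalDegree (P ^ q) = q * totalDegree P := by
  have hone : totalDegree (1 : NCPoly K α) = 0 :=
    Nat.le_zero.1 (totalDegree_le_iff.2 (homog_le_degLE one_mem_homog))
  rcases eq_or_ne P 0 with rfl | hP
  · rcases eq_or_ne q 0 with rfl | hq
    · simp [hone]
    · simp [zero_pow hq, totalDegree]
  · induction q with
    | zero => simp [hone]
    | succ q ih => rw [pow_succ, totalDegree_mul (pow_ne_zero _ hP) hP, ih, add_one_mul]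

end TotalDegree

section InvariantDegree

variable {K A G : Type*} [Field K] [Ring A] [Algebra K A] [Group G]

/-- A degree function on `A`, with values in `ℕ` and vanishing only on the constants, that is
invariant under the action `σ`. Since `σ` is a group action, one inequality suffices. -/
structure IsInvariantDegree (σ : G →* (A ≃ₐ[K] A)) (W : A → ℕ) : Prop where
  add_le : ∀ P Q, W (P + Q) ≤ max (W P) (W Q)
  smul_le : ∀ (c : K) P, W (c • P) ≤ W P
  mul_le : ∀ P Q, W (P * Q) ≤ W P + W Q
  pow : ∀ P q, W (P ^ q) = q * W P
  map_le : ∀ t P, W (σ t P) ≤ W P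
  eq_smul_one : ∀ P, W P = 0 → ∃ c : K, P = c • 1

namespace IsInvariantDegree

variable {σ : G →* (A ≃ₐ[K] A)} {W : A → ℕ}

lemma one (hW : IsInvariantDegree σ W) : W 1 = 0 := by simpa using hW.pow 1 0

lemma zero (hW : IsInvariantDegree σ W) : W 0 = 0 := by
  simpa [hW.one] using hW.smul_le 0 1

lemma conj (hW : IsInvariantDegree σ W) (β : A ≃ₐ[K] A) :
    IsInvariantDegree ((MulAut.conj β⁻¹).toMonoidHom.comp σ) fun P => W (β P) where
  add_le P Q := by simp only [map_add, hW.add_le]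
  smul_le c P := by simp only [map_smul, hW.smul_le]
  mul_le P Q := by simp only [map_mul, hW.mul_le]
  pow P q := by simp only [map_pow, hW.pow]
  map_le t P := by
    change W (β (β.symm (σ t (β P)))) ≤ _
    rw [AlgEquiv.apply_symm_apply]
    exact hW.map_le _ _
  eq_smul_one P hP := by
    obtain ⟨c, hc⟩ := hW.eq_smul_one _ hP
    exact ⟨c, β.injective (by rw [hc, map_smul, map_one])⟩

/-- The elements whose degree lies in an initial segment `S` of `ℕ`. -/
def sublevel (hW : IsInvariantDegree σ W) (S : LowerSet ℕ) (hS : 0 ∈ S) : Submodule K A where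
  carrier := {P | W P ∈ S}
  zero_mem' := by simpa only [Set.mem_ofPred_eq, hW.zero] using hS
  add_mem' {P Q} hP hQ := S.lower (hW.add_le P Q) (by
    rcases max_choice (W P) (W Q) with h | h <;> rw [h] <;> assumption)
  smul_mem' c P hP := S.lower (hW.smul_le c P) hP

lemma smul_eq (hW : IsInvariantDegree σ W) {c : K} (hc : c ≠ 0) (P : A) : W (c • P) = W P := by
  refine le_antisymm (hW.smul_le c P) ?_
  simpa [smul_smul, hc] using hW.smul_le c⁻¹ (c • P)

lemma sub_le (hW : IsInvariantDegree σ W) (P Q : A) : W (P - Q) ≤ max (W P) (W Q) := by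
  rw [sub_eq_add_neg, ← neg_one_smul K Q, ← hW.smul_eq (neg_ne_zero.2 one_ne_zero) Q]
  exact hW.add_le P _

end IsInvariantDegree

/-- The action has bounded orbits for the length degree, so the largest length degree attained on
an orbit is an invariant degree. -/
lemma exists_isInvariantDegree {α : Type*} {σ : G →* (NCPoly K α ≃ₐ[K] NCPoly K α)}
    (hσ : ∀ P, BddAbove (Set.range fun t => totalDegree (σ t P))) :
    ∃ W, IsInvariantDegree σ W := by
  have hle : ∀ t P, totalDegree (σ t P) ≤ ⨆ t, totalDegree (σ t P) := fun t P => le_ciSup (hσ P) t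
  refine ⟨fun P => ⨆ t, totalDegree (σ t P), ?_, ?_, ?_, ?_, ?_, ?_⟩
  · refine fun P Q => ciSup_le fun t => ?_
    rw [map_add]
    exact (totalDegree_add_le _ _).trans (max_le_max (hle t P) (hle t Q))
  · refine fun c P => ciSup_le fun t => ?_
    rw [map_smul]
    exact (totalDegree_smul_le _ _).trans (hle t P)
  · refine fun P Q => ciSup_le fun t => ?_
    rw [map_mul]
    exact (totalDegree_mul_le _ _).trans (add_le_add (hle t P) (hle t Q))
  · intro P q
    apply le_antisymm
    · refine ciSup_le fun t => ?_
      rw [map_pow, totalDegree_pow]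
      exact Nat.mul_le_mul_left _ (hle t P)
    · obtain ⟨t, ht⟩ : ∃ t, totalDegree (σ t P) = ⨆ t, totalDegree (σ t P) :=
        Nat.sSup_mem (Set.range_nonempty _) (hσ P)
      rw [← ht, ← totalDegree_pow, ← map_pow]
      exact hle t (P ^ q)
  · refine fun t P => ciSup_le fun s => ?_
    rw [← AlgEquiv.mul_apply, ← map_mul]
    exact hle _ P
  · refine fun P hP => exists_eq_smul_one_of_totalDegree_eq_zero (Nat.le_zero.1 ?_)
    simpa [hP] using hle 1 P

namespace IsInvariantDegree

variable {α : Type*} {σ : G →* (NCPoly K α ≃ₐ[K] NCPoly K α)} {W : NCPoly K α → ℕ}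

lemma gen_pos (hW : IsInvariantDegree σ W) (i : α) : 0 < W (gen K i) := by
  refine Nat.pos_of_ne_zero fun h => ?_
  obtain ⟨c, hc⟩ := hW.eq_smul_one _ h
  have hconst : gen K i ∈ homog K (fun _ => (1 : ℕ)) 0 :=
    hc ▸ Submodule.smul_mem _ _ one_mem_homog
  exact zero_ne_one (eq_of_mem_homog (gen_ne_zero i) hconst (gen_mem_homog i))

lemma mon_le (hW : IsInvariantDegree σ W) (w : FreeMonoid α) :
    (W (mon K w) : ℚ) ≤ weight (fun i => (W (gen K i) : ℚ)) w := by
  induction w using FreeMonoid.inductionOn' with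
  | one => simp [hW.one]
  | of_mul i w ih =>
    rw [mon_of_mul, weight_mul, weight_of]
    calc (W (gen K i * mon K w) : ℚ) ≤ W (gen K i) + W (mon K w) := mod_cast hW.mul_le _ _
      _ ≤ _ := by gcongr

lemma lt_of_mem_degLT (hW : IsInvariantDegree σ W) {d : ℚ} (hd : 0 < d) {P : NCPoly K α}
    (hP : P ∈ degLT K (fun i => (W (gen K i) : ℚ)) d) : (W P : ℚ) < d := by
  have hsub : degLT K (fun i => (W (gen K i) : ℚ)) d ≤
      hW.sublevel ⟨{n : ℕ | (n : ℚ) < d}, fun m n hnm (hm : (m : ℚ) < d) =>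
        (Nat.cast_le.2 hnm).trans_lt hm⟩ (show ((0 : ℕ) : ℚ) < d by simpa using hd) :=
    supported_le fun w hw => (hW.mon_le w).trans_lt hw
  exact hsub hP

lemma le_of_mem_degLE (hW : IsInvariantDegree σ W) {d : ℕ} {P : NCPoly K α}
    (hP : P ∈ degLE K (fun i => (W (gen K i) : ℚ)) d) : W P ≤ d := by
  have hlt := hW.lt_of_mem_degLT (d := d + 1) (by positivity) (degLE_le_degLT (by linarith) hP)
  exact Nat.lt_succ_iff.1 (by exact_mod_cast hlt)

end IsInvariantDegree

end InvariantDegree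

section LeadingDerivation

open Polynomial

variable {K α : Type*}

lemma exists_mem_degLE {Γ : Type*} [CommSemiring K] [AddCommMonoid Γ] [LinearOrder Γ] (ω : α → Γ)
    (P : NCPoly K α) : ∃ B, P ∈ degLE K ω B := by
  obtain ⟨B, hB⟩ := Finset.exists_le (P.coeff.support.image (weight ω))
  exact ⟨B, fun w hw => hB _ (Finset.mem_image_of_mem _ hw)⟩

lemma exists_torusDeriv_mem_degLE {Γ : Type*} [Field K] [AddCommMonoid Γ] [LinearOrder Γ]
    (D : NCPoly K α →ₗ[K] (ℤ →₀ NCPoly K α)) (ω : α → Γ) (P : NCPoly K α) :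
    ∃ B, ∀ k, torusDeriv D k P ∈ degLE K ω B := by
  choose b hb using exists_mem_degLE (K := K) ω
  obtain ⟨B, hB⟩ := Finset.exists_le ((D P).support.image fun n => b (D P n))
  refine ⟨B, fun k => ?_⟩
  rw [torusDeriv_apply]
  exact sum_mem fun n hn =>
    zsmul_mem (degLE_mono (hB _ (Finset.mem_image_of_mem _ hn)) (hb _)) _

lemma IsCharDecomp.bddAbove_totalDegree [Field K]
    {σ : Kˣ →* (NCPoly K α ≃ₐ[K] NCPoly K α)} {D : NCPoly K α →ₗ[K] (ℤ →₀ NCPoly K α)}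
    (hD : IsCharDecomp σ D) (P : NCPoly K α) :
    BddAbove (Set.range fun t => totalDegree (σ t P)) := by
  refine ⟨(D P).support.sup fun n => totalDegree (D P n), ?_⟩
  rintro _ ⟨t, rfl⟩
  beta_reduce
  rw [hD t P, totalDegree_le_iff]
  exact sum_mem fun n hn => Submodule.smul_mem _ _ <|
    totalDegree_le_iff.1 (Finset.le_sup (f := fun n => totalDegree (D P n)) hn)

lemma exists_pos_slope [CommRing K] [Finite α] {E : ℕ → α → NCPoly K α} {ω : α → ℚ} {B : ℚ}
    (hzero : ∀ i, E 0 i ∈ degLE K ω (ω i)) (hB : ∀ k i, E k i ∈ degLE K ω B)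
    (hE : ∃ k i, E k i ∉ degLE K ω (ω i)) :
    ∃ δ > 0, (∀ k i, E k i ∈ degLE K ω (ω i + k • δ)) ∧
      (∃ N, ∀ k, N ≤ k → ∀ i, component K ω (ω i + k • δ) (E k i) = 0) ∧
      ∃ k ≠ 0, ∃ i, component K ω (ω i + k • δ) (E k i) ≠ 0 := by
  obtain ⟨k₁, i₁, h₁⟩ := hE
  obtain ⟨w, hw, hlt⟩ := Set.not_subset.1 h₁
  rw [Set.mem_ofPred_eq, not_le] at hlt
  have hk₁ : k₁ ≠ 0 := fun h => h₁ (h ▸ hzero i₁)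
  have hk₁' : (0 : ℚ) < k₁ := by positivity
  set r : ℚ := (weight ω w - ω i₁) / k₁ with hr
  have hr_pos : 0 < r := div_pos (sub_pos.2 hlt) hk₁'
  obtain ⟨M, hM⟩ := Finite.exists_le fun i => B - ω i
  obtain ⟨N₀, hN₀⟩ := exists_nat_gt (M / r)
  rw [div_lt_iff₀ hr_pos] at hN₀
  obtain ⟨δ, hle, k₀, hk₀, i₀, h₀⟩ := exists_slope (E := E) (s := Finset.Icc 1 (max N₀ k₁))
    (by simp) ⟨k₁, by simp; lia, i₁, fun h => h₁ (h ▸ zero_mem _)⟩ ω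
  have hrδ : r ≤ δ := by
    have hwle : weight ω w ≤ ω i₁ + k₁ • δ := hle k₁ (by simp; lia) i₁ hw
    rw [nsmul_eq_mul] at hwle
    rw [hr, div_le_iff₀ hk₁']
    linarith
  have hbig : ∀ k, max N₀ k₁ ≤ k → ∀ i, E k i ∈ degLT K ω (ω i + k • δ) := by
    refine fun k hk i => degLE_le_degLT ?_ (hB k i)
    have hNk : (N₀ : ℚ) ≤ k := mod_cast (le_max_left _ _).trans hk
    have hmul : (N₀ : ℚ) * r ≤ k * δ := mul_le_mul hNk hrδ hr_pos.le (by positivity)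
    rw [nsmul_eq_mul]
    linarith [hM i]
  refine ⟨δ, hr_pos.trans_le hrδ, fun k i => ?_,
    ⟨max N₀ k₁, fun k hk i => component_of_mem_degLT (hbig k hk i)⟩,
    k₀, Nat.one_le_iff_ne_zero.1 (Finset.mem_Icc.1 hk₀).1, i₀, h₀⟩
  rcases eq_or_ne k 0 with rfl | hk
  · simpa using hzero i
  · rcases le_total k (max N₀ k₁) with h | h
    · exact hle k (Finset.mem_Icc.2 ⟨Nat.one_le_iff_ne_zero.2 hk, h⟩) i
    · exact degLT_le_degLE (hbig k h i)

variable [Field K] {σ : Kˣ →* (NCPoly K α ≃ₐ[K] NCPoly K α)}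
  {D : NCPoly K α →ₗ[K] (ℤ →₀ NCPoly K α)} [Infinite K]

/-- Modulo terms of lower weight, the relation `torusDeriv_torusDeriv` for the multiplicative group
becomes the iteration rule for the additive group. -/
lemma IsCharDecomp.component_torusDeriv_torusDeriv (hD : IsCharDecomp σ D) {ω : α → ℚ} {δ : ℚ}
    (hδ : 0 < δ) (hle : ∀ k i, torusDeriv D k (gen K i) ∈ degLE K ω (ω i + k • δ))
    (w : FreeMonoid α) (j k : ℕ) :
    component K ω (weight ω w + (j + k) • δ) (torusDeriv D j (torusDeriv D k (mon K w))) =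
      (j + k).choose j •
        component K ω (weight ω w + (j + k) • δ) (torusDeriv D (j + k) (mon K w)) := by
  rw [hD.torusDeriv_torusDeriv, map_sum, Finset.sum_eq_single (j, 0)]
  · rw [map_nsmul, Nat.choose_zero_right, one_mul, add_comm k j, Nat.choose_symm_add]
  · intro x hx hne
    rw [Finset.HasAntidiagonal.mem_antidiagonal] at hx
    have hlt : k + x.1 < j + k := by
      have : x.1 ≠ j := fun h => hne (Prod.ext h (by lia))
      lia
    rw [map_nsmul, component_of_mem_degLT, smul_zero]
    exact degLE_le_degLT (add_lt_add_right (nsmul_lt_nsmul_left hδ hlt) _)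
      (hD.isHasseSchmidt.mon_mem_degLE hle w (k + x.1))
  · simp

theorem IsCharDecomp.exists_leading [Finite α] (hD : IsCharDecomp σ D) {ω : α → ℚ}
    (hω : ∃ k i, torusDeriv D k (gen K i) ∉ degLE K ω (ω i)) :
    ∃ δ > 0, ∃ Φ : NCPoly K α →ₐ[K] (NCPoly K α)[X], IsLFIHD Φ ∧ IsNontrivial Φ ∧
      ∀ d, ∀ P ∈ homog K ω d, ∀ k, torusDeriv D k P ∈ degLE K ω (d + k • δ) ∧
        (Φ P).coeff k = component K ω (d + k • δ) (torusDeriv D k P) := by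
  have hHS := hD.isHasseSchmidt
  choose b hb using fun i => exists_torusDeriv_mem_degLE D ω (gen K i)
  obtain ⟨B, hB⟩ := Finite.exists_le b
  obtain ⟨δ, hδ, hle, ⟨N, hfin⟩, k₀, hk₀, i₀, h₀⟩ :=
    exists_pos_slope (E := fun k i => torusDeriv D k (gen K i))
      (fun i => (hHS.zero (gen K i)).symm ▸ homog_le_degLE (gen_mem_homog i))
      (fun k i => degLE_mono (hB i) (hb i k)) hω
  refine ⟨δ, hδ, leadingHom ω δ (torusDeriv D) N,
    hHS.isLFIHD_leadingHom hle hfin (hD.component_torusDeriv_torusDeriv hδ hle),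
    ⟨k₀, hk₀, i₀, (coeff_leadingHom_gen hfin i₀ k₀).symm ▸ h₀⟩, fun d P hP k =>
    ⟨hHS.mem_degLE hle (homog_le_degLE hP) k, hHS.coeff_leadingHom hle hfin hP k⟩⟩

/-- The leading part has higher weight than `d = W z`, which bounds `W (torusDeriv D k z)`; this
forces it to lower `W`, which a power of an element with `W z' = d'` cannot do. -/
lemma IsInvariantDegree.component_torusDeriv_ne {W : NCPoly K α → ℕ} (hW : IsInvariantDegree σ W)
    (hD : IsCharDecomp σ D) {d d' : ℕ} {δ : ℚ} (hδ : 0 < δ) {z z' : NCPoly K α} {k : ℕ} (hk : k ≠ 0)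
    (hz : torusDeriv D k z ∈ degLE K (fun i => (W (gen K i) : ℚ)) (d + k • δ)) (hWz : W z = d)
    (hz' : z' ∈ homog K (fun i => (W (gen K i) : ℚ)) d') (hz'_ne : z' ≠ 0) (hWz' : W z' = d')
    {c : K} (hc : c ≠ 0) (q : ℕ) :
    component K (fun i => (W (gen K i) : ℚ)) (d + k • δ) (torusDeriv D k z) ≠ c • z' ^ q := by
  intro h
  have hpos : 0 < k • δ := nsmul_pos hδ hk
  have hweight : q • (d' : ℚ) = d + k • δ :=
    eq_of_mem_homog (smul_ne_zero hc (pow_ne_zero q hz'_ne))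
      (Submodule.smul_mem _ _ (pow_mem_homog hz' q)) (h ▸ component_mem _ _ _)
  have hlow := hW.lt_of_mem_degLT (by positivity) (sub_component_mem_degLT hz)
  have hup : W (torusDeriv D k z) ≤ d := hD.torusDeriv_mem
    (V := hW.sublevel (LowerSet.Iic d) (Nat.zero_le d)) (fun t => hWz ▸ hW.map_le t z) k
  have hpow : W (c • z' ^ q) = q * d' := by rw [hW.smul_eq hc, hW.pow, hWz']
  have hmax := hW.sub_le (torusDeriv D k z) (torusDeriv D k z - c • z' ^ q)
  rw [sub_sub_cancel, hpow, le_max_iff] at hmax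
  rw [h] at hlow
  rcases hmax with hmax | hmax
  · have : ((q * d' : ℕ) : ℚ) ≤ d := mod_cast hmax.trans hup
    push_cast at this
    rw [nsmul_eq_mul] at hweight
    linarith
  · have : ((q * d' : ℕ) : ℚ) ≤ W (torusDeriv D k z - c • z' ^ q) := mod_cast hmax
    push_cast at this
    rw [nsmul_eq_mul] at hweight
    linarith

end LeadingDerivation

section Factorization

lemma exists_dvd_not_dvd_choose {p : ℕ} (hp : p.Prime) (m : ℕ) : 0 < m → ∀ n, 0 < n →
    ∃ q ≠ 0, q ∣ m ∧ q ∣ n ∧ (¬p ∣ m.choose q ∨ ¬p ∣ n.choose q) := by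
  induction m using Nat.strong_induction_on with | _ m ih => ?_
  intro hm n hn
  by_cases hmp : p ∣ m
  swap
  · exact ⟨1, one_ne_zero, one_dvd _, one_dvd _, .inl (by simpa using hmp)⟩
  by_cases hnp : p ∣ n
  swap
  · exact ⟨1, one_ne_zero, one_dvd _, one_dvd _, .inr (by simpa using hnp)⟩
  obtain ⟨m', rfl⟩ := hmp
  obtain ⟨n', rfl⟩ := hnp
  have hm' : 0 < m' := Nat.pos_of_mul_pos_left hm
  have hn' : 0 < n' := Nat.pos_of_mul_pos_left hn
  obtain ⟨q, hq, hqm, hqn, hdvd⟩ := ih m' (lt_mul_left hm' hp.one_lt) hm' n' hn'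
  have := Fact.mk hp
  have lucas (r : ℕ) : p ∣ (p * r).choose (p * q) ↔ p ∣ r.choose q := by
    have h := Choose.choose_modEq_choose_mod_mul_choose_div_nat (p := p) (n := p * r) (k := p * q)
    rw [Nat.mul_mod_right, Nat.mul_mod_right, Nat.mul_div_cancel_left _ hp.pos,
      Nat.mul_div_cancel_left _ hp.pos, Nat.choose_self, one_mul] at h
    exact h.dvd_iff dvd_rfl
  exact ⟨p * q, mul_ne_zero hp.ne_zero hq, Nat.mul_dvd_mul_left _ hqm,
    Nat.mul_dvd_mul_left _ hqn, by rwa [lucas, lucas]⟩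

lemma exists_dvd_natCast_choose_ne_zero (K : Type*) [CommRing K] [IsDomain K] {m n : ℕ}
    (hm : 0 < m) (hn : 0 < n) :
    ∃ q ≠ 0, q ∣ m ∧ q ∣ n ∧ ((m.choose q : K) ≠ 0 ∨ (n.choose q : K) ≠ 0) := by
  obtain ⟨p, hp⟩ := CharP.exists K
  rcases CharP.char_is_prime_or_zero K p with hprime | rfl
  · simpa only [ne_eq, CharP.cast_eq_zero_iff K p] using
      exists_dvd_not_dvd_choose hprime m hm n hn
  · have := CharP.charP_to_charZero K
    exact ⟨1, one_ne_zero, one_dvd _, one_dvd _, .inl (by simpa using hm.ne')⟩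

lemma exists_eq_add_mul_of_mul_add_mul_eq {a b : ℕ} (ha : a ≠ 0)
    (hab : a.Coprime b) {x y x' y' : ℕ} (h : x * b + y * a = x' * b + y' * a) (hx : x' ≤ x) :
    ∃ k, x = x' + a * k ∧ y' = y + b * k := by
  obtain ⟨s, rfl⟩ := Nat.exists_eq_add_of_le hx
  have hs : s * b + y * a = y' * a := by linarith
  obtain ⟨k, rfl⟩ : a ∣ s := hab.dvd_of_dvd_mul_right
    ((Nat.dvd_add_left (Dvd.intro_left y rfl)).1 (hs ▸ Dvd.intro_left y' rfl))
  refine ⟨k, rfl, Nat.eq_of_mul_eq_mul_right (Nat.pos_of_ne_zero ha) ?_⟩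
  rw [← hs]
  ring

open MvPolynomial

variable {K : Type*}

section CommRing

variable [CommRing K]

/-- The binomial `x ^ a - c * y ^ b` in two variables. -/
noncomputable def binomial (a b : ℕ) (c : K) : MvPolynomial (Fin 2) K :=
  X 0 ^ a - C c * X 1 ^ b

lemma binomial_ne_zero [Nontrivial K] {b : ℕ} (a : ℕ) (hb : b ≠ 0) (c : K) :
    binomial a b c ≠ 0 := by
  intro h
  simpa [binomial, hb] using congrArg (eval ![1, 0]) h

lemma binomial_eq_binomial_add (a b : ℕ) (c c' : K) :
    binomial a b c' = binomial a b c + C (c - c') * X 1 ^ b := by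
  simp only [binomial, C_sub]
  ring

/-- The form of degree `N` in `x ^ a` and `y ^ b` which is the homogenization of `f`. -/
noncomputable def homogenizePow (a b N : ℕ) (f : Polynomial K) : MvPolynomial (Fin 2) K :=
  aeval ![X 0 ^ a, X 1 ^ b] (f.homogenize N)

lemma homogenizePow_monomial (a b : ℕ) {k N : ℕ} (hk : k ≤ N) (c : K) :
    homogenizePow a b N (Polynomial.monomial k c) =
      C c * (X 0 ^ (a * k) * X 1 ^ (b * (N - k))) := by
  rw [homogenizePow, Polynomial.homogenize_monomial hk, aeval_monomial,
    Finsupp.prod_fintype _ _ (by simp)]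
  simp [algebraMap_eq, pow_mul]

lemma homogenizePow_sum (a b N : ℕ) {ι : Type*} (s : Finset ι) (f : ι → Polynomial K) :
    homogenizePow a b N (∑ i ∈ s, f i) = ∑ i ∈ s, homogenizePow a b N (f i) := by
  simp only [homogenizePow, Polynomial.homogenize_finsetSum, map_sum]

lemma homogenizePow_succ (a b : ℕ) {N : ℕ} {f : Polynomial K} (hf : f.natDegree ≤ N) :
    homogenizePow a b (N + 1) f = homogenizePow a b N f * X 1 ^ b := by
  have h := Polynomial.homogenize_mul f 1 hf (n := 1) (by simp)
  rw [mul_one, Polynomial.homogenize_one] at h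
  rw [homogenizePow, homogenizePow, h, map_mul]
  simp

lemma homogenizePow_X_sub_C_mul (a b : ℕ) {N : ℕ} {f : Polynomial K} (hf : f.natDegree ≤ N)
    (c : K) :
    homogenizePow a b (N + 1) ((Polynomial.X - Polynomial.C c) * f) =
      binomial a b c * homogenizePow a b N f := by
  rw [homogenizePow, add_comm N, Polynomial.homogenize_mul _ _
    (Polynomial.natDegree_X_sub_C_le c) hf, map_mul, Polynomial.homogenize_sub,
    Polynomial.homogenize_X one_ne_zero, Polynomial.homogenize_C]
  simp [homogenizePow, binomial, algebraMap_eq]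

lemma exists_eq_mul_homogenizePow {a b : ℕ} (ha : a ≠ 0) (hb : b ≠ 0)
    (hab : a.Coprime b) {P : MvPolynomial (Fin 2) K} (hP0 : P ≠ 0) {d : ℕ}
    (hP : IsWeightedHomogeneous ![b, a] P d) :
    ∃ (i j N : ℕ) (f : Polynomial K), f.natDegree ≤ N ∧
      P = X 0 ^ i * X 1 ^ j * homogenizePow a b N f := by
  obtain ⟨u, hu, hu_min⟩ := P.support.exists_min_image (· 0) (by simpa using hP0)
  obtain ⟨v, hv, hv_min⟩ := P.support.exists_min_image (· 1) (by simpa using hP0)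
  have hweight : ∀ e ∈ P.support, e 0 * b + e 1 * a = d := fun e he => by
    simpa [Finsupp.weight_apply, Finsupp.sum_fintype] using hP (mem_support_iff.1 he)
  have hexp : ∀ e ∈ P.support, ∃ k, e 0 = u 0 + a * k ∧ u 1 = e 1 + b * k := fun e he =>
    exists_eq_add_mul_of_mul_add_mul_eq ha hab ((hweight e he).trans (hweight u hu).symm)
      (hu_min e he)
  choose! k hk0 hk1 using hexp
  have hk_le : ∀ e ∈ P.support, k e ≤ k v := fun e he => by
    have := hk1 e he
    have := hk1 v hv
    have := hv_min e he
    exact Nat.le_of_mul_le_mul_left (by omega) (Nat.pos_of_ne_zero hb)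
  refine ⟨u 0, v 1, k v, ∑ e ∈ P.support, Polynomial.monomial (k e) (coeff e P),
    Polynomial.natDegree_sum_le_of_forall_le _ _ fun e he =>
      (Polynomial.natDegree_monomial_le _).trans (hk_le e he), ?_⟩
  rw [homogenizePow_sum, Finset.mul_sum]
  conv_lhs => rw [P.as_sum]
  refine Finset.sum_congr rfl fun e he => ?_
  have he1 : e 1 = v 1 + b * (k v - k e) := by
    have := hk1 e he
    have := hk1 v hv
    have := Nat.mul_le_mul_left b (hk_le e he)
    rw [Nat.mul_sub]
    omega
  rw [homogenizePow_monomial a b (hk_le e he), monomial_eq, Finsupp.prod_fintype _ _ (by simp),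
    Fin.prod_univ_two, hk0 e he, he1]
  ring

/-- The multiplicative monoid generated by the nonzero constants, the variables and the binomials
`x ^ a - c * y ^ b`. -/
noncomputable def binomialMonoid (K : Type*) [CommRing K] (a b : ℕ) :
    Submonoid (MvPolynomial (Fin 2) K) :=
  Submonoid.closure (C '' {0}ᶜ ∪ Set.range X ∪ Set.range (binomial a b))

lemma C_mem_binomialMonoid (a b : ℕ) {c : K} (hc : c ≠ 0) : C c ∈ binomialMonoid K a b :=
  Submonoid.subset_closure (.inl (.inl ⟨c, hc, rfl⟩))

lemma X_mem_binomialMonoid (a b : ℕ) (i : Fin 2) : X i ∈ binomialMonoid K a b :=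
  Submonoid.subset_closure (.inl (.inr ⟨i, rfl⟩))

lemma binomial_mem_binomialMonoid (a b : ℕ) (c : K) : binomial a b c ∈ binomialMonoid K a b :=
  Submonoid.subset_closure (.inr ⟨c, rfl⟩)

end CommRing

variable [Field K] [IsAlgClosed K]

lemma homogenizePow_mem_binomialMonoid (a b : ℕ) {N : ℕ} {f : Polynomial K} (hf : f ≠ 0)
    (hN : f.natDegree ≤ N) : homogenizePow a b N f ∈ binomialMonoid K a b := by
  induction N generalizing f with
  | zero =>
    rw [Polynomial.eq_C_of_natDegree_le_zero hN] at hf ⊢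
    rw [← Polynomial.monomial_zero_left, homogenizePow_monomial a b le_rfl]
    simpa using C_mem_binomialMonoid a b (by simpa using hf)
  | succ N ih =>
    rcases hN.lt_or_eq with hlt | heq
    · rw [homogenizePow_succ a b (Nat.le_of_lt_succ hlt)]
      exact mul_mem (ih hf (Nat.le_of_lt_succ hlt)) (pow_mem (X_mem_binomialMonoid a b 1) b)
    · obtain ⟨c, hc⟩ := IsAlgClosed.exists_root f (by
        rw [Polynomial.degree_eq_natDegree hf, heq]
        exact_mod_cast N.succ_ne_zero)
      obtain ⟨g, rfl⟩ := Polynomial.dvd_iff_isRoot.2 hc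
      have hg : g ≠ 0 := right_ne_zero_of_mul hf
      have hgN : g.natDegree ≤ N := by
        rw [Polynomial.natDegree_mul (Polynomial.X_sub_C_ne_zero c) hg,
          Polynomial.natDegree_X_sub_C] at heq
        omega
      rw [homogenizePow_X_sub_C_mul a b hgN]
      exact mul_mem (binomial_mem_binomialMonoid a b c) (ih hg hgN)

theorem mem_binomialMonoid {a b : ℕ} (ha : a ≠ 0) (hb : b ≠ 0) (hab : a.Coprime b)
    {P : MvPolynomial (Fin 2) K} (hP0 : P ≠ 0) {d : ℕ}
    (hP : IsWeightedHomogeneous ![b, a] P d) : P ∈ binomialMonoid K a b := by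
  obtain ⟨i, j, N, f, hf, rfl⟩ :=
    exists_eq_mul_homogenizePow ha hb hab hP0 hP
  have hf0 : f ≠ 0 := by
    rintro rfl
    simp [homogenizePow] at hP0
  exact mul_mem (mul_mem (pow_mem (X_mem_binomialMonoid a b 0) i)
    (pow_mem (X_mem_binomialMonoid a b 1) j)) (homogenizePow_mem_binomialMonoid a b hf0 hf)

end Factorization

section InvariantCoordinate

open Polynomial

section Degree

variable {K B : Type*} [Field K] [CommRing B] [Algebra K B] {Ψ : B →ₐ[K] B[X]}

lemma IsLFIHD.map_ne_zero (hΨ : IsLFIHD Ψ) {P : B} (hP : P ≠ 0) : Ψ P ≠ 0 := fun h =>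
  hP (by rw [← hΨ.zero P, h, Polynomial.coeff_zero])

lemma IsLFIHD.natDegree_map_mul [IsDomain B] (hΨ : IsLFIHD Ψ) {P Q : B} (hP : P ≠ 0)
    (hQ : Q ≠ 0) : (Ψ (P * Q)).natDegree = (Ψ P).natDegree + (Ψ Q).natDegree := by
  rw [map_mul, natDegree_mul (hΨ.map_ne_zero hP) (hΨ.map_ne_zero hQ)]

lemma natDegree_map_algebraMap (Ψ : B →ₐ[K] B[X]) (c : K) :
    (Ψ (algebraMap K B c)).natDegree = 0 := by
  rw [AlgHom.commutes, Polynomial.algebraMap_apply, natDegree_C]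

lemma IsLFIHD.natDegree_map_coeff (hΨ : IsLFIHD Ψ) {P : B} {q : ℕ} (hq : q ≤ (Ψ P).natDegree)
    (hchoose : ((Ψ P).natDegree.choose q : K) ≠ 0) (hP : P ≠ 0) :
    (Ψ P).coeff ((Ψ P).natDegree - q) ≠ 0 ∧
      (Ψ ((Ψ P).coeff ((Ψ P).natDegree - q))).natDegree = q := by
  have hcoeff : (Ψ ((Ψ P).coeff ((Ψ P).natDegree - q))).coeff q ≠ 0 := by
    rw [hΨ.iter, Nat.add_sub_cancel' hq, ← Nat.cast_smul_eq_nsmul K]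
    exact smul_ne_zero hchoose (leadingCoeff_ne_zero.2 (hΨ.map_ne_zero hP))
  refine ⟨fun h => hcoeff (by simp [h]), le_antisymm ?_ (le_natDegree_of_ne_zero hcoeff)⟩
  refine natDegree_le_iff_coeff_eq_zero.2 fun j hj => ?_
  rw [hΨ.iter, coeff_eq_zero_of_natDegree_lt (by omega), smul_zero]

lemma IsLFIHD.natDegree_map_leadingCoeff (hΨ : IsLFIHD Ψ) {P : B} (hP : P ≠ 0) :
    (Ψ (Ψ P).leadingCoeff).natDegree = 0 := by
  simpa using (hΨ.natDegree_map_coeff (Nat.zero_le _) (by simp) hP).2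

end Degree

lemma dvd_or_dvd_of_mem_closure_pair {m n q : ℕ} (hm : q ∣ m) (hn : q ∣ n)
    (h : q ∈ AddSubmonoid.closure {m, n}) : m ∣ n ∨ n ∣ m := by
  obtain ⟨u, v, huv⟩ := (AddSubmonoid.mem_closure_pair ..).1 h
  simp only [smul_eq_mul] at huv
  obtain rfl | hu := Nat.eq_zero_or_pos u
  · rw [zero_mul, zero_add] at huv
    exact .inr ((Dvd.intro_left v huv).trans hm)
  obtain rfl | hm0 := Nat.eq_zero_or_pos m
  · exact .inr (dvd_zero n)
  · have hmq : m ≤ q := by nlinarith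
    exact .inl (Nat.le_antisymm (Nat.le_of_dvd hm0 hm) hmq ▸ hn)

lemma eq_one_of_mul_eq_mul_of_dvd {a b m n : ℕ} (hn : n ≠ 0) (hab : a.Coprime b)
    (h : a * m = b * n) (hdvd : n ∣ m) : a = 1 := by
  obtain ⟨s, rfl⟩ := hdvd
  refine Nat.Coprime.eq_one_of_dvd hab ⟨s, Nat.eq_of_mul_eq_mul_right (Nat.pos_of_ne_zero hn) ?_⟩
  rw [← h]
  ring

lemma exists_isWeightedHomogeneous_of_natCast_mul {ι R : Type*} [CommSemiring R] {ω : ι → ℕ}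
    {g : ℕ} (hg : g ≠ 0) {P : MvPolynomial ι R} (hP0 : P ≠ 0) {d : ℚ}
    (hP : MvPolynomial.IsWeightedHomogeneous (fun i => ((ω i * g : ℕ) : ℚ)) P d) :
    ∃ N, MvPolynomial.IsWeightedHomogeneous ω P N := by
  have hweight (e : ι →₀ ℕ) : Finsupp.weight (fun i => ((ω i * g : ℕ) : ℚ)) e =
      (Finsupp.weight ω e * g : ℕ) := by
    simp [Finsupp.weight_apply, Finsupp.sum, Finset.sum_mul, mul_assoc]
  obtain ⟨e, he⟩ := MvPolynomial.ne_zero_iff.1 hP0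
  refine ⟨Finsupp.weight ω e, fun e' he' => ?_⟩
  have h := (hP he').trans (hP he).symm
  rw [hweight, hweight] at h
  exact Nat.eq_of_mul_eq_mul_right (Nat.pos_of_ne_zero hg) (by exact_mod_cast h)

variable {K : Type*} [Field K]
  {Ψ : MvPolynomial (Fin 2) K →ₐ[K] (MvPolynomial (Fin 2) K)[X]} {a b : ℕ} {c : K}

lemma natDegree_map_C (Ψ : MvPolynomial (Fin 2) K →ₐ[K] (MvPolynomial (Fin 2) K)[X]) (c : K) :
    (Ψ (.C c)).natDegree = 0 :=
  natDegree_map_algebraMap Ψ c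

lemma natDegree_map_X_pow (Ψ : MvPolynomial (Fin 2) K →ₐ[K] (MvPolynomial (Fin 2) K)[X])
    (i : Fin 2) (n : ℕ) : (Ψ (.X i ^ n)).natDegree = n * (Ψ (.X i)).natDegree := by
  rw [map_pow, natDegree_pow]

lemma IsLFIHD.natDegree_map_C_mul (hΨ : IsLFIHD Ψ) (hc : c ≠ 0) {P : MvPolynomial (Fin 2) K}
    (hP : P ≠ 0) : (Ψ (.C c * P)).natDegree = (Ψ P).natDegree := by
  rw [hΨ.natDegree_map_mul (by simpa using hc) hP, natDegree_map_C, zero_add]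

lemma IsLFIHD.natDegree_map_C_mul_X_pow (hΨ : IsLFIHD Ψ) (hc : c ≠ 0) (i : Fin 2) (n : ℕ) :
    (Ψ (.C c * .X i ^ n)).natDegree = n * (Ψ (.X i)).natDegree := by
  rw [hΨ.natDegree_map_C_mul hc (pow_ne_zero _ (MvPolynomial.X_ne_zero i)),
    natDegree_map_X_pow]

lemma IsLFIHD.natDegree_map_mem (hΨ : IsLFIHD Ψ) (hb : b ≠ 0) {S : AddSubmonoid ℕ}
    (hX : ∀ i, (Ψ (.X i)).natDegree ∈ S) (hbinomial : ∀ c, (Ψ (binomial a b c)).natDegree ∈ S)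
    {P : MvPolynomial (Fin 2) K} (hP : P ∈ binomialMonoid K a b) : (Ψ P).natDegree ∈ S := by
  suffices h : P ≠ 0 ∧ (Ψ P).natDegree ∈ S from h.2
  induction hP using Submonoid.closure_induction with
  | mem P hP =>
    rcases hP with (⟨c, hc, rfl⟩ | ⟨i, rfl⟩) | ⟨c, rfl⟩
    · exact ⟨by simpa using hc, by simp⟩
    · exact ⟨MvPolynomial.X_ne_zero i, hX i⟩
    · exact ⟨binomial_ne_zero a hb c, hbinomial c⟩
  | one => simp
  | mul P Q _ _ hP hQ =>
    refine ⟨mul_ne_zero hP.1 hQ.1, ?_⟩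
    rw [hΨ.natDegree_map_mul hP.1 hQ.1]
    exact add_mem hP.2 hQ.2

lemma IsLFIHD.eq_C_of_natDegree_map_eq_zero (hΨ : IsLFIHD Ψ) (hb : b ≠ 0)
    (hX : ∀ i, (Ψ (.X i)).natDegree ≠ 0) (hbinomial : ∀ c, (Ψ (binomial a b c)).natDegree ≠ 0)
    {P : MvPolynomial (Fin 2) K} (hP : P ∈ binomialMonoid K a b) (hdeg : (Ψ P).natDegree = 0) :
    ∃ c, P = .C c := by
  suffices h : P ≠ 0 ∧ ((Ψ P).natDegree = 0 → ∃ c, P = .C c) from h.2 hdeg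
  clear hdeg
  induction hP using Submonoid.closure_induction with
  | mem P hP =>
    rcases hP with (⟨c, hc, rfl⟩ | ⟨i, rfl⟩) | ⟨c, rfl⟩
    · exact ⟨by simpa using hc, fun _ => ⟨c, rfl⟩⟩
    · exact ⟨MvPolynomial.X_ne_zero i, fun h => absurd h (hX i)⟩
    · exact ⟨binomial_ne_zero a hb c, fun h => absurd h (hbinomial c)⟩
  | one => exact ⟨one_ne_zero, fun _ => ⟨1, rfl⟩⟩
  | mul P Q _ _ hP hQ =>
    refine ⟨mul_ne_zero hP.1 hQ.1, fun h => ?_⟩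
    rw [hΨ.natDegree_map_mul hP.1 hQ.1, Nat.add_eq_zero_iff] at h
    obtain ⟨c, rfl⟩ := hP.2 h.1
    obtain ⟨c', rfl⟩ := hQ.2 h.2
    exact ⟨c * c', (MvPolynomial.C_mul).symm⟩

lemma IsLFIHD.exists_natDegree_map_binomial_eq_zero (hΨ : IsLFIHD Ψ) (hb : b ≠ 0)
    (hX : ∀ i, (Ψ (.X i)).natDegree ≠ 0) {i : Fin 2}
    (hmem : (Ψ (.X i)).leadingCoeff ∈ binomialMonoid K a b)
    (hconst : ∀ c, (Ψ (.X i)).leadingCoeff ≠ .C c) :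
    ∃ c, (Ψ (binomial a b c)).natDegree = 0 := by
  by_contra! hbinomial
  obtain ⟨c, hc⟩ := hΨ.eq_C_of_natDegree_map_eq_zero hb hX hbinomial hmem
    (hΨ.natDegree_map_leadingCoeff (MvPolynomial.X_ne_zero i))
  exact hconst c hc

lemma ne_zero_of_natDegree_map_binomial_eq_zero (hc : (Ψ (binomial a b c)).natDegree = 0)
    (ha : a ≠ 0) (hX : (Ψ (.X 0)).natDegree ≠ 0) : c ≠ 0 := by
  rintro rfl
  exact mul_ne_zero ha hX (by simpa [binomial] using hc)

section InvariantBinomial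

variable (hΨ : IsLFIHD Ψ) (hc : (Ψ (binomial a b c)).natDegree = 0)
include hΨ hc

lemma IsLFIHD.natDegree_map_binomial (hb : b ≠ 0) (hX : (Ψ (.X 1)).natDegree ≠ 0) {c' : K}
    (hc' : c' ≠ c) : (Ψ (binomial a b c')).natDegree = b * (Ψ (.X 1)).natDegree := by
  have hdeg := hΨ.natDegree_map_C_mul_X_pow (sub_ne_zero.2 hc'.symm) 1 b
  have hpos : b * (Ψ (.X 1)).natDegree ≠ 0 := mul_ne_zero hb hX
  rw [binomial_eq_binomial_add a b c c', map_add,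
    natDegree_add_eq_right_of_natDegree_lt (by omega), hdeg]

lemma IsLFIHD.mul_natDegree_map_X (ha : a ≠ 0) (hb : b ≠ 0)
    (hX : ∀ i, (Ψ (.X i)).natDegree ≠ 0) :
    a * (Ψ (.X 0)).natDegree = b * (Ψ (.X 1)).natDegree := by
  have hc0 := ne_zero_of_natDegree_map_binomial_eq_zero hc ha (hX 0)
  rw [← natDegree_map_X_pow, ← hΨ.natDegree_map_binomial hc hb (hX 1) hc0.symm]
  simp [binomial]

variable (hb : b ≠ 0) (hX : ∀ i, (Ψ (.X i)).natDegree ≠ 0)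
  (hmem : ∀ i k, (Ψ (.X i)).coeff k ≠ 0 → (Ψ (.X i)).coeff k ∈ binomialMonoid K a b)
include hb hX hmem

lemma IsLFIHD.natDegree_map_X_dvd_or_dvd :
    (Ψ (.X 0)).natDegree ∣ (Ψ (.X 1)).natDegree ∨
      (Ψ (.X 1)).natDegree ∣ (Ψ (.X 0)).natDegree := by
  set S := AddSubmonoid.closure {(Ψ (.X 0)).natDegree, (Ψ (.X 1)).natDegree}
  have h0 : (Ψ (.X 0)).natDegree ∈ S := AddSubmonoid.subset_closure (.inl rfl)
  have h1 : (Ψ (.X 1)).natDegree ∈ S := AddSubmonoid.subset_closure (.inr rfl)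
  have hbinomial : ∀ c', (Ψ (binomial a b c')).natDegree ∈ S := fun c' => by
    obtain rfl | hc' := eq_or_ne c' c
    · simp [hc]
    · rw [hΨ.natDegree_map_binomial hc hb (hX 1) hc']
      exact nsmul_mem h1 b
  obtain ⟨q, -, hq0, hq1, hchoose⟩ := exists_dvd_natCast_choose_ne_zero K
    (Nat.pos_of_ne_zero (hX 0)) (Nat.pos_of_ne_zero (hX 1))
  have hqS : ∀ i, q ∣ (Ψ (.X i)).natDegree → ((Ψ (.X i)).natDegree.choose q : K) ≠ 0 → q ∈ S :=
    fun i hqi hi => by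
      obtain ⟨hne, hdeg⟩ := hΨ.natDegree_map_coeff (Nat.le_of_dvd (Nat.pos_of_ne_zero (hX i)) hqi)
        hi (MvPolynomial.X_ne_zero i)
      exact hdeg ▸ hΨ.natDegree_map_mem hb (Fin.forall_fin_two.2 ⟨h0, h1⟩) hbinomial
        (hmem i _ hne)
  exact dvd_or_dvd_of_mem_closure_pair hq0 hq1 (hchoose.elim (hqS 0 hq0) (hqS 1 hq1))

lemma IsLFIHD.eq_one_or_eq_one (ha : a ≠ 0) (hab : a.Coprime b) : a = 1 ∨ b = 1 := by
  have hmul := hΨ.mul_natDegree_map_X hc ha hb hX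
  rcases hΨ.natDegree_map_X_dvd_or_dvd hc hb hX hmem with hdvd | hdvd
  · exact .inr (eq_one_of_mul_eq_mul_of_dvd (hX 0) hab.symm hmul.symm hdvd)
  · exact .inl (eq_one_of_mul_eq_mul_of_dvd (hX 1) hab hmul hdvd)

end InvariantBinomial

lemma binomial_one_eq_C_mul (hc : c ≠ 0) (a : ℕ) :
    binomial a 1 c = .C (-c) * (.X 1 - .C c⁻¹ * .X 0 ^ a) := by
  have : (.C c * .C c⁻¹ : MvPolynomial (Fin 2) K) = 1 := by
    rw [← MvPolynomial.C_mul, mul_inv_cancel₀ hc, MvPolynomial.C_1]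
  rw [binomial, MvPolynomial.C_neg]
  linear_combination (-MvPolynomial.X 0 ^ a) * this

theorem IsLFIHD.exists_natDegree_map_X_sub_eq_zero [IsAlgClosed K] (hΨ : IsLFIHD Ψ)
    {ω : Fin 2 → ℕ} (hω : ∀ i, ω i ≠ 0) {δ : ℚ} (hδ : 0 < δ)
    (hhom : ∀ i k, MvPolynomial.IsWeightedHomogeneous (fun i => (ω i : ℚ))
      ((Ψ (.X i)).coeff k) (ω i + k • δ))
    (hX : ∀ i, (Ψ (.X i)).natDegree ≠ 0) :
    ∃ (i j : Fin 2) (l : ℕ) (c : K), i ≠ j ∧ ω i = l * ω j ∧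
      (Ψ (.X i - .C c * .X j ^ l)).natDegree = 0 := by
  obtain ⟨g, b, a, hg, hba, h0, h1⟩ :=
    Nat.exists_coprime' (Nat.gcd_pos_of_pos_left (ω 1) (Nat.pos_of_ne_zero (hω 0)))
  have hb : b ≠ 0 := fun h => hω 0 (by simp [h0, h])
  have ha : a ≠ 0 := fun h => hω 1 (by simp [h1, h])
  have hω_eq : ω = fun i => ![b, a] i * g := funext (Fin.forall_fin_two.2 ⟨h0, h1⟩)
  have hmem : ∀ i k, (Ψ (.X i)).coeff k ≠ 0 → (Ψ (.X i)).coeff k ∈ binomialMonoid K a b :=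
    fun i k hne => by
      obtain ⟨N, hN⟩ := exists_isWeightedHomogeneous_of_natCast_mul (ω := ![b, a]) hg.ne' hne
        (by simpa only [hω_eq] using hhom i k)
      exact mem_binomialMonoid ha hb hba.symm hne hN
  have hlead : (Ψ (.X 0)).leadingCoeff ≠ 0 :=
    leadingCoeff_ne_zero.2 (hΨ.map_ne_zero (MvPolynomial.X_ne_zero 0))
  have hconst : ∀ c, (Ψ (.X 0)).leadingCoeff ≠ .C c := fun c hc => by
    have hhomC := hhom 0 (Ψ (.X 0)).natDegree
    rw [coeff_natDegree, hc] at hhomC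
    have hweight := hhomC.inj_right (hc ▸ hlead) (MvPolynomial.isWeightedHomogeneous_C _ c)
    have : (0 : ℚ) < ω 0 := by exact_mod_cast Nat.pos_of_ne_zero (hω 0)
    have : 0 ≤ (Ψ (.X 0)).natDegree • δ := nsmul_nonneg hδ.le _
    linarith
  obtain ⟨c, hc⟩ := hΨ.exists_natDegree_map_binomial_eq_zero hb hX (hmem 0 _ hlead) hconst
  have hc0 := ne_zero_of_natDegree_map_binomial_eq_zero hc ha (hX 0)
  rcases hΨ.eq_one_or_eq_one hc hb hX hmem ha hba.symm with rfl | rfl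
  · refine ⟨0, 1, b, c, zero_ne_one, by rw [h0, h1, one_mul], ?_⟩
    rwa [binomial, pow_one] at hc
  · refine ⟨1, 0, a, c⁻¹, one_ne_zero, by rw [h0, h1, one_mul], ?_⟩
    have hne : (.X 1 - .C c⁻¹ * .X 0 ^ a : MvPolynomial (Fin 2) K) ≠ 0 := fun h =>
      binomial_ne_zero a one_ne_zero c (by rw [binomial_one_eq_C_mul hc0, h, mul_zero])
    rwa [binomial_one_eq_C_mul hc0, hΨ.natDegree_map_C_mul (neg_ne_zero.2 hc0) hne] at hc

end InvariantCoordinate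

section GradedMaps

variable {K α : Type*} [CommSemiring K]

lemma map_mem_of_mem_homog {Γ B : Type*} [AddMonoid Γ] [Semiring B] [Algebra K B]
    (𝒜 : Γ → Submodule K B) [SetLike.GradedMonoid 𝒜] {ω : α → Γ} {f : NCPoly K α →ₐ[K] B}
    (hf : ∀ i, f (gen K i) ∈ 𝒜 (ω i)) {d : Γ} {P : NCPoly K α} (hP : P ∈ homog K ω d) :
    f P ∈ 𝒜 d := by
  have hmon : ∀ w, f (mon K w) ∈ 𝒜 (weight ω w) := fun w => by
    induction w using FreeMonoid.inductionOn' with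
    | one => simpa using SetLike.GradedOne.one_mem (A := 𝒜)
    | of_mul i w ih =>
      rw [mon_of_mul, map_mul, weight_mul, weight_of]
      exact SetLike.mul_mem_graded (hf i) ih
  exact supported_le (V := (𝒜 d).comap f.toLinearMap) (fun w (hw : _ = d) => hw ▸ hmon w) hP

instance homog.gradedMonoid {Γ : Type*} [AddCommMonoid Γ] (ω : α → Γ) :
    SetLike.GradedMonoid (homog K ω) where
  one_mem := one_mem_homog
  mul_mem _ _ _ _ := mul_mem_homog

lemma isWeightedHomogeneous_abelianization {Γ : Type*} [AddCommMonoid Γ] {ω : α → Γ} {d : Γ}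
    {P : NCPoly K α} (hP : P ∈ homog K ω d) :
    MvPolynomial.IsWeightedHomogeneous ω (abelianization K P) d :=
  have := MvPolynomial.WeightedHomogeneousSubmodule.gradedMonoid (R := K) (w := ω)
  map_mem_of_mem_homog (MvPolynomial.weightedHomogeneousSubmodule K ω)
    (fun i => by simpa using MvPolynomial.isWeightedHomogeneous_X K ω i) hP

end GradedMaps

section Abelianization

variable {K α : Type*} [CommSemiring K]

lemma abelianization_surjective : Function.Surjective (abelianization K (α := α)) := by
  rw [← AlgHom.range_eq_top, eq_top_iff, ← MvPolynomial.adjoin_range_X, Algebra.adjoin_le_iff]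
  rintro _ ⟨i, rfl⟩
  exact ⟨gen K i, abelianization_gen i⟩

lemma abelianization_map_eq_zero (f : NCPoly K α →ₐ[K] NCPoly K α) {P : NCPoly K α}
    (hP : abelianization K P = 0) : abelianization K (f P) = 0 := by
  have h : (abelianization K).comp f =
      (MvPolynomial.aeval fun i => abelianization K (f (gen K i))).comp (abelianization K) :=
    algHom_ext_gen fun i => by simp
  rw [← AlgHom.comp_apply, h, AlgHom.comp_apply, hP, map_zero]

open Polynomial

/-- The map induced by `Φ` on the commutative polynomial rings. -/
noncomputable def abelianize (Φ : NCPoly K α →ₐ[K] (NCPoly K α)[X]) :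
    MvPolynomial α K →ₐ[K] (MvPolynomial α K)[X] :=
  MvPolynomial.aeval fun i => Polynomial.mapAlgHom (abelianization K) (Φ (gen K i))

variable {Φ : NCPoly K α →ₐ[K] (NCPoly K α)[X]}

lemma coeff_abelianize (Φ : NCPoly K α →ₐ[K] (NCPoly K α)[X]) (P : NCPoly K α) (k : ℕ) :
    (abelianize Φ (abelianization K P)).coeff k = abelianization K ((Φ P).coeff k) := by
  have h : (abelianize Φ).comp (abelianization K) =
      (Polynomial.mapAlgHom (abelianization K)).comp Φ :=
    algHom_ext_gen fun i => by simp [abelianize]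
  simpa using congrArg (fun f => (f P).coeff k) h

lemma IsLFIHD.abelianize (hΦ : IsLFIHD Φ) : IsLFIHD (abelianize Φ) where
  zero P := by
    obtain ⟨P, rfl⟩ := abelianization_surjective P
    rw [coeff_abelianize, hΦ.zero]
  iter P j k := by
    obtain ⟨P, rfl⟩ := abelianization_surjective P
    rw [coeff_abelianize, coeff_abelianize, coeff_abelianize, hΦ.iter, map_nsmul]

end Abelianization

section Conj

open Polynomial

variable {K B : Type*} [CommSemiring K] [Semiring B] [Algebra K B]

/-- The higher derivation `Φ` in the coordinates given by the automorphism `ε`. -/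
noncomputable def conjHD (Φ : B →ₐ[K] B[X]) (ε : B ≃ₐ[K] B) : B →ₐ[K] B[X] :=
  (Polynomial.mapAlgHom (ε.symm : B →ₐ[K] B)).comp (Φ.comp (ε : B →ₐ[K] B))

@[simp] lemma coeff_conjHD (Φ : B →ₐ[K] B[X]) (ε : B ≃ₐ[K] B) (P : B) (k : ℕ) :
    (conjHD Φ ε P).coeff k = ε.symm ((Φ (ε P)).coeff k) := by
  simp [conjHD]

lemma IsLFIHD.conj {Φ : B →ₐ[K] B[X]} (hΦ : IsLFIHD Φ) (ε : B ≃ₐ[K] B) :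
    IsLFIHD (conjHD Φ ε) where
  zero P := by simp [hΦ.zero]
  iter P j k := by simp [hΦ.iter]

lemma IsLFIHD.isNontrivial_of_coeff_ne_zero {K α : Type*} [CommSemiring K]
    {Φ : NCPoly K α →ₐ[K] (NCPoly K α)[X]} (hΦ : IsLFIHD Φ) {k : ℕ} (hk : k ≠ 0)
    {P : NCPoly K α} (hP : (Φ P).coeff k ≠ 0) : IsNontrivial Φ := by
  by_contra h
  have hΦC : Φ = CAlgHom := algHom_ext_gen fun i => by
    ext1 n
    obtain rfl | hn := eq_or_ne n 0
    · rw [hΦ.zero, CAlgHom_apply, coeff_C_zero]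
    · rw [CAlgHom_apply, coeff_C_of_ne_zero hn]
      exact of_not_not fun h' => h ⟨n, hn, i, h'⟩
  exact hP (by rw [hΦC, CAlgHom_apply, coeff_C_of_ne_zero hk])

lemma IsLFIHD.isNontrivial_conjHD {K α : Type*} [CommSemiring K]
    {Φ : NCPoly K α →ₐ[K] (NCPoly K α)[X]} (hΦ : IsLFIHD Φ) (hnt : IsNontrivial Φ)
    (ε : NCPoly K α ≃ₐ[K] NCPoly K α) : IsNontrivial (conjHD Φ ε) := by
  obtain ⟨k, hk, i, hi⟩ := hnt
  exact (hΦ.conj ε).isNontrivial_of_coeff_ne_zero hk (P := ε.symm (gen K i)) (by simpa using hi)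

end Conj

section Elementary

lemma map_eq_self_of_mem_adjoin_gen {K α : Type*} [CommSemiring K]
    {f : NCPoly K α →ₐ[K] NCPoly K α} {s : Set α} (hf : ∀ i ∈ s, f (gen K i) = gen K i)
    {P : NCPoly K α} (hP : P ∈ Algebra.adjoin K (gen K '' s)) : f P = P :=
  AlgHom.adjoin_le_equalizer f (AlgHom.id K _) (Set.forall_mem_image.2 hf) hP

variable {K α : Type*} [Field K] [DecidableEq α] {i : α} {e : K} {Q : NCPoly K α}

/-- The elementary automorphism `x_i ↦ e x_i + Q`, where `Q` does not involve `x_i`. -/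
noncomputable def elementary (i : α) (he : e ≠ 0) (hQ : Q ∈ Algebra.adjoin K (gen K '' {i}ᶜ)) :
    NCPoly K α ≃ₐ[K] NCPoly K α :=
  have hfix (u : NCPoly K α) : subst (Function.update (gen K) i u) Q = Q :=
    map_eq_self_of_mem_adjoin_gen (fun j hj => by simp [Function.update_of_ne hj]) hQ
  AlgEquiv.ofAlgHom (subst (Function.update (gen K) i (e • gen K i + Q)))
    (subst (Function.update (gen K) i (e⁻¹ • (gen K i - Q))))
    (algHom_ext_gen fun z => by
      obtain rfl | hz := eq_or_ne z i
      · simp [hfix, smul_smul, he]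
      · simp [hz])
    (algHom_ext_gen fun z => by
      obtain rfl | hz := eq_or_ne z i
      · simp [hfix, smul_smul, he]
      · simp [hz])

variable (he : e ≠ 0) (hQ : Q ∈ Algebra.adjoin K (gen K '' {i}ᶜ))

lemma elementary_gen_self : elementary i he hQ (gen K i) = e • gen K i + Q := by
  simp [elementary]

lemma elementary_gen_of_ne {j : α} (hj : j ≠ i) : elementary i he hQ (gen K j) = gen K j := by
  simp [elementary, hj]

lemma elementary_symm_gen_self :
    (elementary i he hQ).symm (gen K i) = e⁻¹ • (gen K i - Q) := by
  simp [elementary]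

lemma elementary_symm_gen_of_ne {j : α} (hj : j ≠ i) :
    (elementary i he hQ).symm (gen K j) = gen K j := by
  simp [elementary, hj]

variable {Γ : Type*} [AddCommMonoid Γ] {ω : α → Γ}

lemma elementary_gen_mem_homog (hQω : Q ∈ homog K ω (ω i)) (z : α) :
    elementary i he hQ (gen K z) ∈ homog K ω (ω z) := by
  obtain rfl | hz := eq_or_ne z i
  · rw [elementary_gen_self]
    exact add_mem (Submodule.smul_mem _ e (gen_mem_homog z)) hQω
  · rw [elementary_gen_of_ne he hQ hz]
    exact gen_mem_homog z

lemma elementary_symm_gen_mem_homog (hQω : Q ∈ homog K ω (ω i)) (z : α) :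
    (elementary i he hQ).symm (gen K z) ∈ homog K ω (ω z) := by
  obtain rfl | hz := eq_or_ne z i
  · rw [elementary_symm_gen_self]
    exact Submodule.smul_mem _ _ (sub_mem (gen_mem_homog z) hQω)
  · rw [elementary_symm_gen_of_ne he hQ hz]
    exact gen_mem_homog z

end Elementary

section MinimalDegree

open Polynomial

variable {K : Type*} [Field K] {Φ : NCPoly K (Fin 2) →ₐ[K] (NCPoly K (Fin 2))[X]} {δ : ℚ}

lemma IsLFIHD.exists_abelianization_coeff_map_gen_ne_zero (hΦ : IsLFIHD Φ) (hnt : IsNontrivial Φ)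
    {ω : Fin 2 → ℚ} (hω : ∀ i, ω i ≠ 0)
    (hshift : ∀ d, ∀ P ∈ homog K ω d, ∀ k, (Φ P).coeff k ∈ homog K ω (d + k • δ))
    (ε : NCPoly K (Fin 2) ≃ₐ[K] NCPoly K (Fin 2)) (hε : ∀ i, ε (gen K i) ∈ homog K ω (ω i))
    (hεsymm : ∀ i, ε.symm (gen K i) ∈ homog K ω (ω i))
    (hpow : ∀ i j, ∀ k ≠ 0, ∀ c : K, c ≠ 0 → ∀ q : ℕ,
      (Φ (ε (gen K i))).coeff k ≠ c • ε (gen K j) ^ q) (j : Fin 2) :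
    ∃ k ≠ 0, abelianization K ((Φ (ε (gen K j))).coeff k) ≠ 0 := by
  obtain ⟨i, hij⟩ := exists_ne j
  let f : NCPoly K (Fin 2) →ₐ[K] NCPoly K (Fin 2) := ε.symm
  have hshift' : HasShift ω δ (conjHD Φ ε) := fun k z => by
    rw [coeff_conjHD]
    exact map_mem_of_mem_homog (f := f) (homog K ω) hεsymm (hshift _ _ (hε z) k)
  obtain ⟨k, hk, hne⟩ := (hΦ.conj ε).exists_abelianization_coeff_ne_zero hω hshift'
    (hΦ.isNontrivial_conjHD hnt ε) hij fun k hk c hc q h => hpow i j k hk c hc q (by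
      rwa [coeff_conjHD, AlgEquiv.symm_apply_eq, map_smul, map_pow] at h)
  refine ⟨k, hk, fun h => hne ?_⟩
  rw [coeff_conjHD]
  exact abelianization_map_eq_zero f h

lemma IsLFIHD.exists_abelianization_coeff_sub_eq_zero [IsAlgClosed K] (hΦ : IsLFIHD Φ)
    {ω : Fin 2 → ℕ} (hω : ∀ i, ω i ≠ 0) (hδ : 0 < δ)
    (hshift : HasShift (fun i => (ω i : ℚ)) δ Φ)
    (hne : ∀ i, ∃ k ≠ 0, abelianization K ((Φ (gen K i)).coeff k) ≠ 0) :
    ∃ (i j : Fin 2) (l : ℕ) (c : K), i ≠ j ∧ ω i = l * ω j ∧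
      ∀ k ≠ 0, abelianization K ((Φ (gen K i - c • gen K j ^ l)).coeff k) = 0 := by
  obtain ⟨i, j, l, c, hij, hl, hdeg⟩ := hΦ.abelianize.exists_natDegree_map_X_sub_eq_zero hω hδ
    (fun i k => by
      rw [← abelianization_gen, coeff_abelianize]
      exact isWeightedHomogeneous_abelianization (hshift k i))
    (fun i => by
      obtain ⟨k, hk, hne⟩ := hne i
      rw [← coeff_abelianize, abelianization_gen] at hne
      exact ((Nat.pos_of_ne_zero hk).trans_le (le_natDegree_of_ne_zero hne)).ne')
  refine ⟨i, j, l, c, hij, hl, fun k hk => ?_⟩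
  rw [← coeff_abelianize, map_sub, map_smul, map_pow, abelianization_gen, abelianization_gen,
    MvPolynomial.smul_eq_C_mul]
  exact coeff_eq_zero_of_natDegree_lt (by omega)

variable {σ : Kˣ →* (NCPoly K (Fin 2) ≃ₐ[K] NCPoly K (Fin 2))} {W : NCPoly K (Fin 2) → ℕ}

lemma IsInvariantDegree.map_gen_eq (hW : IsInvariantDegree σ W)
    {ε : NCPoly K (Fin 2) ≃ₐ[K] NCPoly K (Fin 2)}
    (hε : ∀ i, ε (gen K i) ∈ homog K (fun i => (W (gen K i) : ℚ)) (W (gen K i)))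
    (hmin : ∑ i, W (gen K i) ≤ ∑ i, W (ε (gen K i))) (i : Fin 2) :
    W (ε (gen K i)) = W (gen K i) := by
  have hle : ∀ i ∈ Finset.univ, W (ε (gen K i)) ≤ W (gen K i) := fun i _ =>
    hW.le_of_mem_degLE (homog_le_degLE (hε i))
  exact (Finset.sum_eq_sum_iff_of_le hle).1 ((Finset.sum_le_sum hle).antisymm hmin) i
    (Finset.mem_univ i)

theorem IsInvariantDegree.torusDeriv_gen_mem_degLE [IsAlgClosed K] (hW : IsInvariantDegree σ W)
    {D : NCPoly K (Fin 2) →ₗ[K] (ℤ →₀ NCPoly K (Fin 2))} (hD : IsCharDecomp σ D)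
    (hmin : ∀ ε : NCPoly K (Fin 2) ≃ₐ[K] NCPoly K (Fin 2),
      ∑ i, W (gen K i) ≤ ∑ i, W (ε (gen K i))) (k : ℕ) (i : Fin 2) :
    torusDeriv D k (gen K i) ∈ degLE K (fun i => (W (gen K i) : ℚ)) (W (gen K i)) := by
  have : Infinite K := IsAlgClosed.instInfinite
  by_contra hcon
  obtain ⟨δ, hδ, Φ, hΦ, hnt, hlead⟩ := hD.exists_leading ⟨k, i, hcon⟩
  set ω : Fin 2 → ℚ := fun i => (W (gen K i) : ℚ) with hω_def
  have hshift : ∀ d, ∀ P ∈ homog K ω d, ∀ k, (Φ P).coeff k ∈ homog K ω (d + k • δ) :=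
    fun d P hP k => (hlead d P hP k).2 ▸ component_mem _ _ _
  have hab (ε : NCPoly K (Fin 2) ≃ₐ[K] NCPoly K (Fin 2)) (hε : ∀ i, ε (gen K i) ∈ homog K ω (ω i))
      (hεsymm : ∀ i, ε.symm (gen K i) ∈ homog K ω (ω i)) (j : Fin 2) :
      ∃ k ≠ 0, abelianization K ((Φ (ε (gen K j))).coeff k) ≠ 0 := by
    have hWε := hW.map_gen_eq hε (hmin ε)
    refine hΦ.exists_abelianization_coeff_map_gen_ne_zero hnt
      (fun i => Nat.cast_ne_zero.2 (hW.gen_pos i).ne') hshift ε hε hεsymm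
      (fun i j k hk c hc q => ?_) j
    obtain ⟨hle, hcoeff⟩ := hlead _ _ (hε i) k
    rw [hcoeff]
    exact hW.component_torusDeriv_ne hD hδ hk hle (hWε i) (hε j)
      (by simpa using gen_ne_zero j) (hWε j) hc q
  obtain ⟨i, j, l, c, hij, hl, hinv⟩ := hΦ.exists_abelianization_coeff_sub_eq_zero
    (fun i => (hW.gen_pos i).ne') hδ (fun k i => hshift _ _ (gen_mem_homog i) k)
    (hab 1 gen_mem_homog gen_mem_homog)
  have hj : gen K j ∈ Algebra.adjoin K (gen K '' {i}ᶜ) :=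
    Algebra.subset_adjoin (Set.mem_image_of_mem _ hij.symm)
  have hQ : -(c • gen K j ^ l) ∈ Algebra.adjoin K (gen K '' {i}ᶜ) :=
    neg_mem (Subalgebra.smul_mem _ (pow_mem hj l) c)
  have hQω : -(c • gen K j ^ l) ∈ homog K ω (ω i) := by
    have hωi : ω i = l • ω j := by simp [hω_def, hl]
    exact neg_mem (Submodule.smul_mem _ c (hωi ▸ pow_mem_homog (gen_mem_homog j) l))
  obtain ⟨k, hk, hne⟩ := hab (elementary i one_ne_zero hQ) (elementary_gen_mem_homog _ hQ hQω)
    (elementary_symm_gen_mem_homog _ hQ hQω) i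
  rw [elementary_gen_self, one_smul, ← sub_eq_add_neg] at hne
  exact hne (hinv k hk)

end MinimalDegree

section BoundedWeight

variable {K α Γ : Type*} [AddCommMonoid Γ] [PartialOrder Γ] [IsOrderedCancelAddMonoid Γ]
  {ω : α → Γ}

lemma eq_one_of_weight_nonpos (hω : ∀ i, 0 < ω i) {w : FreeMonoid α} (hw : weight ω w ≤ 0) :
    w = 1 := by
  cases w using FreeMonoid.casesOn with
  | one => rfl
  | of_mul i w =>
    rw [weight_mul, weight_of] at hw
    exact absurd hw (add_pos_of_pos_of_nonneg (hω i) (weight_nonneg (fun i => (hω i).le) w)).not_ge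

lemma le_weight_of_mem (hω : ∀ i, 0 ≤ ω i) {i : α} {w : FreeMonoid α} (hi : i ∈ w) :
    ω i ≤ weight ω w :=
  List.single_le_sum (by simpa using fun i _ => hω i) _ (List.mem_map_of_mem hi)

lemma eq_of_of_mem_of_weight_le (hω : ∀ i, 0 < ω i) {i : α} {w : FreeMonoid α} (hi : i ∈ w)
    (hw : weight ω w ≤ ω i) : w = FreeMonoid.of i := by
  cases w using FreeMonoid.casesOn with
  | one => exact absurd hi (FreeMonoid.notMem_one)
  | of_mul j w =>
    rw [weight_mul, weight_of] at hw
    obtain hi | hi := FreeMonoid.mem_mul.1 hi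
    · obtain rfl := FreeMonoid.mem_of.1 hi
      rw [eq_one_of_weight_nonpos hω (w := w) (by simpa using hw), mul_one]
    · have hle := hw.trans (le_weight_of_mem (fun i => (hω i).le) hi)
      exact absurd hle (lt_add_of_pos_left _ (hω j)).not_ge

lemma eq_one_or_exists_eq_of_of_weight_le (hω : ∀ i, 0 < ω i) {j : α} (hj : ∀ i, ω j ≤ ω i)
    {w : FreeMonoid α} (hw : weight ω w ≤ ω j) : w = 1 ∨ ∃ i, w = FreeMonoid.of i := by
  cases w using FreeMonoid.casesOn with
  | one => exact Or.inl rfl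
  | of_mul i w =>
    rw [weight_mul, weight_of] at hw
    have hw' : weight ω w ≤ 0 := by simpa using hw.trans (hj i)
    exact Or.inr ⟨i, by rw [eq_one_of_weight_nonpos hω hw', mul_one]⟩

lemma mon_mem_adjoin_gen [CommSemiring K] {s : Set α} {w : FreeMonoid α} (hw : ∀ i ∈ w, i ∈ s) :
    mon K w ∈ Algebra.adjoin K (gen K '' s) := by
  induction w using FreeMonoid.inductionOn' with
  | one => simp
  | of_mul i w ih =>
    rw [mon_of_mul]
    exact mul_mem (Algebra.subset_adjoin (Set.mem_image_of_mem _ (hw i (by simp))))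
      (ih fun j hj => hw j (by simp [hj]))

lemma sub_coeff_smul_gen_mem_adjoin [CommRing K] (hω : ∀ i, 0 < ω i) {i : α} {P : NCPoly K α}
    (hP : P ∈ degLE K ω (ω i)) :
    P - P.coeff (FreeMonoid.of i) • gen K i ∈ Algebra.adjoin K (gen K '' {i}ᶜ) := by
  classical
  have hQ : P - P.coeff (FreeMonoid.of i) • gen K i ∈ supported K K {w | i ∉ w} :=
    mem_supported'.2 fun w hw => by
      rw [Set.mem_ofPred_eq, not_not] at hw
      obtain rfl | hne := eq_or_ne w (FreeMonoid.of i)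
      · simp [coeff_gen]
      · rw [coeff_sub, Finsupp.sub_apply, coeff_smul, Finsupp.smul_apply, gen, coeff_mon,
          if_neg hne.symm, smul_zero, sub_zero]
        exact coeff_eq_zero_of_notMem hP fun h => hne (eq_of_of_mem_of_weight_le hω hw h)
  refine supported_le (V := Subalgebra.toSubmodule (Algebra.adjoin K (gen K '' {i}ᶜ)))
    (fun w hw => mon_mem_adjoin_gen fun j hj => ?_) hQ
  rintro rfl
  exact hw hj

lemma eq_smul_one_add_sum_smul_gen [CommSemiring K] [Fintype α] (hω : ∀ i, 0 < ω i) {j : α}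
    (hj : ∀ i, ω j ≤ ω i) {P : NCPoly K α} (hP : P ∈ degLE K ω (ω j)) :
    P = P.coeff 1 • 1 + ∑ i, P.coeff (FreeMonoid.of i) • gen K i := by
  classical
  ext w
  by_cases hw : w = 1 ∨ ∃ i, w = FreeMonoid.of i
  · obtain rfl | ⟨i, rfl⟩ := hw
    · simp [gen, coeff_mon, ← mon_one]
    · simp [coeff_gen, ← mon_one, coeff_mon]
  · rw [coeff_eq_zero_of_notMem hP fun h =>
      hw (eq_one_or_exists_eq_of_of_weight_le hω hj h)]
    push Not at hw
    simp [gen, coeff_mon, ← mon_one, hw.1.symm, fun i => (hw.2 i).symm]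

end BoundedWeight

section Triangular

variable {K : Type*} [Field K]

lemma exists_algEquiv_gen_eq {α : Type*} {i j : α} (hij : i ≠ j) {x : NCPoly K α} {e a c d : K}
    (he : e ≠ 0) (hx : x - e • gen K i ∈ Algebra.adjoin K (gen K '' {i}ᶜ)) (ha : a ≠ 0) :
    ∃ γ : NCPoly K α ≃ₐ[K] NCPoly K α,
      γ (gen K i) = x ∧ γ (gen K j) = a • gen K j + (c • x + d • 1) := by
  classical
  have hi : c • gen K i + d • 1 ∈ Algebra.adjoin K (gen K '' {j}ᶜ) :=
    add_mem (Subalgebra.smul_mem _ (Algebra.subset_adjoin (Set.mem_image_of_mem _ hij)) c)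
      (Subalgebra.smul_mem _ (one_mem _) d)
  have hγi : elementary i he hx (gen K i) = x := by rw [elementary_gen_self, add_sub_cancel]
  refine ⟨elementary i he hx * elementary j ha hi, ?_, ?_⟩
  · rw [AlgEquiv.mul_apply, elementary_gen_of_ne ha hi hij, hγi]
  · rw [AlgEquiv.mul_apply, elementary_gen_self, map_add, map_add, map_smul, map_smul, map_smul,
      map_one, hγi, elementary_gen_of_ne he hx hij.symm]

lemma exists_algEquiv_gen_eq_of_mem_degLE {ω : Fin 2 → ℚ} (hω : ∀ i, 0 < ω i) {i j : Fin 2}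
    (hij : i ≠ j) (hji : ω j ≤ ω i) {x y : NCPoly K (Fin 2)} (hx : x ∈ degLE K ω (ω i))
    (hy : y ∈ degLE K ω (ω j)) (he : x.coeff (FreeMonoid.of i) ≠ 0)
    (hdet : x.coeff (FreeMonoid.of i) * y.coeff (FreeMonoid.of j) -
      x.coeff (FreeMonoid.of j) * y.coeff (FreeMonoid.of i) ≠ 0) :
    ∃ γ : NCPoly K (Fin 2) ≃ₐ[K] NCPoly K (Fin 2), γ (gen K i) = x ∧ γ (gen K j) = y := by
  set e := x.coeff (FreeMonoid.of i)
  set c := y.coeff (FreeMonoid.of i) / e with hc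
  -- Without `x_i`-term and of weight at most `ω j`, the element `R` is affine in `x_j`.
  set R := y - c • x with hR
  have hRi : R.coeff (FreeMonoid.of i) = 0 := by simp [hR, hc, e, he]
  have hRj : R.coeff (FreeMonoid.of j) ≠ 0 := fun h => hdet <| by
    calc _ = e * R.coeff (FreeMonoid.of j) := by simp [hR, hc]; field_simp
      _ = 0 := by rw [h, mul_zero]
  have hRmem : R ∈ degLE K ω (ω j) := by
    by_cases hy0 : y.coeff (FreeMonoid.of i) = 0
    · simpa [hR, hc, hy0] using hy
    · have hle : ω i ≤ ω j := by simpa using mem_of_coeff_ne_zero hy hy0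
      exact sub_mem hy (Submodule.smul_mem _ c (degLE_mono hle hx))
  have hR_eq : R = R.coeff 1 • 1 + R.coeff (FreeMonoid.of j) • gen K j := by
    have huniv : (Finset.univ : Finset (Fin 2)) = {i, j} := by ext z; simp; omega
    have hmin : ∀ z, ω j ≤ ω z := fun z => by
      obtain rfl | rfl : z = i ∨ z = j := by omega
      exacts [hji, le_rfl]
    simpa [huniv, Finset.sum_pair hij, hRi] using eq_smul_one_add_sum_smul_gen hω hmin hRmem
  obtain ⟨γ, hγi, hγj⟩ := exists_algEquiv_gen_eq (c := c) (d := R.coeff 1) hij he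
    (sub_coeff_smul_gen_mem_adjoin hω hx) hRj
  refine ⟨γ, hγi, ?_⟩
  rw [hγj, add_left_comm, add_comm (_ • gen K j), ← hR_eq, hR, add_sub_cancel]

end Triangular

section Diagonalization

variable {K : Type*} [Field K]

lemma IsCharDecomp.exists_apply_ne_zero {A : Type*} [Ring A] [Algebra K A]
    {σ : Kˣ →* (A ≃ₐ[K] A)} {D : A →ₗ[K] (ℤ →₀ A)} (hD : IsCharDecomp σ D) {ℓ : A →ₗ[K] K} {P : A}
    (hP : ℓ P ≠ 0) : ∃ n, ℓ (D P n) ≠ 0 := by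
  by_contra! h
  exact hP (by rw [← hD.sum_eq P, map_sum, Finset.sum_eq_zero fun n _ => h n])

lemma IsCharDecomp.exists_det_ne_zero {A : Type*} [Ring A] [Algebra K A]
    {σ : Kˣ →* (A ≃ₐ[K] A)} {D : A →ₗ[K] (ℤ →₀ A)} (hD : IsCharDecomp σ D) {ℓ₁ ℓ₂ : A →ₗ[K] K}
    {P Q : A} (hP : ℓ₁ P ≠ 0) (hQ₁ : ℓ₁ Q = 0) (hQ₂ : ℓ₂ Q ≠ 0) :
    ∃ m n, ℓ₁ (D P m) ≠ 0 ∧ ℓ₁ (D P m) * ℓ₂ (D Q n) - ℓ₂ (D P m) * ℓ₁ (D Q n) ≠ 0 := by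
  obtain ⟨m, hm⟩ := hD.exists_apply_ne_zero hP
  obtain ⟨n, hn⟩ := hD.exists_apply_ne_zero (P := Q)
    (ℓ := ℓ₁ (D P m) • ℓ₂ - ℓ₂ (D P m) • ℓ₁) (by simpa [hQ₁] using ⟨hm, hQ₂⟩)
  exact ⟨m, n, hm, by simpa using hn⟩

variable {σ : Kˣ →* (NCPoly K (Fin 2) ≃ₐ[K] NCPoly K (Fin 2))}

theorem IsCharDecomp.exists_diagonal_of_mem_degLE [Infinite K]
    {D : NCPoly K (Fin 2) →ₗ[K] (ℤ →₀ NCPoly K (Fin 2))} (hD : IsCharDecomp σ D) {ω : Fin 2 → ℚ}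
    (hω : ∀ i, 0 < ω i) (hle : ∀ k i, torusDeriv D k (gen K i) ∈ degLE K ω (ω i)) :
    ∃ (γ : NCPoly K (Fin 2) ≃ₐ[K] NCPoly K (Fin 2)) (n : Fin 2 → ℤ),
      ∀ i, γ (gen K i) ∈ charSpace σ (n i) := by
  have hmem (i n) : D (gen K i) n ∈ degLE K ω (ω i) :=
    mem_of_forall_sum_choose_zsmul_mem (V := (degLE K ω (ω i)).toAddSubgroup)
      (fun k => by simpa [torusDeriv_apply] using hle k i) n
  obtain ⟨i, j, hij, hji⟩ : ∃ i j, i ≠ j ∧ ω j ≤ ω i := by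
    obtain h | h := le_total (ω 0) (ω 1)
    exacts [⟨1, 0, by decide, h⟩, ⟨0, 1, by decide, h⟩]
  let coeffAt (z : Fin 2) : NCPoly K (Fin 2) →ₗ[K] K :=
    Finsupp.lapply (FreeMonoid.of z) ∘ₗ (coeffLinearEquiv K).toLinearMap
  have hcoeffAt (z z') : coeffAt z (gen K z') = if z' = z then 1 else 0 := coeff_gen z' z
  obtain ⟨m, n, he, hdet⟩ := hD.exists_det_ne_zero (P := gen K i) (Q := gen K j)
    (ℓ₁ := coeffAt i) (ℓ₂ := coeffAt j) (by simp [hcoeffAt]) (by simp [hcoeffAt, hij.symm])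
    (by simp [hcoeffAt])
  obtain ⟨γ, hγi, hγj⟩ :=
    exists_algEquiv_gen_eq_of_mem_degLE hω hij hji (hmem i m) (hmem j n) he hdet
  refine ⟨γ, fun z => if z = i then m else n, fun z => ?_⟩
  obtain rfl | rfl : z = i ∨ z = j := by omega
  · simpa [hγi] using hD.apply_mem_charSpace _ m
  · simpa [hγj, hij.symm] using hD.apply_mem_charSpace _ n

theorem exists_diagonal [IsAlgClosed K]
    (hσ : ∀ i, ∃ a : ℤ →₀ NCPoly K (Fin 2), ∀ t,
      σ t (gen K i) = a.sum fun m c => ((t ^ m : Kˣ) : K) • c) :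
    ∃ (β : NCPoly K (Fin 2) ≃ₐ[K] NCPoly K (Fin 2)) (n : Fin 2 → ℤ),
      ∀ i, β (gen K i) ∈ charSpace σ (n i) := by
  have : Infinite K := IsAlgClosed.instInfinite
  obtain ⟨D, hD⟩ := exists_isCharDecomp σ hσ
  obtain ⟨W, hW⟩ := exists_isInvariantDegree hD.bddAbove_totalDegree
  let totalWeight (β : NCPoly K (Fin 2) ≃ₐ[K] NCPoly K (Fin 2)) : ℕ := ∑ i, W (β (gen K i))
  let β := Function.argmin totalWeight
  obtain ⟨γ, n, hγ⟩ := (hD.conj β).exists_diagonal_of_mem_degLE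
    (ω := fun i => (W (β (gen K i)) : ℚ)) (fun i => Nat.cast_pos.2 ((hW.conj β).gen_pos i))
    ((hW.conj β).torusDeriv_gen_mem_degLE (hD.conj β) fun ε =>
      Function.argmin_le totalWeight (β * ε))
  refine ⟨β * γ, n, fun i => mem_charSpace.2 fun t => ?_⟩
  have h : β.symm (σ t (β (γ (gen K i)))) = ((t ^ n i : Kˣ) : K) • γ (gen K i) :=
    mem_charSpace.1 (hγ i) t
  rw [AlgEquiv.mul_apply, ← map_smul, ← h, AlgEquiv.apply_symm_apply]

end Diagonalization

end FreeTorus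

theorem one_torus_action_on_F2_linearizable_general {K : Type*} [Field K] [IsAlgClosed K]
    (σ : Kˣ →* (FreeAlgebra K (Fin 2) ≃ₐ[K] FreeAlgebra K (Fin 2)))
    (hσ : ∀ i, ∃ a : ℤ →₀ FreeAlgebra K (Fin 2), ∀ t,
      σ t (ι K i) = a.sum fun m c => ((t ^ m : Kˣ) : K) • c) :
    ∃ (β : FreeAlgebra K (Fin 2) ≃ₐ[K] FreeAlgebra K (Fin 2)) (n : Fin 2 → ℤ),
      ∀ t i, σ t (β (ι K i)) = ((t ^ n i : Kˣ) : K) • β (ι K i) := by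
  let e : FreeAlgebra K (Fin 2) ≃ₐ[K] FreeTorus.NCPoly K (Fin 2) := equivMonoidAlgebraFreeMonoid
  have he (i) : e (ι K i) = FreeTorus.gen K i := by
    simp [e, equivMonoidAlgebraFreeMonoid, FreeTorus.gen, FreeTorus.mon]
  obtain ⟨γ, n, hγ⟩ := FreeTorus.exists_diagonal (σ := (AlgEquiv.autCongr e).toMonoidHom.comp σ)
    fun i => by
      obtain ⟨a, ha⟩ := hσ i
      refine ⟨Finsupp.mapRange.linearMap e.toLinearMap a, fun t => ?_⟩
      rw [Finsupp.mapRange.linearMap_apply, Finsupp.sum_mapRange_index fun _ => smul_zero _, ← he]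
      simp [ha, Finsupp.sum]
  refine ⟨(e.trans γ).trans e.symm, n, fun t i => e.injective ?_⟩
  simpa [he] using FreeTorus.mem_charSpace.1 (hγ i) t

/-- Every effective regular action of the one-dimensional torus `Kˣ` on the free associative
algebra on two generators over an algebraically closed field is linearizable. -/
theorem one_torus_action_on_F2_linearizable
    {K : Type} [Field K] [IsAlgClosed K]
    (σ : Kˣ →* (FreeAlgebra K (Fin 2) ≃ₐ[K] FreeAlgebra K (Fin 2)))
    (hreg : OneTorusActionIsRegular σ)
    (heff : Function.Injective σ) :
    ∃ β : FreeAlgebra K (Fin 2) ≃ₐ[K] FreeAlgebra K (Fin 2),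
      ∀ (t : Kˣ) (i : Fin 2),
        β.symm (σ t (β (ι K i))) ∈
          Submodule.span K (Set.range (ι K : Fin 2 → FreeAlgebra K (Fin 2))) := by
  obtain ⟨β, n, hβ⟩ := one_torus_action_on_F2_linearizable_general σ hreg
  refine ⟨β, fun t i => ?_⟩
  rw [hβ, map_smul, AlgEquiv.symm_apply_apply]
  exact Submodule.smul_mem _ _ (Submodule.subset_span ⟨i, rfl⟩)
end

section
/- Let K be a field and let φ be a K-algebra automorphism of F_2 = FreeAlgebra K (Fin 2) of the form φ(z_1) = z_1 + f and φ(z_2) = z_2 + g for some f, g ∈ F_2 with f ≠ 0 and g ≠ 0. Then f and g cannot both lie in the commutator ideal: ε(f) ≠ 0 or ε(g) ≠ 0. -/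
open FreeAlgebra

/-- The abelianization homomorphism from the free associative algebra to the commutative
polynomial algebra, sending each generator to the corresponding variable.  Its kernel is the
commutator ideal. -/
noncomputable def abelianization (K : Type) [Field K] (n : ℕ) :
    FreeAlgebra K (Fin n) →ₐ[K] MvPolynomial (Fin n) K :=
  FreeAlgebra.lift K fun i => (MvPolynomial.X i : MvPolynomial (Fin n) K)

/-! Suppose that `φ` fixes both generators modulo commutators. Then `φ z_i` is `z_i` plus a
combination of words involving both generators. Give the generators the weights `t` and `t - 1`.
If `φ` is not the identity, take the smallest `t` at which some mixed word of some `φ z_i` weighs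
as much as `z_i`. It lies in `[0, 1]`, and at this `t` no word of `φ z_i` outweighs `z_i`.
Compare words by weight, then by length, then lexicographically. The leading words of `φ z_1` and
`φ z_2` have the distinct weights `t ≥ 0` and `t - 1 ≤ 0`. Commuting words satisfy
`a ^ |b| = b ^ |a|`, so these two do not commute and therefore freely generate a submonoid. Hence no leading
terms cancel, and every word in the range of `φ` is a product of the two leading words. If `φ` is
surjective, each `z_i` is such a product, so it is itself a leading word, and it must be that of
`φ z_i`. But a mixed word of the same weight is longer than `z_i`. -/

open scoped MonoidAlgebra

section FreeSubmonoids

variable {σ α M : Type*} [Monoid M]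

theorem lift_injective_of_mul_right_eq [IsLeftCancelMul M] {m : σ → M} (hne : ∀ i x, m i * x ≠ 1)
    (h : ∀ i j x y, m i * x = m j * y → i = j) : Function.Injective (FreeMonoid.lift m) := by
  intro u
  induction u using FreeMonoid.inductionOn' with
  | one =>
    intro v huv
    cases v using FreeMonoid.casesOn with
    | one => rfl
    | of_mul j v => exact absurd huv.symm (by simpa using hne j _)
  | of_mul i u ih =>
    intro v huv
    cases v using FreeMonoid.casesOn with
    | one => exact absurd huv (by simpa using hne i _)
    | of_mul j v =>
      simp only [map_mul, FreeMonoid.lift_eval_of] at huv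
      obtain rfl := h i j _ _ huv
      rw [ih (mul_left_cancel huv)]

theorem lift_op_eq_op_lift_reverse (m : σ → M) (u : FreeMonoid σ) :
    FreeMonoid.lift (fun i => MulOpposite.op (m i)) u =
      MulOpposite.op (FreeMonoid.lift m u.reverse) := by
  induction u using FreeMonoid.inductionOn' with
  | one => rfl
  | of_mul i u ih => simp [FreeMonoid.reverse_mul, ih]

theorem lift_injective_of_mul_left_eq [IsRightCancelMul M] {m : σ → M} (hne : ∀ i x, x * m i ≠ 1)
    (h : ∀ i j x y, x * m i = y * m j → i = j) : Function.Injective (FreeMonoid.lift m) := by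
  have hop : Function.Injective (FreeMonoid.lift fun i => MulOpposite.op (m i)) :=
    lift_injective_of_mul_right_eq (fun i x hx => hne i x.unop (MulOpposite.op_injective hx))
      fun i j x y hxy => h i j x.unop y.unop (MulOpposite.op_injective hxy)
  intro u v huv
  have hrev : u.reverse = v.reverse := hop (by
    simpa only [lift_op_eq_op_lift_reverse, FreeMonoid.reverse_reverse] using
      congrArg MulOpposite.op huv)
  exact List.reverse_injective hrev

theorem lift_of_mul_injective (c : σ → FreeMonoid σ) :
    Function.Injective (FreeMonoid.lift fun i => FreeMonoid.of i * c i) := by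
  refine lift_injective_of_mul_right_eq (fun i x h => ?_) fun i j x y h => ?_
  · exact List.cons_ne_nil _ _ h
  · exact (List.cons.inj h).1

theorem exists_eq_mul_or_eq_mul_of_mul_eq_mul {a b x y : FreeMonoid α} (h : x * a = y * b) :
    (∃ t, b = t * a) ∨ ∃ t, a = t * b := by
  have hsuffix := List.suffix_or_suffix_of_suffix (⟨x, rfl⟩ : a.toList <:+ x * a) ⟨y, h.symm⟩
  exact hsuffix.imp (fun ⟨t, ht⟩ => ⟨t, ht.symm⟩) fun ⟨t, ht⟩ => ⟨t, ht.symm⟩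

theorem lift_update_mul_eq [DecidableEq σ] (m : σ → M) {i j : σ} (hij : i ≠ j) {t : M}
    (hj : m j = t * m i) (u : FreeMonoid σ) :
    FreeMonoid.lift m u = FreeMonoid.lift (Function.update m j t)
      (FreeMonoid.lift (fun k => FreeMonoid.of k * if k = j then FreeMonoid.of i else 1) u) := by
  rw [FreeMonoid.hom_map_lift]
  congr 2
  funext k
  by_cases hk : k = j
  · subst hk; simp [hij, hj]
  · simp [hk]

theorem lift_injective_of_pairwise_not_commute (m : Fin 2 → FreeMonoid α)
    (h : Pairwise fun i j => ¬ Commute (m i) (m j)) : Function.Injective (FreeMonoid.lift m) := by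
  induction hN : ∑ k, (m k).length using Nat.strong_induction_on generalizing m with
  | _ N ih =>
  have hne (i) : m i ≠ 1 := fun hi =>
    have ⟨_, hij⟩ := exists_ne i
    h hij (hi ▸ Commute.one_right _)
  -- One word is a suffix of the other and can be stripped off, or the two form a suffix code.
  by_cases hsuffix : ∃ i j t, i ≠ j ∧ m j = t * m i
  · obtain ⟨i, j, t, hij, hj⟩ := hsuffix
    have hlength : (fun k => (Function.update m j t k).length) < fun k => (m k).length := by
      rw [show (fun k => (Function.update m j t k).length) =
        Function.update (fun k => (m k).length) j t.length from Function.comp_update _ _ _ _]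
      rw [update_lt_self_iff, hj, FreeMonoid.length_mul]
      have := mt FreeMonoid.length_eq_zero.mp (hne i)
      lia
    have hcomm : ¬ Commute t (m i) := fun hc =>
      h hij.symm (hj ▸ hc.mul_left (Commute.refl _))
    have hinj : Function.Injective (FreeMonoid.lift (Function.update m j t)) := by
      refine ih _ (hN ▸ Fintype.sum_strictMono hlength) _ (fun k l hkl => ?_) rfl
      obtain ⟨rfl, rfl⟩ | ⟨rfl, rfl⟩ : k = i ∧ l = j ∨ k = j ∧ l = i := by lia
      · simpa [hij] using fun hc => hcomm (Commute.symm hc)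
      · simpa [hij] using hcomm
    rw [show ⇑(FreeMonoid.lift m) = _ from funext (lift_update_mul_eq m hij hj)]
    exact hinj.comp (lift_of_mul_injective _)
  · push Not at hsuffix
    refine lift_injective_of_mul_left_eq (fun i x hx => ?_) fun i j x y hxy => ?_
    · exact hne i (List.append_eq_nil_iff.mp hx).2
    · by_contra hij
      obtain ⟨t, ht⟩ | ⟨t, ht⟩ := exists_eq_mul_or_eq_mul_of_mul_eq_mul hxy
      · exact hsuffix i j t hij ht
      · exact hsuffix j i t (Ne.symm hij) ht

theorem exists_eq_of_of_lift_eq_of {m : σ → FreeMonoid α}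
    (hm : Function.Injective (FreeMonoid.lift m)) {u : FreeMonoid σ} {x : α}
    (h : FreeMonoid.lift m u = FreeMonoid.of x) : ∃ k, m k = FreeMonoid.of x := by
  cases u using FreeMonoid.casesOn with
  | one => exact absurd h.symm (FreeMonoid.of_ne_one x)
  | of_mul k u =>
    have hk : m k ≠ 1 := fun hk =>
      FreeMonoid.of_ne_one k (hm (by rw [FreeMonoid.lift_eval_of, hk, map_one]))
    rw [map_mul, FreeMonoid.lift_eval_of] at h
    have hlength := congrArg FreeMonoid.length h
    rw [FreeMonoid.length_mul, FreeMonoid.length_of] at hlength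
    have hu : FreeMonoid.lift m u = 1 := FreeMonoid.length_eq_zero.mp <| by
      have := mt FreeMonoid.length_eq_zero.mp hk
      lia
    exact ⟨k, by rwa [hu, mul_one] at h⟩

end FreeSubmonoids

section CommutingWords

variable {α : Type*}

theorem length_pow_eq_mul (a : FreeMonoid α) (n : ℕ) : (a ^ n).length = n * a.length := by
  induction n with
  | zero => simp
  | succ n ih => rw [pow_succ, FreeMonoid.length_mul, ih, Nat.succ_mul]

theorem pow_length_eq_pow_length_of_commute {a b : FreeMonoid α} (h : Commute a b) :
    a ^ b.length = b ^ a.length := by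
  have hlength : (a ^ b.length).length = (b ^ a.length).length := by
    rw [length_pow_eq_mul, length_pow_eq_mul, mul_comm]
  exact (List.append_inj (h.pow_pow b.length a.length).eq hlength).1

end CommutingWords

section LeadingMonomials

variable {R M Γ : Type*} [Semiring R] [LinearOrder Γ] {k : M → Γ}

/-- `m` is the leading monomial of `a` when the monomials are ordered by their keys `k`. -/
def IsLeadingMonomial (k : M → Γ) (a : R[M]) (m : M) : Prop :=
  m ∈ a.coeff.support ∧ ∀ w ∈ a.coeff.support, k w ≤ k m

theorem exists_isLeadingMonomial (k : M → Γ) {a : R[M]} (ha : a ≠ 0) :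
    ∃ m, IsLeadingMonomial k a m :=
  a.coeff.support.exists_max_image k
    (Finsupp.support_nonempty_iff.mpr (mt MonoidAlgebra.coeff_eq_zero.mp ha))

theorem exists_mem_support_linearCombination [NoZeroDivisors R] {τ : Type*}
    (hk : Function.Injective k) {a : τ → R[M]} {n : τ → M}
    (ha : ∀ i, IsLeadingMonomial k (a i) (n i)) (hn : Function.Injective n) {c : τ →₀ R}
    (hc : c ≠ 0) : ∃ i, n i ∈ (Finsupp.linearCombination R a c).coeff.support := by
  obtain ⟨i, hi, hmax⟩ := c.support.exists_max_image (k ∘ n) (Finsupp.support_nonempty_iff.mpr hc)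
  refine ⟨i, ?_⟩
  have hcoeff : (Finsupp.linearCombination R a c).coeff (n i) = c i * (a i).coeff (n i) := by
    rw [Finsupp.linearCombination_apply, Finsupp.sum, MonoidAlgebra.coeff_sum,
      Finsupp.finsetSum_apply, Finset.sum_eq_single_of_mem i hi]
    · rfl
    · intro j hj hji
      have hnotMem : n i ∉ (a j).coeff.support := fun hmem =>
        hji (hn (hk ((hmax j hj).antisymm ((ha j).2 _ hmem))))
      rw [MonoidAlgebra.coeff_smul_apply, Finsupp.notMem_support_iff.mp hnotMem, smul_zero]
  rw [Finsupp.mem_support_iff, hcoeff]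
  exact mul_ne_zero (Finsupp.mem_support_iff.mp hi) (Finsupp.mem_support_iff.mp (ha i).1)

variable [Monoid M]

/-- A map `k` through which a linear order pulls back to a monomial order on `M`: a total order
for which left and right multiplication are strictly monotone.  No well-foundedness is required. -/
structure IsMonomialKey (k : M → Γ) : Prop where
  injective : Function.Injective k
  mul_left_lt : ∀ c {a b}, k a < k b → k (c * a) < k (c * b)
  mul_right_lt : ∀ c {a b}, k a < k b → k (a * c) < k (b * c)

namespace IsMonomialKey

theorem mul_left_le (hk : IsMonomialKey k) (c : M) {a b : M} (h : k a ≤ k b) :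
    k (c * a) ≤ k (c * b) :=
  h.eq_or_lt.elim (fun h => by rw [hk.injective h]) fun h => (hk.mul_left_lt c h).le

theorem mul_right_le (hk : IsMonomialKey k) (c : M) {a b : M} (h : k a ≤ k b) :
    k (a * c) ≤ k (b * c) :=
  h.eq_or_lt.elim (fun h => by rw [hk.injective h]) fun h => (hk.mul_right_lt c h).le

theorem mul_le_mul (hk : IsMonomialKey k) {a b c d : M} (hab : k a ≤ k b) (hcd : k c ≤ k d) :
    k (a * c) ≤ k (b * d) :=
  (hk.mul_right_le c hab).trans (hk.mul_left_le b hcd)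

theorem eq_and_eq_of_mul_eq_mul (hk : IsMonomialKey k) {a b c d : M} (hab : k a ≤ k b)
    (hcd : k c ≤ k d) (h : a * c = b * d) : a = b ∧ c = d := by
  constructor
  · by_contra hne
    have hlt := hk.mul_right_lt c (hab.lt_of_ne (hk.injective.ne hne))
    exact (hlt.trans_le (hk.mul_left_le b hcd)).ne (congrArg k h)
  · by_contra hne
    have hlt := hk.mul_left_lt b (hcd.lt_of_ne (hk.injective.ne hne))
    exact ((hk.mul_right_le c hab).trans_lt hlt).ne (congrArg k h)

end IsMonomialKey

theorem isLeadingMonomial_of [Nontrivial R] (k : M → Γ) (m : M) :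
    IsLeadingMonomial k (MonoidAlgebra.of R M m) m := by
  simp [IsLeadingMonomial]

theorem IsLeadingMonomial.mul [NoZeroDivisors R] (hk : IsMonomialKey k) {a b : R[M]} {m n : M}
    (ha : IsLeadingMonomial k a m) (hb : IsLeadingMonomial k b n) :
    IsLeadingMonomial k (a * b) (m * n) := by
  classical
  constructor
  · have hunique : UniqueMul a.coeff.support b.coeff.support m n := fun p q hp hq hpq =>
      hk.eq_and_eq_of_mul_eq_mul (ha.2 p hp) (hb.2 q hq) hpq
    rw [Finsupp.mem_support_iff, MonoidAlgebra.coeff_mul_mul_of_uniqueMul hunique]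
    exact mul_ne_zero (Finsupp.mem_support_iff.mp ha.1) (Finsupp.mem_support_iff.mp hb.1)
  · intro w hw
    obtain ⟨p, hp, q, hq, rfl⟩ :=
      Finset.mem_mul.mp (MonoidAlgebra.support_coeff_mul_subset a b hw)
    exact hk.mul_le_mul (ha.2 p hp) (hb.2 q hq)

end LeadingMonomials

section MonomialsInRange

variable {R M Γ σ : Type*} [CommSemiring R] [NoZeroDivisors R] [Nontrivial R] [Monoid M]
  [LinearOrder Γ] {k : M → Γ} {ψ : R[FreeMonoid σ] →ₐ[R] R[M]} {m : σ → M}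

theorem isLeadingMonomial_map_word (hk : IsMonomialKey k)
    (hψ : ∀ i, IsLeadingMonomial k (ψ (MonoidAlgebra.of R _ (FreeMonoid.of i))) (m i))
    (u : FreeMonoid σ) :
    IsLeadingMonomial k (ψ (MonoidAlgebra.of R _ u)) (FreeMonoid.lift m u) := by
  induction u using FreeMonoid.inductionOn' with
  | one => simpa only [map_one] using isLeadingMonomial_of k (1 : M)
  | of_mul i u ih => simpa only [map_mul, FreeMonoid.lift_eval_of] using (hψ i).mul hk ih

theorem exists_lift_eq_of_map_eq_of (hk : IsMonomialKey k)
    (hψ : ∀ i, IsLeadingMonomial k (ψ (MonoidAlgebra.of R _ (FreeMonoid.of i))) (m i))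
    (hm : Function.Injective (FreeMonoid.lift m)) {P : R[FreeMonoid σ]} {n : M}
    (hP : ψ P = MonoidAlgebra.of R M n) : ∃ u, FreeMonoid.lift m u = n := by
  have hP0 : P.coeff ≠ 0 := by
    rw [Ne, MonoidAlgebra.coeff_eq_zero]
    rintro rfl
    exact MonoidAlgebra.single_ne_zero.mpr one_ne_zero (hP.symm.trans (map_zero ψ))
  have hlinear : Finsupp.linearCombination R (fun u => ψ (MonoidAlgebra.of R _ u)) P.coeff =
      MonoidAlgebra.of R M n := by
    rw [← hP]
    conv_rhs => rw [← MonoidAlgebra.sum_coeff_single P]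
    rw [Finsupp.linearCombination_apply, map_finsuppSum]
    refine Finset.sum_congr rfl fun u _ => ?_
    simp only [MonoidAlgebra.of_apply, ← map_smul, MonoidAlgebra.smul_single, smul_eq_mul, mul_one]
  obtain ⟨u, hu⟩ := exists_mem_support_linearCombination hk.injective
    (isLeadingMonomial_map_word hk hψ) hm hP0
  rw [hlinear] at hu
  exact ⟨u, Finset.mem_singleton.mp (Finsupp.support_single_subset hu)⟩

end MonomialsInRange

section WeightedWords

variable {α : Type*}

theorem lex_append_of_length_eq {r : α → α → Prop} {a b : List α} (c : List α)
    (hlength : a.length = b.length) (h : List.Lex r a b) : List.Lex r (a ++ c) (b ++ c) := by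
  induction h with
  | nil => simp at hlength
  | cons _ ih => exact .cons (ih (by simpa using hlength))
  | rel h => exact .rel h

theorem shortlex_append_right {r : α → α → Prop} {a b : List α} (c : List α)
    (h : List.Shortlex r a b) :
    List.Shortlex r (a ++ c) (b ++ c) := by
  obtain hlt | ⟨heq, hlex⟩ := List.shortlex_def.mp h
  · exact .of_length_lt (by simpa using hlt)
  · exact .of_lex (by simpa using heq) (lex_append_of_length_eq c heq hlex)

variable {G : Type*} [AddMonoid G]

/-- The weight of a word is the sum of the weights `v` of its letters. -/
def wordWeight (v : α → G) (w : FreeMonoid α) : G := (w.toList.map v).sum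

@[simp]
theorem wordWeight_one (v : α → G) : wordWeight v 1 = 0 := rfl

@[simp]
theorem wordWeight_of (v : α → G) (x : α) : wordWeight v (FreeMonoid.of x) = v x := by
  simp [wordWeight]

@[simp]
theorem wordWeight_mul (v : α → G) (a b : FreeMonoid α) :
    wordWeight v (a * b) = wordWeight v a + wordWeight v b := by
  simp [wordWeight]

theorem wordWeight_pow (v : α → G) (a : FreeMonoid α) (n : ℕ) :
    wordWeight v (a ^ n) = n • wordWeight v a := by
  induction n with
  | zero => simp
  | succ n ih => rw [pow_succ, wordWeight_mul, ih, succ_nsmul]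

theorem length_nsmul_wordWeight_eq_of_commute {a b : FreeMonoid α} (h : Commute a b) (v : α → G) :
    b.length • wordWeight v a = a.length • wordWeight v b := by
  rw [← wordWeight_pow, ← wordWeight_pow, pow_length_eq_pow_length_of_commute h]

variable [LinearOrder G] [LinearOrder α] {v : α → G}

/-- The key ordering words by weight, then by length, then lexicographically. The iterated
lexicographic product supplies the linear order. -/
def weightKey (v : α → G) (w : FreeMonoid α) : G ×ₗ (ℕ ×ₗ List α) :=
  toLex (wordWeight v w, toLex (w.length, w.toList))

theorem weightKey_lt_weightKey_iff {a b : FreeMonoid α} :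
    weightKey v a < weightKey v b ↔ wordWeight v a < wordWeight v b ∨
      wordWeight v a = wordWeight v b ∧ List.Shortlex (· < ·) a.toList b.toList := by
  simp only [weightKey, Prod.Lex.toLex_lt_toLex, List.shortlex_def]
  rfl

theorem length_le_of_weightKey_le {a b : FreeMonoid α} (h : weightKey v a ≤ weightKey v b)
    (hw : wordWeight v a = wordWeight v b) : a.length ≤ b.length := by
  by_contra! hlt
  exact h.not_gt (weightKey_lt_weightKey_iff.mpr (.inr ⟨hw.symm, .of_length_lt hlt⟩))

theorem wordWeight_le_of_weightKey_le {a b : FreeMonoid α} (h : weightKey v a ≤ weightKey v b) :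
    wordWeight v a ≤ wordWeight v b := by
  by_contra! hlt
  exact h.not_gt (weightKey_lt_weightKey_iff.mpr (.inl hlt))

end WeightedWords

section OrderedWeights

variable {α G : Type*} [AddCommMonoid G] [LinearOrder G] [IsOrderedCancelAddMonoid G] {v : α → G}

theorem not_commute_of_wordWeight_lt {a b : FreeMonoid α} (ha : a ≠ 1) (hb : b ≠ 1)
    (hwa : wordWeight v a ≤ 0) (hwb : 0 ≤ wordWeight v b) (hlt : wordWeight v a < wordWeight v b) :
    ¬ Commute a b := by
  intro h
  have hla : a.length ≠ 0 := mt FreeMonoid.length_eq_zero.mp ha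
  have hlb : b.length ≠ 0 := mt FreeMonoid.length_eq_zero.mp hb
  have heq := length_nsmul_wordWeight_eq_of_commute h v
  obtain hwa | hwa := hwa.lt_or_eq
  · exact ((nsmul_neg hwa hlb).trans_le (nsmul_nonneg hwb _)).ne heq
  · exact ((nsmul_nonpos hwa.le _).trans_lt (nsmul_pos (hwa ▸ hlt) hla)).ne heq

theorem isMonomialKey_weightKey [LinearOrder α] (v : α → G) : IsMonomialKey (weightKey v) where
  injective _ _ h := congrArg (fun p => (ofLex (ofLex p).2).2) h
  mul_left_lt c a b h := by
    rw [weightKey_lt_weightKey_iff] at h ⊢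
    simp only [wordWeight_mul, FreeMonoid.toList_mul, add_lt_add_iff_left, add_right_inj]
    exact h.imp_right (.imp_right fun h => h.append_left _)
  mul_right_lt c a b h := by
    rw [weightKey_lt_weightKey_iff] at h ⊢
    simp only [wordWeight_mul, FreeMonoid.toList_mul, add_lt_add_iff_right, add_left_inj]
    exact h.imp_right (.imp_right (shortlex_append_right _))

end OrderedWeights

section GeneratorAddMixed

variable {R : Type*} [Semiring R]

/-- `a` is the generator `i` plus a combination of words involving both generators; the coefficients
of an element congruent to this generator modulo commutators have this shape. -/
structure IsGeneratorAddMixed (i : Fin 2) (a : R[FreeMonoid (Fin 2)]) : Prop where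
  coeff_of : a.coeff (FreeMonoid.of i) = 1
  eq_of_or_forall_mem : ∀ w ∈ a.coeff.support, w = FreeMonoid.of i ∨ ∀ j, j ∈ w

theorem two_le_length_of_forall_mem {w : FreeMonoid (Fin 2)} (h : ∀ j, j ∈ w) : 2 ≤ w.length :=
  (List.subperm_of_subset (List.nodup_finRange 2) fun j _ => h j).length_le

namespace IsGeneratorAddMixed

variable {i : Fin 2} {a : R[FreeMonoid (Fin 2)]} {w : FreeMonoid (Fin 2)}

theorem of_mem_support [Nontrivial R] (ha : IsGeneratorAddMixed i a) :
    FreeMonoid.of i ∈ a.coeff.support := by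
  rw [Finsupp.mem_support_iff, ha.coeff_of]
  exact one_ne_zero

theorem ne_one (ha : IsGeneratorAddMixed i a) (hw : w ∈ a.coeff.support) : w ≠ 1 := by
  rintro rfl
  obtain h | h := ha.eq_of_or_forall_mem 1 hw
  · exact FreeMonoid.of_ne_one i h.symm
  · exact FreeMonoid.notMem_one (h 0)

theorem eq_of_length_le_one (ha : IsGeneratorAddMixed i a) (hw : w ∈ a.coeff.support)
    (hlength : w.length ≤ 1) : w = FreeMonoid.of i :=
  (ha.eq_of_or_forall_mem w hw).resolve_right fun h =>
    (two_le_length_of_forall_mem h).not_gt (Nat.lt_succ_of_le hlength)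

theorem eq_of [Nontrivial R] (ha : IsGeneratorAddMixed i a)
    (h : ∀ w ∈ a.coeff.support, w = FreeMonoid.of i) :
    a = MonoidAlgebra.of R _ (FreeMonoid.of i) := by
  ext w
  by_cases hw : w ∈ a.coeff.support
  · simp [h w hw, ha.coeff_of]
  · have hne : FreeMonoid.of i ≠ w := fun hw' => hw (hw' ▸ ha.of_mem_support)
    simp [Finsupp.notMem_support_iff.mp hw, hne]

theorem exists_isLeadingMonomial_wordWeight_eq [Nontrivial R] (ha : IsGeneratorAddMixed i a)
    {G : Type*} [AddMonoid G] [LinearOrder G] {v : Fin 2 → G}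
    (hle : ∀ w ∈ a.coeff.support, wordWeight v w ≤ v i) :
    ∃ m, IsLeadingMonomial (weightKey v) a m ∧ wordWeight v m = v i := by
  have ha0 : a ≠ 0 := by
    rintro rfl
    simpa using ha.of_mem_support
  obtain ⟨m, hm⟩ := exists_isLeadingMonomial (weightKey v) ha0
  refine ⟨m, hm, (hle m hm.1).antisymm ?_⟩
  simpa using wordWeight_le_of_weightKey_le (hm.2 _ ha.of_mem_support)

end IsGeneratorAddMixed

end GeneratorAddMixed

section CommutatorIdeal

variable {R σ : Type*} [CommSemiring R]

theorem toFinsupp_coe_eq_single_iff [DecidableEq σ] {l : List σ} {i : σ} {n : ℕ} :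
    Multiset.toFinsupp (l : Multiset σ) = Finsupp.single i n ↔ l = List.replicate n i := by
  rw [Multiset.toFinsupp_eq_iff, Finsupp.toMultiset_single, Multiset.nsmul_singleton,
    ← Multiset.coe_replicate, Multiset.coe_eq_coe, List.perm_replicate]

theorem lift_X_word_eq_monomial [DecidableEq σ] (w : FreeMonoid σ) :
    FreeAlgebra.lift R (MvPolynomial.X (R := R)) (FreeMonoid.lift (ι R) w) =
      MvPolynomial.monomial (Multiset.toFinsupp (w.toList : Multiset σ)) 1 := by
  induction w using FreeMonoid.inductionOn' with
  | one => simp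
  | of_mul i w ih =>
    rw [map_mul, map_mul, ih, FreeMonoid.lift_eval_of, FreeAlgebra.lift_ι_apply, MvPolynomial.X,
      MvPolynomial.monomial_mul, one_mul, FreeMonoid.toList_of_mul, ← Multiset.cons_coe,
      ← Multiset.singleton_add, Multiset.toFinsupp_add, Multiset.toFinsupp_singleton]

theorem coeff_replicate_eq_coeff_single (a : FreeAlgebra R σ) (i : σ) (n : ℕ) :
    (equivMonoidAlgebraFreeMonoid a).coeff (FreeMonoid.ofList (List.replicate n i)) =
      (FreeAlgebra.lift R (MvPolynomial.X (R := R)) a).coeff (Finsupp.single i n) := by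
  classical
  obtain ⟨b, rfl⟩ := equivMonoidAlgebraFreeMonoid.symm.surjective a
  rw [AlgEquiv.apply_symm_apply]
  induction b using MonoidAlgebra.induction_linear with
  | zero => simp
  | add b c hb hc => simp [hb, hc]
  | single w r =>
    have hword : equivMonoidAlgebraFreeMonoid.symm (MonoidAlgebra.single w r) =
        r • FreeMonoid.lift (ι R) w := by
      simp [equivMonoidAlgebraFreeMonoid]
    rw [hword, map_smul, lift_X_word_eq_monomial, MvPolynomial.coeff_smul,
      MvPolynomial.coeff_monomial, MonoidAlgebra.coeff_single, Finsupp.single_apply, smul_eq_mul,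
      mul_ite, mul_one, mul_zero]
    exact if_congr toFinsupp_coe_eq_single_iff.symm rfl rfl

theorem eq_replicate_of_notMem {w : FreeMonoid (Fin 2)} {i : Fin 2} (h : i ∉ w) :
    w = FreeMonoid.ofList (List.replicate w.length (1 - i)) := by
  refine List.eq_replicate_iff.mpr ⟨rfl, fun j hj => ?_⟩
  have hji : j ≠ i := fun hji => h (hji ▸ hj)
  lia

theorem isGeneratorAddMixed_of_lift_X_eq {i : Fin 2} {a : FreeAlgebra R (Fin 2)}
    (ha : FreeAlgebra.lift R (MvPolynomial.X (R := R)) a = MvPolynomial.X i) :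
    IsGeneratorAddMixed i (equivMonoidAlgebraFreeMonoid a) where
  coeff_of := by
    have h := coeff_replicate_eq_coeff_single a i 1
    rwa [ha, MvPolynomial.coeff_X_same] at h
  eq_of_or_forall_mem w hw := by
    by_contra! ⟨hwi, j, hj⟩
    have hpure := eq_replicate_of_notMem hj
    have hcoeff : (MvPolynomial.X i : MvPolynomial (Fin 2) R).coeff
        (Finsupp.single (1 - j) w.length) ≠ 0 := by
      rwa [← ha, ← coeff_replicate_eq_coeff_single, ← hpure, ← Finsupp.mem_support_iff]
    rw [MvPolynomial.coeff_X] at hcoeff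
    have hsingle : Finsupp.single i 1 = Finsupp.single (1 - j) w.length :=
      of_not_not fun h => hcoeff (if_neg h)
    exact hwi (toFinsupp_coe_eq_single_iff.mp
      ((toFinsupp_coe_eq_single_iff.mpr hpure).trans hsingle.symm))

end CommutatorIdeal

section SupportingWeights

theorem count_zero_add_count_one (w : FreeMonoid (Fin 2)) :
    w.toList.count 0 + w.toList.count 1 = w.length := by
  simpa [Fin.sum_univ_two, FreeMonoid.length] using
    Multiset.sum_count_eq_card (s := Finset.univ) (m := (w.toList : Multiset (Fin 2)))

theorem wordWeight_eq_mul_length_sub_count (t : ℚ) (w : FreeMonoid (Fin 2)) :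
    wordWeight ![t, t - 1] w = t * w.length - w.toList.count 1 := by
  induction w using FreeMonoid.inductionOn' with
  | one => simp
  | of_mul i w ih =>
    rw [wordWeight_mul, wordWeight_of, ih, FreeMonoid.length_mul, FreeMonoid.length_of]
    fin_cases i <;> simp <;> ring

/-- The value of `t` at which the word `w` has the same weight as the generator `i` when the
generators have weights `t` and `t - 1`. The subtracted `i` is the number of occurrences of the
generator `1` in the word `i`. For words of length one the value is a junk `0` from division by
`0`. -/
def criticalWeight (i : Fin 2) (w : FreeMonoid (Fin 2)) : ℚ :=
  (w.toList.count 1 - (i : ℕ)) / (w.length - 1)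

theorem length_sub_one_pos_of_forall_mem {w : FreeMonoid (Fin 2)} (h : ∀ j, j ∈ w) :
    (0 : ℚ) < w.length - 1 :=
  sub_pos.mpr (by exact_mod_cast two_le_length_of_forall_mem h)

theorem criticalWeight_mem_Icc (i : Fin 2) {w : FreeMonoid (Fin 2)} (h : ∀ j, j ∈ w) :
    criticalWeight i w ∈ Set.Icc 0 1 := by
  have hlength := length_sub_one_pos_of_forall_mem h
  have hcount (j) : (1 : ℚ) ≤ w.toList.count j := by
    exact_mod_cast List.count_pos_iff.mpr (h j)
  have hsum : (w.toList.count 0 + w.toList.count 1 : ℚ) = w.length := by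
    exact_mod_cast count_zero_add_count_one w
  have hi0 : (0 : ℚ) ≤ (i : ℕ) := Nat.cast_nonneg _
  have hi1 : ((i : ℕ) : ℚ) ≤ 1 := by exact_mod_cast i.is_le
  exact ⟨div_nonneg (by linarith [hcount 1, hi1]) hlength.le,
    (div_le_one hlength).mpr (by linarith [hcount 0, hi0])⟩

theorem sub_wordWeight_eq (t : ℚ) (i : Fin 2) {w : FreeMonoid (Fin 2)} (h : ∀ j, j ∈ w) :
    ![t, t - 1] i - wordWeight ![t, t - 1] w = (criticalWeight i w - t) * (w.length - 1) := by
  rw [wordWeight_eq_mul_length_sub_count, sub_mul, criticalWeight,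
    div_mul_cancel₀ _ (length_sub_one_pos_of_forall_mem h).ne']
  fin_cases i <;> simp <;> ring

theorem exists_supporting_weight (S : Fin 2 → Finset (FreeMonoid (Fin 2)))
    (hS : ∀ i, ∀ w ∈ S i, ∀ j, j ∈ w) (hne : ∃ i, (S i).Nonempty) :
    ∃ t ∈ Set.Icc (0 : ℚ) 1, (∀ i, ∀ w ∈ S i, wordWeight ![t, t - 1] w ≤ ![t, t - 1] i) ∧
      ∃ i, ∃ w ∈ S i, wordWeight ![t, t - 1] w = ![t, t - 1] i := by
  obtain ⟨⟨i, w⟩, hiw, hmin⟩ := (Finset.univ.sigma S).exists_min_image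
    (fun p => criticalWeight p.1 p.2) (Finset.sigma_nonempty.mpr (by simpa using hne))
  have hw : w ∈ S i := (Finset.mem_sigma.mp hiw).2
  refine ⟨criticalWeight i w, criticalWeight_mem_Icc i (hS i w hw), fun j u hu => ?_, i, w, hw, ?_⟩
  · have hle : criticalWeight i w ≤ criticalWeight j u :=
      hmin ⟨j, u⟩ (Finset.mem_sigma.mpr ⟨Finset.mem_univ j, hu⟩)
    rw [← sub_nonneg, sub_wordWeight_eq _ _ (hS j u hu)]
    exact mul_nonneg (sub_nonneg.mpr hle) (length_sub_one_pos_of_forall_mem (hS j u hu)).le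
  · rw [eq_comm, ← sub_eq_zero, sub_wordWeight_eq _ _ (hS i w hw), sub_self, zero_mul]

end SupportingWeights

section Surjective

variable {R : Type*} [CommSemiring R] [NoZeroDivisors R] [Nontrivial R]
  {ψ : R[FreeMonoid (Fin 2)] →ₐ[R] R[FreeMonoid (Fin 2)]}

theorem leadingMonomial_eq_of_surjective (hsurj : Function.Surjective ψ)
    (hψ : ∀ i, IsGeneratorAddMixed i (ψ (MonoidAlgebra.of R _ (FreeMonoid.of i)))) {t : ℚ}
    (ht : t ∈ Set.Icc 0 1) {m : Fin 2 → FreeMonoid (Fin 2)}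
    (hlead : ∀ i, IsLeadingMonomial (weightKey ![t, t - 1])
      (ψ (MonoidAlgebra.of R _ (FreeMonoid.of i))) (m i))
    (hweight : ∀ i, wordWeight ![t, t - 1] (m i) = ![t, t - 1] i) (i : Fin 2) :
    m i = FreeMonoid.of i := by
  have hm1 (i) : m i ≠ 1 := (hψ i).ne_one (hlead i).1
  have hcomm : ¬ Commute (m 1) (m 0) := by
    apply not_commute_of_wordWeight_lt (v := ![t, t - 1]) (hm1 1) (hm1 0) <;>
      simp [hweight, ht.1, ht.2]
  have hinj : Function.Injective (FreeMonoid.lift m) :=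
    lift_injective_of_pairwise_not_commute m fun i j hij => by
      obtain ⟨rfl, rfl⟩ | ⟨rfl, rfl⟩ : i = 0 ∧ j = 1 ∨ i = 1 ∧ j = 0 := by lia
      · exact fun h => hcomm h.symm
      · exact hcomm
  obtain ⟨P, hP⟩ := hsurj (MonoidAlgebra.of R _ (FreeMonoid.of i))
  obtain ⟨u, hu⟩ := exists_lift_eq_of_map_eq_of (isMonomialKey_weightKey _) hlead hinj hP
  obtain ⟨k, hk⟩ := exists_eq_of_of_lift_eq_of hinj hu
  have hmk : m k = FreeMonoid.of k :=
    (hψ k).eq_of_length_le_one (hlead k).1 (by rw [hk, FreeMonoid.length_of])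
  obtain rfl : k = i := FreeMonoid.of_injective (hmk.symm.trans hk)
  exact hmk

theorem eq_of_mem_support_of_surjective (hsurj : Function.Surjective ψ)
    (hψ : ∀ i, IsGeneratorAddMixed i (ψ (MonoidAlgebra.of R _ (FreeMonoid.of i)))) (i : Fin 2) :
    ∀ w ∈ (ψ (MonoidAlgebra.of R _ (FreeMonoid.of i))).coeff.support, w = FreeMonoid.of i := by
  classical
  by_contra! ⟨w₀, hw₀, hne₀⟩
  let mixed (i : Fin 2) : Finset (FreeMonoid (Fin 2)) :=
    (ψ (MonoidAlgebra.of R _ (FreeMonoid.of i))).coeff.support.erase (FreeMonoid.of i)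
  have hmixed (i) : ∀ w ∈ mixed i, ∀ j, j ∈ w := fun w hw =>
    ((hψ i).eq_of_or_forall_mem w (Finset.mem_of_mem_erase hw)).resolve_left
      (Finset.ne_of_mem_erase hw)
  obtain ⟨t, ht, hle, j, w, hw, hwj⟩ := exists_supporting_weight mixed hmixed
    ⟨i, w₀, Finset.mem_erase.mpr ⟨hne₀, hw₀⟩⟩
  have hle_all (i) : ∀ w ∈ (ψ (MonoidAlgebra.of R _ (FreeMonoid.of i))).coeff.support,
      wordWeight ![t, t - 1] w ≤ ![t, t - 1] i := fun w hw => by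
    by_cases hwi : w = FreeMonoid.of i
    · rw [hwi, wordWeight_of]
    · exact hle i w (Finset.mem_erase.mpr ⟨hwi, hw⟩)
  choose m hlead hweight using fun i => (hψ i).exists_isLeadingMonomial_wordWeight_eq (hle_all i)
  have hm := leadingMonomial_eq_of_surjective hsurj hψ ht hlead hweight j
  have hwsupport := Finset.mem_of_mem_erase hw
  have hlength : w.length ≤ (m j).length :=
    length_le_of_weightKey_le ((hlead j).2 w hwsupport) (hwj.trans (hweight j).symm)
  rw [hm, FreeMonoid.length_of] at hlength
  exact Finset.ne_of_mem_erase hw ((hψ j).eq_of_length_le_one hwsupport hlength)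

end Surjective

theorem automorphism_not_both_commutator_general {R : Type*} [CommSemiring R] [NoZeroDivisors R]
    [Nontrivial R] (φ : FreeAlgebra R (Fin 2) →ₐ[R] FreeAlgebra R (Fin 2))
    (hsurj : Function.Surjective φ)
    (hφ : ∀ i, FreeAlgebra.lift R (MvPolynomial.X (R := R)) (φ (ι R i)) = MvPolynomial.X i) :
    φ = AlgHom.id R _ := by
  let e : FreeAlgebra R (Fin 2) ≃ₐ[R] R[FreeMonoid (Fin 2)] := equivMonoidAlgebraFreeMonoid
  let ψ := (e.toAlgHom.comp φ).comp e.symm.toAlgHom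
  have he (i) : e (ι R i) = MonoidAlgebra.of R _ (FreeMonoid.of i) := FreeAlgebra.lift_ι_apply _ _
  have hψ (i) : ψ (MonoidAlgebra.of R _ (FreeMonoid.of i)) = e (φ (ι R i)) :=
    congrArg (fun a => e (φ a)) (e.symm_apply_eq.mpr (he i).symm)
  have hψsurj : Function.Surjective ψ := (e.surjective.comp hsurj).comp e.symm.surjective
  have hmixed (i) : IsGeneratorAddMixed i (ψ (MonoidAlgebra.of R _ (FreeMonoid.of i))) :=
    hψ i ▸ isGeneratorAddMixed_of_lift_X_eq (hφ i)
  ext i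
  have hgen := (hmixed i).eq_of (eq_of_mem_support_of_surjective hψsurj hmixed i)
  exact e.injective ((hψ i).symm.trans (hgen.trans (he i).symm))

/-- If `φ` is an automorphism of the free algebra on two generators of the form
`z₁ ↦ z₁ + f`, `z₂ ↦ z₂ + g` with `f ≠ 0` and `g ≠ 0`, then `f` and `g` cannot both lie in
the commutator ideal. -/
theorem automorphism_not_both_commutator
    {K : Type} [Field K]
    (φ : FreeAlgebra K (Fin 2) ≃ₐ[K] FreeAlgebra K (Fin 2))
    (f g : FreeAlgebra K (Fin 2))
    (hφ1 : φ (ι K 0) = ι K 0 + f)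
    (hφ2 : φ (ι K 1) = ι K 1 + g)
    (hf : f ≠ 0) (hg : g ≠ 0) :
    abelianization K 2 f ≠ 0 ∨ abelianization K 2 g ≠ 0 := by
  by_contra! ⟨hf', hg'⟩
  have hφ : φ.toAlgHom = AlgHom.id K _ :=
    automorphism_not_both_commutator_general φ.toAlgHom φ.surjective <| Fin.forall_fin_two.mpr
      ⟨by simpa [hφ1, abelianization] using hf', by simpa [hφ2, abelianization] using hg'⟩
  exact hf (left_eq_add.mp ((DFunLike.congr_fun hφ (ι K 0)).symm.trans hφ1))
end
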